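/- arXiv:2409.18123 — 2 statements merged into one kernel-verified Lean document; each statement's English description precedes it below -/
import Mathlib

section
/- For every natural number n ≥ 6, the Artin group A[D_n] has property R_∞; that is, for every automorphism φ of A[D_n], the set of φ-twisted conjugacy classes of A[D_n] is infinite. -/
/-- Two elements `g h` of a group `G` are `φ`-twisted conjugate if there is `x : G`
with `h = x * g * (φ x)⁻¹`. -/
def TwistedConj {G : Type*} [Group G] (φ : G ≃* G) (g h : G) : Prop :=
  ∃ x : G, h = x * g * (φ x)⁻¹

/-- `R(φ) = ∞`: the set of `φ`-twisted conjugacy classes is infinite. -/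
def ReidemeisterInfinite {G : Type*} [Group G] (φ : G ≃* G) : Prop :=
  Infinite (Quot (TwistedConj φ))

/-- A group `G` has property `R_∞` if `R(φ) = ∞` for every automorphism `φ` of `G`. -/
def PropertyRInfinity (G : Type*) [Group G] : Prop :=
  ∀ φ : G ≃* G, ReidemeisterInfinite φ

/-- The pairs of (0-indexed) generator indices of the Artin group of type `D_n` that are
joined by an edge of the Coxeter graph (i.e. satisfy a braid relation `sts = tst`).
In the 1-indexed notation of the paper these are the pairs `{i, i+1}` with `i+1 ≤ n-1`,
together with `{n-2, n}`. -/
def dnBraid (n : ℕ) (i j : Fin n) : Prop :=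
  (j.val = i.val + 1 ∧ j.val ≤ n - 2) ∨ (i.val = j.val + 1 ∧ i.val ≤ n - 2) ∨
  (i.val = n - 3 ∧ j.val = n - 1) ∨ (i.val = n - 1 ∧ j.val = n - 3)

/-- The defining relations of the Artin group of type `D_n`: braid relations
`t_i t_j t_i = t_j t_i t_j` for pairs joined by an edge, and commutation relations
`t_i t_j = t_j t_i` for all other pairs. -/
def dnRels (n : ℕ) : Set (FreeGroup (Fin n)) :=
  { r | ∃ i j : Fin n, i ≠ j ∧
      ((dnBraid n i j ∧
          r = FreeGroup.of i * FreeGroup.of j * FreeGroup.of i *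
              (FreeGroup.of j * FreeGroup.of i * FreeGroup.of j)⁻¹) ∨
        (¬ dnBraid n i j ∧
          r = FreeGroup.of i * FreeGroup.of j * (FreeGroup.of j * FreeGroup.of i)⁻¹)) }

/-- The Artin group of type `D_n` (generators indexed by `Fin n`, with `i : Fin n`
corresponding to the generator `t_{i+1}` of the paper). -/
abbrev ArtinD (n : ℕ) : Type := PresentedGroup (dnRels n)

theorem TwistedConj.equivalence {G : Type*} [Group G] (φ : G ≃* G) :
    Equivalence (TwistedConj φ) where
  refl g := ⟨1, by simp⟩
  symm := by
    rintro g h ⟨x, rfl⟩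
    exact ⟨x⁻¹, by simp [mul_assoc]⟩
  trans := by
    rintro a b c ⟨x, rfl⟩ ⟨y, rfl⟩
    exact ⟨y * x, by simp [mul_assoc]⟩

/-- A function on `G` that restricts to an additive homomorphism on `K`. -/
def HomOn {G : Type*} [Group G] (K : Subgroup G) (f : G → ℚ) : Prop :=
  ∀ x ∈ K, ∀ y ∈ K, f (x * y) = f x + f y

namespace HomOn
variable {G : Type*} [Group G] {K : Subgroup G} {f : G → ℚ}

theorem one (h : HomOn K f) : f 1 = 0 := by
  have := h 1 K.one_mem 1 K.one_mem
  simpa using this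

theorem inv (h : HomOn K f) {x : G} (hx : x ∈ K) : f x⁻¹ = - f x := by
  have := h x hx x⁻¹ (K.inv_mem hx)
  rw [mul_inv_cancel, h.one] at this
  linarith

theorem pow (h : HomOn K f) {x : G} (hx : x ∈ K) (k : ℕ) : f (x ^ k) = k * f x := by
  induction k with
  | zero => simp [h.one]
  | succ k ih => rw [pow_succ, h _ (K.pow_mem hx k) _ hx, ih]; push_cast; ring

end HomOn

/-- Criterion for an infinite Reidemeister number. -/
theorem reidemeisterInfinite_of_homOn {G : Type*} [Group G] (φ : G ≃* G) (g : G)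
    (K : Subgroup G) [K.FiniteIndex] (F : G → ℚ) (hF : HomOn K F)
    (hK : ∀ x ∈ K, g * φ x * g⁻¹ ∈ K) (hinv : ∀ x ∈ K, F (g * φ x * g⁻¹) = F x)
    (y : G) (hy : y ∈ K) (hFy : F y ≠ 0) : ReidemeisterInfinite φ := by
  unfold ReidemeisterInfinite
  by_contra hfin
  rw [not_infinite_iff_finite] at hfin
  obtain ⟨q, hq⟩ := Finite.exists_infinite_fiber
    (fun j : ℕ => (Quot.mk (TwistedConj φ) (y ^ j * g)))
  obtain ⟨j0, hj0⟩ : ((fun j : ℕ => (Quot.mk (TwistedConj φ) (y ^ j * g))) ⁻¹' {q}).Nonempty :=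
    Set.Nonempty.of_subtype
  have key : ∀ j : ((fun j : ℕ => (Quot.mk (TwistedConj φ) (y ^ j * g))) ⁻¹' {q}),
      ∃ x : G, y ^ (j : ℕ) * g = x * (y ^ j0 * g) * (φ x)⁻¹ := by
    rintro ⟨j, hj⟩
    have h1 : Quot.mk (TwistedConj φ) (y ^ j0 * g) = Quot.mk (TwistedConj φ) (y ^ j * g) := by
      rw [Set.mem_preimage, Set.mem_singleton_iff] at hj hj0
      exact hj0.trans hj.symm
    exact ((TwistedConj.equivalence φ).quot_mk_eq_iff _ _).1 h1
  choose x hx using key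
  obtain ⟨j, l, hjl, hc⟩ := Finite.exists_ne_map_eq_of_infinite
    (fun j => (QuotientGroup.mk (x j)⁻¹ : G ⧸ K))
  have hk : x j * (x l)⁻¹ ∈ K := by
    have := QuotientGroup.eq.1 hc
    simpa using this
  set k := x j * (x l)⁻¹ with hkdef
  have e1 : x j = k * x l := by simp [hkdef]
  have e2 : y ^ (j : ℕ) = k * y ^ (l : ℕ) * (g * φ k * g⁻¹)⁻¹ := by
    have a := hx j
    have b := hx l
    rw [e1, map_mul] at a
    have b' : y ^ (l : ℕ) = x l * (y ^ j0 * g) * (φ (x l))⁻¹ * g⁻¹ := by rw [← b]; group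
    rw [b']
    have a' : y ^ (j : ℕ) = k * x l * (y ^ j0 * g) * (φ k * φ (x l))⁻¹ * g⁻¹ := by
      rw [← a]; group
    rw [a']; group
  have e3 : F (y ^ (j : ℕ)) = F (y ^ (l : ℕ)) := by
    rw [e2, hF _ (K.mul_mem hk (K.pow_mem hy _)) _ (K.inv_mem (hK k hk)),
      hF _ hk _ (K.pow_mem hy _), hF.inv (hK k hk), hinv k hk]
    ring
  rw [hF.pow hy, hF.pow hy] at e3
  have := mul_right_cancel₀ hFy e3
  exact hjl (Subtype.ext (by exact_mod_cast this))

/-- Package of facts on a pure braid type quotient map to a symmetric group. -/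
structure PureData (n : ℕ) (G : Type*) [Group G] where
  ρ : G →* Equiv.Perm (Fin n)
  surj : Function.Surjective ρ
  τ : G
  s0 : Sym2 (Fin n)
  hs0 : ¬ s0.IsDiag
  w : Sym2 (Fin n) → G → ℚ
  hom : ∀ s, HomOn ρ.ker (w s)
  int : ∀ s x, ∃ z : ℤ, 2 * w s x = z
  τsq : τ * τ ∈ ρ.ker
  val : ∀ s g, w s (g * (τ * τ) * g⁻¹) = if Sym2.map (ρ g) s0 = s then 1 else 0
  ext : ∀ f : G → ℚ, HomOn ρ.ker f → (∀ g, f (g * (τ * τ) * g⁻¹) = 0) → ∀ x ∈ ρ.ker, f x = 0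
  dep : ∀ f : G → ℚ, HomOn ρ.ker f → ∀ g h, Sym2.map (ρ g) s0 = Sym2.map (ρ h) s0 →
    f (g * (τ * τ) * g⁻¹) = f (h * (τ * τ) * h⁻¹)

/-- Nondiagonal pairs. -/
abbrev Prs (n : ℕ) := {s : Sym2 (Fin n) // ¬ s.IsDiag}

namespace PureData
variable {n : ℕ} {G : Type*} [Group G] (D : PureData n G)

theorem trans2 {k l a b : Fin n} (hkl : k ≠ l) (hab : a ≠ b) :
    ∃ σ : Equiv.Perm (Fin n), σ k = a ∧ σ l = b := by
  refine ⟨Equiv.swap (Equiv.swap k a l) b * Equiv.swap k a, ?_, ?_⟩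
  · rw [Equiv.Perm.mul_apply, Equiv.swap_apply_left]
    apply Equiv.swap_apply_of_ne_of_ne _ hab
    intro h
    have : Equiv.swap k a k = Equiv.swap k a l := by rw [Equiv.swap_apply_left]; exact h
    exact hkl ((Equiv.swap k a).injective this)
  · rw [Equiv.Perm.mul_apply, Equiv.swap_apply_left]

theorem trans2_alt (hn : 5 ≤ n) {k l a b : Fin n} (hkl : k ≠ l) (hab : a ≠ b) :
    ∃ σ : Equiv.Perm (Fin n), σ ∈ alternatingGroup (Fin n) ∧ σ k = a ∧ σ l = b := by
  obtain ⟨σ, h1, h2⟩ := trans2 hkl hab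
  rcases Int.units_eq_one_or (Equiv.Perm.sign σ) with h | h
  · exact ⟨σ, h, h1, h2⟩
  · have hc : 2 ≤ (({a, b} : Finset (Fin n))ᶜ).card := by
      rw [Finset.card_compl, Finset.card_pair hab, Fintype.card_fin]; omega
    obtain ⟨u, hu, v, hv, huv⟩ := Finset.one_lt_card.1 hc
    simp only [Finset.mem_compl, Finset.mem_insert, Finset.mem_singleton, not_or] at hu hv
    refine ⟨Equiv.swap u v * σ, ?_, ?_, ?_⟩
    · rw [Equiv.Perm.mem_alternatingGroup, map_mul, h, Equiv.Perm.sign_swap huv]; simp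
    · rw [Equiv.Perm.mul_apply, h1]
      exact Equiv.swap_apply_of_ne_of_ne (Ne.symm hu.1) (Ne.symm hv.1)
    · rw [Equiv.Perm.mul_apply, h2]
      exact Equiv.swap_apply_of_ne_of_ne (Ne.symm hu.2) (Ne.symm hv.2)

theorem exists_lift (s : Prs n) : ∃ g : G, Sym2.map (D.ρ g) D.s0 = s.1 := by
  obtain ⟨s, hs⟩ := s
  have h0 := D.hs0
  generalize D.s0 = s0 at h0
  induction s using Sym2.ind with
  | _ a b =>
  induction s0 using Sym2.ind with
  | _ k l =>
  rw [Sym2.mk_isDiag_iff] at h0 hs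
  obtain ⟨σ, h1, h2⟩ := trans2 h0 hs
  obtain ⟨g, rfl⟩ := D.surj σ
  exact ⟨g, by simp [h1, h2]⟩

/-- A lift to `G` of a permutation moving `s0` to `s`. -/
noncomputable def lift (s : Prs n) : G := (D.exists_lift s).choose

theorem lift_spec (s : Prs n) : Sym2.map (D.ρ (D.lift s)) D.s0 = s.1 := (D.exists_lift s).choose_spec

/-- The standard generators `A_s`. -/
noncomputable def A (s : Prs n) : G := D.lift s * (D.τ * D.τ) * (D.lift s)⁻¹

theorem conj_mem {x : G} (hx : x ∈ D.ρ.ker) (g : G) : g * x * g⁻¹ ∈ D.ρ.ker :=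
  (MonoidHom.normal_ker D.ρ).conj_mem x hx g

theorem A_mem (s : Prs n) : D.A s ∈ D.ρ.ker := D.conj_mem D.τsq _

/-- the action on pairs -/
def mv (σ : Equiv.Perm (Fin n)) (s : Prs n) : Prs n :=
  ⟨Sym2.map σ s.1, by rw [Sym2.isDiag_map σ.injective]; exact s.2⟩

theorem apply_conj_A {f : G → ℚ} (hf : HomOn D.ρ.ker f) (g : G) (s : Prs n) :
    f (g * D.A s * g⁻¹) = f (D.A (mv (D.ρ g) s)) := by
  have := D.dep f hf (g * D.lift s) (D.lift (mv (D.ρ g) s)) (by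
    rw [D.lift_spec, map_mul, Equiv.Perm.coe_mul, ← Sym2.map_map, D.lift_spec]; rfl)
  unfold A
  rw [← this]
  congr 1
  group

theorem w_A (s t : Prs n) : D.w s.1 (D.A t) = if t = s then 1 else 0 := by
  unfold A
  rw [D.val, D.lift_spec]
  simp only [Subtype.ext_iff]

theorem expand {f : G → ℚ} (hf : HomOn D.ρ.ker f) {x : G} (hx : x ∈ D.ρ.ker) :
    f x = ∑ s : Prs n, f (D.A s) * D.w s.1 x := by
  have := D.ext (fun x => f x - ∑ s : Prs n, f (D.A s) * D.w s.1 x) ?_ ?_ x hx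
  · simpa [sub_eq_zero] using this
  · intro x hx y hy
    simp only [hf x hx y hy, (D.hom _) x hx y hy, mul_add, Finset.sum_add_distrib]
    ring
  · intro g
    have hd : ¬ (Sym2.map (D.ρ g) D.s0).IsDiag := by
      rw [Sym2.isDiag_map (D.ρ g).injective]; exact D.hs0
    have e := D.dep f hf g (D.lift ⟨_, hd⟩) (by rw [D.lift_spec])
    have e2 : ∀ s : Prs n, D.w s.1 (g * (D.τ * D.τ) * g⁻¹) = if ⟨_, hd⟩ = s then 1 else 0 := by
      intro s
      rw [D.val]
      simp only [Subtype.ext_iff]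
    simp only [e2]
    simp only [mul_ite, mul_one, mul_zero, Finset.sum_ite_eq, Finset.mem_univ, if_true]
    rw [e]; unfold A; ring

/-- The matrix of an automorphism. -/
noncomputable def M (Ψ : G ≃* G) : Matrix (Prs n) (Prs n) ℚ :=
  Matrix.of fun s t => D.w s.1 (Ψ (D.A t))

/-- Automorphisms preserving the kernel. -/
def Pres (Ψ : G ≃* G) : Prop := ∀ x, Ψ x ∈ D.ρ.ker ↔ x ∈ D.ρ.ker

theorem Pres.symm {Ψ : G ≃* G} (h : D.Pres Ψ) : D.Pres Ψ.symm := fun x => by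
  rw [← h, MulEquiv.apply_symm_apply]

theorem Pres.homOn {Ψ : G ≃* G} (h : D.Pres Ψ) {f : G → ℚ} (hf : HomOn D.ρ.ker f) :
    HomOn D.ρ.ker (fun x => f (Ψ x)) := fun x hx y hy => by
  simp only [map_mul]
  exact hf _ ((h x).2 hx) _ ((h y).2 hy)

theorem homOn_conj {f : G → ℚ} (hf : HomOn D.ρ.ker f) (g : G) :
    HomOn D.ρ.ker (fun x => f (g * x * g⁻¹)) := fun x hx y hy => by
  have := hf _ (D.conj_mem hx g) _ (D.conj_mem hy g)
  rw [← this]; congr 1; group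

theorem M_mul {Ψ₁ Ψ₂ : G ≃* G} (h1 : D.Pres Ψ₁) (h2 : D.Pres Ψ₂) :
    D.M Ψ₁ * D.M Ψ₂ = D.M (Ψ₂.trans Ψ₁) := by
  ext s t
  rw [Matrix.mul_apply]
  simp only [M, Matrix.of_apply, MulEquiv.trans_apply]
  rw [D.expand (h1.homOn D (D.hom s.1)) ((h2 _).2 (D.A_mem t))]

theorem pres_conj (g : G) : D.Pres (MulAut.conj g) := fun x => by
  constructor
  · intro h
    have := D.conj_mem h g⁻¹
    simpa [mul_assoc] using this
  · intro h; exact D.conj_mem h g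

theorem trace_conj (g : G) : (D.M (MulAut.conj g)).trace =
    ((Finset.univ.filter fun s : Prs n => mv (D.ρ g) s = s).card : ℚ) := by
  rw [Matrix.trace]
  simp only [Matrix.diag_apply, M, Matrix.of_apply, MulAut.conj_apply]
  rw [Finset.card_filter]
  push_cast
  refine Finset.sum_congr rfl fun s _ => ?_
  rw [D.apply_conj_A (D.hom s.1), w_A]

theorem M_refl : D.M (MulEquiv.refl G) = 1 := by
  ext s t
  simp only [M, Matrix.of_apply, MulEquiv.refl_apply, w_A, Matrix.one_apply, eq_comm]

theorem card_fixed {Ψ : G ≃* G} (h : D.Pres Ψ) (x : G) :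
    (Finset.univ.filter fun s : Prs n => mv (D.ρ (Ψ x)) s = s).card =
    (Finset.univ.filter fun s : Prs n => mv (D.ρ x) s = s).card := by
  have h3 := (Pres.symm D h)
  have e : D.M (MulAut.conj (Ψ x)) = D.M Ψ * (D.M (MulAut.conj x) * D.M Ψ.symm) := by
    rw [D.M_mul (D.pres_conj x) h3, D.M_mul h]
    · congr 1
      ext y
      simp
    · intro y
      exact (D.pres_conj x _).trans (h3 y)
  have : (D.M (MulAut.conj (Ψ x))).trace = (D.M (MulAut.conj x)).trace := by
    rw [e, Matrix.trace_mul_comm, Matrix.mul_assoc, D.M_mul h3 h]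
    have : Ψ.trans Ψ.symm = MulEquiv.refl G := by ext; simp
    rw [this, D.M_refl, mul_one]
  rw [D.trace_conj, D.trace_conj] at this
  exact_mod_cast this

end PureData

namespace PureData
variable {n : ℕ} {G : Type*} [Group G] (D : PureData n G)

theorem two_mul_card_fixed (σ : Equiv.Perm (Fin n)) :
    2 * (Finset.univ.filter fun s : Prs n => mv σ s = s).card =
    (Finset.univ.filter fun p : Fin n × Fin n =>
      p.1 ≠ p.2 ∧ Sym2.map σ s(p.1, p.2) = s(p.1, p.2)).card := by
  classical
  symm
  set T := (Finset.univ.filter fun s : Prs n => mv σ s = s).image Subtype.val with hT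
  have hTc : T.card = (Finset.univ.filter fun s : Prs n => mv σ s = s).card :=
    Finset.card_image_of_injective _ Subtype.val_injective
  have hmem : ∀ s : Sym2 (Fin n), s ∈ T ↔ ¬ s.IsDiag ∧ Sym2.map σ s = s := by
    intro s
    simp only [hT, Finset.mem_image, Finset.mem_filter, Finset.mem_univ, true_and]
    constructor
    · rintro ⟨t, ht, rfl⟩
      exact ⟨t.2, congrArg Subtype.val ht⟩
    · rintro ⟨h1, h2⟩
      exact ⟨⟨s, h1⟩, Subtype.ext h2, rfl⟩
  rw [← hTc]
  rw [Finset.card_eq_sum_card_fiberwise (f := fun p : Fin n × Fin n => s(p.1, p.2)) (t := T)]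
  · rw [Finset.sum_const_nat (m := 2), mul_comm]
    intro s hs
    rw [hmem] at hs
    induction s using Sym2.ind with
    | _ a b =>
    have hab : a ≠ b := by simpa using hs.1
    have : (Finset.filter (fun p : Fin n × Fin n => s(p.1, p.2) = s(a, b))
        (Finset.univ.filter fun p : Fin n × Fin n =>
          p.1 ≠ p.2 ∧ Sym2.map σ s(p.1, p.2) = s(p.1, p.2))) = {(a, b), (b, a)} := by
      ext ⟨x, y⟩
      simp only [Finset.mem_filter, Finset.mem_univ, true_and, Finset.mem_insert,
        Finset.mem_singleton, Prod.mk.injEq]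
      constructor
      · rintro ⟨-, h⟩
        simpa using h
      · intro h
        have h' : s(x, y) = s(a, b) := by simpa using h
        refine ⟨⟨?_, by rw [h']; exact hs.2⟩, h'⟩
        rcases h with ⟨rfl, rfl⟩ | ⟨rfl, rfl⟩
        · exact hab
        · exact hab.symm
    rw [this, Finset.card_pair]
    simp [hab]
  · intro p hp
    simp only [Finset.coe_filter, Finset.mem_univ, true_and, Set.mem_setOf_eq] at hp
    exact (hmem _).2 ⟨by simpa using hp.1, hp.2⟩

theorem card_fixed_involution (σ : Equiv.Perm (Fin n)) (hσ : σ * σ = 1) :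
    (2 * (Finset.univ.filter fun s : Prs n => mv σ s = s).card : ℤ) =
      ((n : ℤ) - σ.support.card) * ((n : ℤ) - σ.support.card) - ((n : ℤ) - σ.support.card)
        + σ.support.card := by
  classical
  have hσ' : ∀ x, σ (σ x) = x := fun x => by rw [← Equiv.Perm.mul_apply, hσ]; rfl
  have e : (Finset.univ.filter fun p : Fin n × Fin n =>
      p.1 ≠ p.2 ∧ Sym2.map σ s(p.1, p.2) = s(p.1, p.2)) =
      (σ.supportᶜ).offDiag ∪ σ.support.image (fun i => (i, σ i)) := by
    ext ⟨x, y⟩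
    simp only [Finset.mem_filter, Finset.mem_univ, true_and, Finset.mem_union,
      Finset.mem_offDiag, Finset.mem_compl, Equiv.Perm.mem_support, not_not, Finset.mem_image,
      Prod.mk.injEq, Sym2.map_mk, Sym2.eq_iff]
    constructor
    · rintro ⟨h, ⟨h1, h2⟩ | ⟨h1, h2⟩⟩
      · exact Or.inl ⟨h1, h2, h⟩
      · refine Or.inr ⟨x, ?_, rfl, h1⟩
        rw [h1]; exact h.symm
    · rintro (⟨h1, h2, h3⟩ | ⟨z, hz, rfl, rfl⟩)
      · exact ⟨h3, Or.inl ⟨h1, h2⟩⟩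
      · exact ⟨hz.symm, Or.inr ⟨rfl, hσ' _⟩⟩
  have h2 := two_mul_card_fixed σ
  rw [e, Finset.card_union_of_disjoint, Finset.offDiag_card, Finset.card_image_of_injective,
    Finset.card_compl, Fintype.card_fin] at h2
  · have hle : σ.support.card ≤ n := by simpa using Finset.card_le_univ σ.support
    have hle2 : n - σ.support.card ≤ (n - σ.support.card) * (n - σ.support.card) :=
      Nat.le_mul_self _
    zify [hle, hle2] at h2
    exact h2
  · intro x y h
    exact (Prod.mk.inj h).1
  · rw [Finset.disjoint_left]
    rintro ⟨x, y⟩ h1 h2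
    simp only [Finset.mem_offDiag, Finset.mem_compl, Finset.mem_image, Prod.mk.injEq] at h1 h2
    obtain ⟨z, hz, rfl, -⟩ := h2
    exact h1.1 hz

theorem isSwap_image (hn : 5 ≤ n) {Ψ : G ≃* G} (h : D.Pres Ψ) {x : G} (hx : (D.ρ x).IsSwap) :
    (D.ρ (Ψ x)).IsSwap := by
  have hx2 : D.ρ x * D.ρ x = 1 := by
    obtain ⟨i, j, -, e⟩ := hx
    rw [e, Equiv.swap_mul_self]
  have hy2 : D.ρ (Ψ x) * D.ρ (Ψ x) = 1 := by
    rw [← map_mul, ← map_mul]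
    exact (h _).2 (by rw [MonoidHom.mem_ker, map_mul, hx2])
  have c1 := card_fixed_involution _ hx2
  have c2 := card_fixed_involution _ hy2
  rw [D.card_fixed h x, c1, Equiv.Perm.card_support_eq_two.2 hx] at c2
  rw [← Equiv.Perm.card_support_eq_two]
  have hle : (D.ρ (Ψ x)).support.card ≤ n := by
    simpa using Finset.card_le_univ (D.ρ (Ψ x)).support
  have : (((D.ρ (Ψ x)).support.card : ℤ) - 2) *
      (2 * n - ((D.ρ (Ψ x)).support.card : ℤ) - 4) = 0 := by
    push_cast at c2
    linear_combination c2
  rcases mul_eq_zero.1 this with h | h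
  · omega
  · omega

/-- The function `[k ∈ s] - [l ∈ s]` on pairs. -/
def rf (k l : Fin n) (s : Sym2 (Fin n)) : ℚ := (if k ∈ s then 1 else 0) - (if l ∈ s then 1 else 0)

/-- The homomorphism with values `rf k l` on the generators. -/
noncomputable def r (k l : Fin n) (x : G) : ℚ := ∑ s : Prs n, rf k l s.1 * D.w s.1 x

theorem r_homOn (k l : Fin n) : HomOn D.ρ.ker (D.r k l) := fun x hx y hy => by
  simp only [r, D.hom _ x hx y hy, mul_add, Finset.sum_add_distrib]

theorem r_A (k l : Fin n) (s : Prs n) : D.r k l (D.A s) = rf k l s.1 := by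
  simp only [r, w_A]
  simp

theorem eq_of_A {f g : G → ℚ} (hf : HomOn D.ρ.ker f) (hg : HomOn D.ρ.ker g)
    (h : ∀ s, f (D.A s) = g (D.A s)) {x : G} (hx : x ∈ D.ρ.ker) : f x = g x := by
  rw [D.expand hf hx, D.expand hg hx]
  simp only [h]

theorem rf_map (σ : Equiv.Perm (Fin n)) (k l : Fin n) (s : Sym2 (Fin n)) :
    rf (σ k) (σ l) (Sym2.map σ s) = rf k l s := by
  have : ∀ k, σ k ∈ Sym2.map σ s ↔ k ∈ s := by
    intro k
    rw [Sym2.mem_map]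
    constructor
    · rintro ⟨a, ha, h⟩
      rwa [← σ.injective h]
    · intro h; exact ⟨k, h, rfl⟩
  simp only [rf, this]

theorem r_conj (k l : Fin n) (g : G) {x : G} (hx : x ∈ D.ρ.ker) :
    D.r (D.ρ g k) (D.ρ g l) (g * x * g⁻¹) = D.r k l x := by
  refine D.eq_of_A (D.homOn_conj (D.r_homOn _ _) g) (D.r_homOn _ _) (fun s => ?_) hx
  rw [D.apply_conj_A (D.r_homOn _ _), r_A, r_A]
  exact rf_map _ _ _ _

theorem r_swap (k l : Fin n) (x : G) : D.r l k x = - D.r k l x := by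
  simp only [r, rf, ← Finset.sum_neg_distrib]
  refine Finset.sum_congr rfl fun s _ => by ring

theorem exists_third (hn : 5 ≤ n) (k l : Fin n) : ∃ i : Fin n, i ≠ k ∧ i ≠ l := by
  have hc : 0 < (({k, l} : Finset (Fin n))ᶜ).card := by
    rw [Finset.card_compl, Fintype.card_fin]
    have := Finset.card_le_two (a := k) (b := l)
    omega
  obtain ⟨u, hu⟩ := Finset.card_pos.1 hc
  simp only [Finset.mem_compl, Finset.mem_insert, Finset.mem_singleton, not_or] at hu
  exact ⟨u, hu⟩

theorem antisym_fun (hn : 5 ≤ n) {k l : Fin n} (hkl : k ≠ l) (F : Prs n → ℚ)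
    (h1 : ∀ s, F (mv (Equiv.swap k l) s) = - F s)
    (h2 : ∀ i j : Fin n, i ≠ j → i ≠ k → i ≠ l → j ≠ k → j ≠ l →
      ∀ s, F (mv (Equiv.swap i j) s) = F s) :
    ∃ c : ℚ, ∀ s, F s = c * rf k l s.1 := by
  obtain ⟨e, hek, hel⟩ := exists_third hn k l
  have hk : ∀ b (hb : ¬ (s(k, b)).IsDiag), b ≠ l → F ⟨s(k, b), hb⟩ =
      F ⟨s(k, e), by simpa using hek.symm⟩ := by
    intro b hb hbl
    have hbk : b ≠ k := by simpa [eq_comm] using hb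
    by_cases hbe : b = e
    · subst hbe; rfl
    · rw [← h2 b e hbe hbk hbl hek hel]
      congr 1
      apply Subtype.ext
      simp [mv, Equiv.swap_apply_of_ne_of_ne hbk.symm hek.symm]
  have fix0 : ∀ s, mv (Equiv.swap k l) s = s → F s = 0 := by
    intro s hs
    have := h1 s
    rw [hs] at this
    linarith
  refine ⟨F ⟨s(k, e), by simpa using hek.symm⟩, ?_⟩
  have main : ∀ a b (hab : ¬ (s(a, b)).IsDiag), a = k ∨ (a ≠ k ∧ b ≠ k) →
      F ⟨s(a, b), hab⟩ = F ⟨s(k, e), by simpa using hek.symm⟩ * rf k l s(a, b) := by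
    intro a b hab h
    have hab' : a ≠ b := by simpa using hab
    have hl : ∀ b (hb : ¬ (s(l, b)).IsDiag), b ≠ k → F ⟨s(l, b), hb⟩ =
        - F ⟨s(k, e), by simpa using hek.symm⟩ := by
      intro b hb hbk
      have hbl : b ≠ l := by simpa [eq_comm] using hb
      have hb' : ¬ (s(k, b)).IsDiag := by simpa using hbk.symm
      rw [← hk b hb' hbl, ← h1]
      congr 1
      apply Subtype.ext
      simp [mv, Equiv.swap_apply_of_ne_of_ne hbk hbl]
    rcases h with rfl | ⟨hak, hbk⟩
    · by_cases hbl : b = l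
      · subst hbl
        rw [fix0]
        · simp [rf]
        · apply Subtype.ext; simp [mv, Sym2.eq_swap]
      · rw [hk b hab hbl]
        have : rf a l s(a, b) = 1 := by simp [rf, hkl.symm, Ne.symm hbl]
        rw [this, mul_one]
    · by_cases hal : a = l
      · subst hal
        rw [hl b hab hbk]
        have : rf k a s(a, b) = -1 := by simp [rf, hkl, Ne.symm hbk]
        rw [this]; ring
      · by_cases hbl : b = l
        · subst hbl
          have hba : ¬ (s(b, a)).IsDiag := by simpa using hab'.symm
          have : (⟨s(a, b), hab⟩ : Prs n) = ⟨s(b, a), hba⟩ := Subtype.ext Sym2.eq_swap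
          rw [this, hl a hba hak]
          have : rf k b s(a, b) = -1 := by simp [rf, hkl, Ne.symm hak]
          rw [this]; ring
        · rw [fix0]
          · simp [rf, Ne.symm hak, Ne.symm hbk, Ne.symm hal, Ne.symm hbl]
          · apply Subtype.ext
            simp [mv, Equiv.swap_apply_of_ne_of_ne hak hal, Equiv.swap_apply_of_ne_of_ne hbk hbl]
  rintro ⟨s, hs⟩
  induction s using Sym2.ind with
  | _ a b =>
  by_cases ha : a = k
  · exact main a b hs (Or.inl ha)
  · by_cases hb : b = k
    · have hba : ¬ (s(b, a)).IsDiag := by simpa [eq_comm] using hs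
      have e1 : (⟨s(a, b), hs⟩ : Prs n) = ⟨s(b, a), hba⟩ := Subtype.ext Sym2.eq_swap
      rw [e1]
      exact main b a hba (Or.inl hb)
    · exact main a b hs (Or.inr ⟨ha, hb⟩)

theorem r_int (k l : Fin n) (x : G) : ∃ z : ℤ, 2 * D.r k l x = z := by
  choose z hz using fun s => D.int s x
  refine ⟨∑ s : Prs n, ((if k ∈ s.1 then 1 else 0) - (if l ∈ s.1 then 1 else 0)) * z s.1, ?_⟩
  simp only [r, rf, Finset.mul_sum]
  push_cast
  refine Finset.sum_congr rfl fun s _ => ?_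
  rw [← hz]; push_cast; ring

/-- the automorphism acts on `r` up to a rational factor. -/
theorem key_scalar (hn : 5 ≤ n) {Ψ : G ≃* G} (h : D.Pres Ψ) {a b : Fin n} (hab : a ≠ b) :
    ∃ k l, k ≠ l ∧ ∃ c : ℚ, ∀ x ∈ D.ρ.ker, D.r a b (Ψ x) = c * D.r k l x := by
  obtain ⟨y, hy⟩ := D.surj (Equiv.swap a b)
  have hxs := D.isSwap_image hn (Pres.symm D h) (x := y) ⟨a, b, hab, hy⟩
  set x0 := Ψ.symm y with hx0
  have hΨx0 : Ψ x0 = y := by simp [hx0]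
  obtain ⟨k, l, hkl, hx⟩ := hxs
  refine ⟨k, l, hkl, ?_⟩
  have hf := h.homOn D (D.r_homOn a b)
  obtain ⟨c, hc⟩ := antisym_fun hn hkl (fun s => D.r a b (Ψ (D.A s))) (by
      intro s
      rw [← hx, ← D.apply_conj_A hf x0 s, map_mul, map_mul, map_inv, hΨx0]
      have := D.r_conj a b y ((h _).2 (D.A_mem s))
      rw [hy, Equiv.swap_apply_left, Equiv.swap_apply_right, D.r_swap a b] at this
      linarith) (by
      intro i j hij hik hil hjk hjl s
      obtain ⟨z, hz⟩ := D.surj (Equiv.swap i j)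
      rw [← hz, ← D.apply_conj_A hf z s, map_mul, map_mul, map_inv]
      have hsw := D.isSwap_image hn h (x := z) ⟨i, j, hij, hz⟩
      have hne : D.ρ (Ψ z) ≠ Equiv.swap a b := by
        intro e
        have : z * x0⁻¹ ∈ D.ρ.ker := by
          rw [← h, MonoidHom.mem_ker, map_mul, map_inv, hΨx0, map_mul, map_inv, e, hy,
            mul_inv_cancel]
        rw [MonoidHom.mem_ker, map_mul, map_inv, hz, hx, mul_inv_eq_one] at this
        have h3 := congrArg (fun σ => σ i) this
        simp only [Equiv.swap_apply_left, Equiv.swap_apply_of_ne_of_ne hik hil] at h3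
        exact hij h3.symm
      have hcomm : D.ρ (Ψ z) * Equiv.swap a b = Equiv.swap a b * D.ρ (Ψ z) := by
        have : z * x0 * (x0 * z)⁻¹ ∈ D.ρ.ker := by
          have hd : Equiv.swap i j * Equiv.swap k l = Equiv.swap k l * Equiv.swap i j := by
            apply Equiv.Perm.Disjoint.commute
            intro u
            by_cases hu : u = i ∨ u = j
            · right
              rcases hu with rfl | rfl
              · exact Equiv.swap_apply_of_ne_of_ne hik hil
              · exact Equiv.swap_apply_of_ne_of_ne hjk hjl
            · left
              rw [not_or] at hu
              exact Equiv.swap_apply_of_ne_of_ne hu.1 hu.2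
          rw [MonoidHom.mem_ker, map_mul, map_inv, map_mul, map_mul, hz, hx, hd, mul_inv_cancel]
        rw [← h, MonoidHom.mem_ker, map_mul, map_inv, map_mul, map_mul, map_mul, map_inv,
          map_mul, map_mul, hΨx0, hy, mul_inv_eq_one] at this
        exact this
      have hfix : D.ρ (Ψ z) a = a ∧ D.ρ (Ψ z) b = b := by
        generalize D.ρ (Ψ z) = σ at *
        have e1 : σ b = Equiv.swap a b (σ a) := by
          have := congrArg (fun σ => σ a) hcomm
          simpa using this
        have e2 : σ a = a ∨ σ a = b := by
          by_contra hcon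
          rw [not_or] at hcon
          rw [Equiv.swap_apply_of_ne_of_ne hcon.1 hcon.2] at e1
          exact hab (σ.injective e1).symm
        rcases e2 with e2 | e2
        · exact ⟨e2, by rw [e1, e2, Equiv.swap_apply_left]⟩
        · exfalso
          apply hne
          obtain ⟨u, v, huv, rfl⟩ := hsw
          by_cases hau : a = u
          · subst hau; rw [Equiv.swap_apply_left] at e2; rw [e2]
          · by_cases hav : a = v
            · subst hav; rw [Equiv.swap_apply_right] at e2; rw [e2, Equiv.swap_comm]
            · rw [Equiv.swap_apply_of_ne_of_ne hau hav] at e2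
              exact absurd e2 hab
      have := D.r_conj a b (Ψ z) ((h _).2 (D.A_mem s))
      rw [hfix.1, hfix.2] at this
      exact this)
  refine ⟨c, fun x hx => ?_⟩
  refine D.eq_of_A hf (g := fun x => c * D.r k l x) ?_ (fun s => ?_) hx
  · intro x hx y hy
    simp only [D.r_homOn k l x hx y hy, mul_add]
  · simp only [hc s, r_A]

theorem key (hn : 5 ≤ n) {Ψ : G ≃* G} (h : D.Pres Ψ) {a b : Fin n} (hab : a ≠ b) :
    ∃ k l, k ≠ l ∧ ∀ x ∈ D.ρ.ker, D.r a b (Ψ x) = D.r k l x := by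
  obtain ⟨k, l, hkl, c, hc⟩ := D.key_scalar hn h hab
  suffices hcc : c = 1 ∨ c = -1 by
    rcases hcc with rfl | rfl
    · exact ⟨k, l, hkl, fun x hx => by rw [hc x hx, one_mul]⟩
    · exact ⟨l, k, hkl.symm, fun x hx => by rw [hc x hx, D.r_swap k l]; ring⟩
  choose z hz using D.r_int a b
  let S : AddSubgroup ℤ :=
    { carrier := {u | ∃ x ∈ D.ρ.ker, z x = u}
      zero_mem' := ⟨1, one_mem _, by
        have := hz 1
        rw [(D.r_homOn a b).one] at this
        exact_mod_cast (by linarith : (z 1 : ℚ) = 0)⟩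
      add_mem' := by
        rintro _ _ ⟨x, hx, rfl⟩ ⟨y, hy, rfl⟩
        refine ⟨x * y, mul_mem hx hy, ?_⟩
        have := hz (x * y)
        rw [D.r_homOn a b x hx y hy, mul_add, hz, hz] at this
        exact_mod_cast this.symm
      neg_mem' := by
        rintro _ ⟨x, hx, rfl⟩
        refine ⟨x⁻¹, inv_mem hx, ?_⟩
        have := hz x⁻¹
        rw [(D.r_homOn a b).inv hx, mul_neg, hz] at this
        exact_mod_cast this.symm }
  obtain ⟨d, hd⟩ := Int.subgroup_cyclic S
  have hS : ∀ u, u ∈ S ↔ ∃ m : ℤ, m * d = u := by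
    intro u
    rw [hd, AddSubgroup.mem_closure_singleton]
    simp
  obtain ⟨σ, hσ1, hσ2⟩ := trans2 (n := n) hkl hab
  obtain ⟨g, hg⟩ := D.surj σ
  have up : ∀ u ∈ S, ∃ v ∈ S, (v : ℚ) = c * u := by
    rintro u ⟨x, hx, rfl⟩
    have hx' : g⁻¹ * x * g ∈ D.ρ.ker := by simpa using D.conj_mem hx g⁻¹
    refine ⟨z (Ψ (g⁻¹ * x * g)), ⟨_, (h _).2 hx', rfl⟩, ?_⟩
    rw [← hz, hc _ hx', ← hz]
    have := D.r_conj k l g hx'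
    rw [hg, hσ1, hσ2] at this
    rw [← this]
    have e : g * (g⁻¹ * x * g) * g⁻¹ = x := by group
    rw [e]; ring
  have down : ∀ u ∈ S, ∃ v ∈ S, (u : ℚ) = c * v := by
    rintro u ⟨x, hx, rfl⟩
    have hx' : Ψ.symm x ∈ D.ρ.ker := (Pres.symm D h x).2 hx
    refine ⟨z (g * Ψ.symm x * g⁻¹), ⟨_, D.conj_mem hx' g, rfl⟩, ?_⟩
    have := D.r_conj k l g hx'
    rw [hg, hσ1, hσ2] at this
    have h2 := hc _ hx'
    rw [MulEquiv.apply_symm_apply] at h2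
    rw [← hz, ← hz, this, h2]; ring
  have hd0 : d ≠ 0 := by
    intro h0
    obtain ⟨e, hea, heb⟩ := exists_third hn a b
    let s : Prs n := ⟨s(a, e), by simpa using hea.symm⟩
    have h1 : D.r a b (D.A s) = 1 := by
      rw [r_A]; simp [rf, s, hab.symm, heb.symm]
    have h2 := hz (D.A s)
    obtain ⟨m, hm⟩ := (hS (z (D.A s))).1 ⟨_, D.A_mem s, rfl⟩
    rw [h1, ← hm, h0] at h2
    norm_num at h2
  have hdS : d ∈ S := (hS d).2 ⟨1, one_mul d⟩
  obtain ⟨v, hv, hv2⟩ := up d hdS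
  obtain ⟨u, hu, hu2⟩ := down d hdS
  obtain ⟨m, rfl⟩ := (hS v).1 hv
  obtain ⟨m', rfl⟩ := (hS u).1 hu
  push_cast at hv2 hu2
  have hdq : (d : ℚ) ≠ 0 := by exact_mod_cast hd0
  have e1 : (m : ℚ) = c := mul_right_cancel₀ hdq hv2
  have e2 : (1 : ℚ) = m * m' := by
    rw [e1]
    apply mul_right_cancel₀ hdq
    rw [one_mul]; rw [mul_assoc]; exact hu2
  have e3 : m * m' = 1 := by exact_mod_cast e2.symm
  rcases Int.eq_one_or_neg_one_of_mul_eq_one e3 with rfl | rfl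
  · left; rw [← e1]; simp
  · right; rw [← e1]; simp

end PureData

namespace PureData
variable {n : ℕ} {G : Type*} [Group G] (D : PureData n G)

/-- The kernel of `ρ ∘ φ ^ k`. -/
def Nk (φ : MulAut G) (k : ℕ) : Subgroup G := (D.ρ.comp (φ ^ k).toMonoidHom).ker

theorem mem_Nk (φ : MulAut G) (k : ℕ) (x : G) : x ∈ D.Nk φ k ↔ D.ρ ((φ ^ k) x) = 1 := Iff.rfl

instance (φ : MulAut G) (k : ℕ) : (D.Nk φ k).Normal := MonoidHom.normal_ker _

instance (φ : MulAut G) (k : ℕ) : (D.Nk φ k).FiniteIndex := Subgroup.finiteIndex_ker _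

theorem index_Nk (φ : MulAut G) (k : ℕ) : (D.Nk φ k).index = Nat.card (Equiv.Perm (Fin n)) := by
  unfold Nk
  rw [Subgroup.index_ker, MonoidHom.range_eq_top.2, Subgroup.card_top]
  exact D.surj.comp (φ ^ k).surjective

theorem eq_of_le {φ : MulAut G} {k l : ℕ} (h : D.Nk φ k ≤ D.Nk φ l) : D.Nk φ k = D.Nk φ l := by
  refine le_antisymm h ?_
  have h1 := Subgroup.relIndex_mul_index h
  rw [D.index_Nk, D.index_Nk] at h1
  have : (D.Nk φ k).relIndex (D.Nk φ l) = 1 := by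
    have hpos : 0 < Nat.card (Equiv.Perm (Fin n)) := Nat.card_pos
    exact Nat.eq_of_mul_eq_mul_right hpos (by rw [h1, one_mul])
  exact Subgroup.relIndex_eq_one.1 this

/-- `∩_{0<k<q} N_k`. -/
def Dq (φ : MulAut G) (q : ℕ) : Subgroup G := ⨅ k : Finset.Ioo 0 q, D.Nk φ k

theorem mem_Dq (φ : MulAut G) (q : ℕ) (x : G) :
    x ∈ D.Dq φ q ↔ ∀ k, 0 < k → k < q → D.ρ ((φ ^ k) x) = 1 := by
  simp [Dq, Subgroup.mem_iInf, mem_Nk]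

theorem alt_le_map_Dq (hn : 5 ≤ n) (φ : MulAut G) (q : ℕ)
    (hq : ∀ k, 0 < k → k < q → D.Nk φ k ≠ D.Nk φ 0) :
    alternatingGroup (Fin n) ≤ (D.Dq φ q).map D.ρ := by
  have h5 : 5 ≤ Nat.card (Fin n) := by simpa using hn
  induction q with
  | zero =>
    intro σ _
    obtain ⟨g, rfl⟩ := D.surj σ
    exact ⟨g, by rw [SetLike.mem_coe, mem_Dq]; intro k _ h; omega, rfl⟩
  | succ q ih =>
    have ih' := ih fun k h1 h2 => hq k h1 (by omega)
    by_cases hq0 : q = 0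
    · subst hq0
      refine ih'.trans (Subgroup.map_mono ?_)
      intro x _
      rw [mem_Dq]; intro k _ h; omega
    · have hN : alternatingGroup (Fin n) ≤ (D.Nk φ q).map D.ρ := by
        have hnorm : ((D.Nk φ q).map D.ρ).Normal :=
          Subgroup.Normal.map inferInstance _ D.surj
        have hnt : Nontrivial ((D.Nk φ q).map D.ρ) := by
          rw [Subgroup.nontrivial_iff_ne_bot]
          intro hb
          rw [Subgroup.map_eq_bot_iff] at hb
          exact hq q (by omega) (by omega) (D.eq_of_le (l := 0) (by
            intro x hx
            rw [mem_Nk, pow_zero]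
            exact hb hx))
        exact Equiv.Perm.alternatingGroup_le_of_normal h5 hnt
      rw [← commutator_alternatingGroup_eq_self h5]
      calc ⁅alternatingGroup (Fin n), alternatingGroup (Fin n)⁆
          ≤ ⁅(D.Dq φ q).map D.ρ, (D.Nk φ q).map D.ρ⁆ := Subgroup.commutator_mono ih' hN
        _ = (⁅D.Dq φ q, D.Nk φ q⁆).map D.ρ := (Subgroup.map_commutator _ _ _).symm
        _ ≤ (D.Dq φ (q + 1)).map D.ρ := by
          apply Subgroup.map_mono
          have hDn : (D.Dq φ q).Normal := by
            unfold Dq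
            exact Subgroup.normal_iInf_normal fun k => inferInstance
          have h1 : ⁅D.Dq φ q, D.Nk φ q⁆ ≤ D.Dq φ q ⊓ D.Nk φ q := Subgroup.commutator_le_inf _ _
          intro x hx
          obtain ⟨hx1, hx2⟩ := h1 hx
          have hx1' := (D.mem_Dq φ q x).1 hx1
          rw [mem_Dq]
          intro k hk hkq
          rcases Nat.lt_succ_iff_lt_or_eq.1 hkq with h | h
          · exact hx1' k hk h
          · rw [h]; exact hx2

theorem exists_mem_Dq (hn : 5 ≤ n) (φ : MulAut G) (q : ℕ)
    (hq : ∀ k, 0 < k → k < q → D.Nk φ k ≠ D.Nk φ 0) {k l a b : Fin n} (hkl : k ≠ l) (hab : a ≠ b) :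
    ∃ g ∈ D.Dq φ q, D.ρ g k = a ∧ D.ρ g l = b := by
  obtain ⟨σ, hσ, h1, h2⟩ := trans2_alt hn hkl hab
  obtain ⟨g, hg, rfl⟩ := D.alt_le_map_Dq hn φ q hq hσ
  exact ⟨g, hg, h1, h2⟩

theorem rInfinity (D : PureData n G) (hn : 5 ≤ n) [Finite (G →* Equiv.Perm (Fin n))] : PropertyRInfinity G := by
  intro φ0
  set φ : MulAut G := φ0 with hφ
  have hper : ∃ p, 0 < p ∧ D.Nk φ p = D.Nk φ 0 := by
    obtain ⟨i, j, hij, e⟩ := Finite.exists_ne_map_eq_of_infinite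
      (fun k : ℕ => D.ρ.comp (φ ^ k).toMonoidHom)
    wlog hlt : i < j generalizing i j
    · exact this j i hij.symm e.symm (by omega)
    refine ⟨j - i, by omega, ?_⟩
    ext x
    rw [mem_Nk, mem_Nk]
    have := DFunLike.congr_fun e ((φ ^ i)⁻¹ x)
    simp only [MonoidHom.comp_apply, MulEquiv.toMonoidHom_eq_coe, MonoidHom.coe_coe] at this
    have e1 : (φ ^ i) ((φ ^ i)⁻¹ x) = x := by rw [← MulAut.mul_apply]; simp
    have e2 : (φ ^ j) ((φ ^ i)⁻¹ x) = (φ ^ (j - i)) x := by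
      rw [← MulAut.mul_apply, pow_sub φ hlt.le]
    rw [e1, e2] at this
    rw [← this]; simp
  classical
  set p := Nat.find hper with hp
  obtain ⟨hp0, hpN⟩ := Nat.find_spec hper
  rw [← hp] at hp0 hpN
  have hmin : ∀ k, 0 < k → k < p → D.Nk φ k ≠ D.Nk φ 0 := fun k h1 h2 h3 =>
    Nat.find_min hper h2 ⟨h1, h3⟩
  have hpres : D.Pres (φ ^ p) := fun x => by
    have := SetLike.ext_iff.1 hpN x
    rw [mem_Nk, mem_Nk, pow_zero] at this
    exact this
  obtain ⟨a, b, hab⟩ : ∃ a b : Fin n, a ≠ b :=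
    ⟨⟨0, by omega⟩, ⟨1, by omega⟩, by simp⟩
  obtain ⟨k, l, hkl, hkey⟩ := D.key hn (Pres.symm D hpres) hab
  obtain ⟨g, hgD, hgk, hgl⟩ := D.exists_mem_Dq hn φ p hmin hkl hab
  rw [mem_Dq] at hgD
  set ψ : MulAut G := MulAut.conj g * φ with hψ
  have hψx : ∀ x, ψ x = g * φ x * g⁻¹ := fun x => by simp [hψ]
  have hh : ∀ j, 0 < j → j ≤ p → ∃ h : G, D.ρ h = D.ρ g ∧ ψ ^ j = MulAut.conj h * φ ^ j := by
    intro j hj hjp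
    induction j with
    | zero => omega
    | succ j ih =>
      by_cases hj0 : j = 0
      · subst hj0
        exact ⟨g, rfl, by simp [hψ]⟩
      · obtain ⟨h, hh1, hh2⟩ := ih (by omega) (by omega)
        refine ⟨h * (φ ^ j) g, ?_, ?_⟩
        · rw [map_mul, hgD j (by omega) (by omega), mul_one, hh1]
        · ext x
          rw [pow_succ, MulAut.mul_apply, hh2, hψx]
          simp only [MulAut.mul_apply, MulAut.conj_apply, pow_succ, map_mul, map_inv, mul_inv_rev, mul_assoc]
  have hρψ : ∀ j, j ≤ p → ∀ x, D.ρ ((ψ ^ j) x) = 1 ↔ D.ρ ((φ ^ j) x) = 1 := by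
    intro j hj x
    by_cases hj0 : j = 0
    · subst hj0; simp
    · obtain ⟨h, hh1, hh2⟩ := hh j (by omega) hj
      rw [hh2, MulAut.mul_apply, MulAut.conj_apply, map_mul, map_mul, map_inv, conj_eq_one_iff]
  have hrp : ∀ x ∈ D.ρ.ker, D.r a b ((ψ ^ p) x) = D.r a b x := by
    intro x hx
    obtain ⟨h, hh1, hh2⟩ := hh p hp0 le_rfl
    rw [hh2, MulAut.mul_apply, MulAut.conj_apply]
    have hx' := (hpres x).2 hx
    have := D.r_conj k l h hx'
    rw [hh1, hgk, hgl] at this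
    rw [this, ← hkey _ hx']
    congr 1
    exact (φ ^ p).symm_apply_apply x
  set K : Subgroup G := ⨅ j : Fin p, D.Nk φ j with hKdef
  have hKmem : ∀ x, x ∈ K ↔ ∀ j, j < p → D.ρ ((ψ ^ j) x) = 1 := by
    intro x
    rw [hKdef, Subgroup.mem_iInf]
    constructor
    · intro h j hj
      exact (hρψ j hj.le x).2 (h ⟨j, hj⟩)
    · intro h j
      exact (hρψ j j.2.le x).1 (h j j.2)
  have hKfin : K.FiniteIndex := by
    rw [hKdef]; exact Subgroup.finiteIndex_iInf fun j => inferInstance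
  set F : G → ℚ := fun x => ∑ j ∈ Finset.range p, D.r a b ((ψ ^ j) x) with hFdef
  have hFhom : HomOn K F := by
    intro x hx y hy
    rw [hKmem] at hx hy
    simp only [hFdef, ← Finset.sum_add_distrib]
    refine Finset.sum_congr rfl fun j hj => ?_
    rw [Finset.mem_range] at hj
    rw [map_mul, D.r_homOn a b _ (hx j hj) _ (hy j hj)]
  have hK1 : ∀ x ∈ K, ψ x ∈ K := by
    intro x hx
    rw [hKmem] at hx ⊢
    intro j hj
    rw [← MulAut.mul_apply, ← pow_succ]
    by_cases hjp : j + 1 < p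
    · exact hx _ hjp
    · have : j + 1 = p := by omega
      rw [this, hρψ p le_rfl]
      have h0 := hx 0 hp0
      exact (hpres x).2 h0
  have hF1 : ∀ x ∈ K, F (ψ x) = F x := by
    intro x hx
    rw [hKmem] at hx
    simp only [hFdef]
    have e1 : ∑ j ∈ Finset.range p, D.r a b ((ψ ^ j) (ψ x)) =
        ∑ j ∈ Finset.range p, D.r a b ((ψ ^ (j + 1)) x) :=
      Finset.sum_congr rfl fun j _ => by rw [← MulAut.mul_apply, ← pow_succ]
    have e2 := Finset.sum_range_succ (fun j => D.r a b ((ψ ^ j) x)) p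
    have e3 := Finset.sum_range_succ' (fun j => D.r a b ((ψ ^ j) x)) p
    have e4 := hrp x (hx 0 hp0)
    have e5 : D.r a b ((ψ ^ 0) x) = D.r a b x := by simp
    rw [e1]
    linarith
  obtain ⟨d, hdD, hda, hdb⟩ := D.exists_mem_Dq hn φ p hmin hab hab.symm
  rw [mem_Dq] at hdD
  obtain ⟨e, hea, heb⟩ := exists_third hn a b
  let s : Prs n := ⟨s(a, e), by simpa using hea.symm⟩
  have rs1 : D.r a b (D.A s) = 1 := by
    rw [r_A]; simp [rf, s, hab.symm, heb.symm]
  set m := Nat.card (Equiv.Perm (Fin n)) with hm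
  have hm0 : (m : ℚ) ≠ 0 := by
    have : 0 < m := Nat.card_pos
    exact_mod_cast this.ne'
  set y := D.A s ^ m with hy
  have hyK : ∀ j, D.ρ ((ψ ^ j) y) = 1 := by
    intro j
    rw [hy, map_pow, map_pow, hm, pow_card_eq_one']
  have hyker : y ∈ D.ρ.ker := by simpa using hyK 0
  have hcK : ∀ j, D.ρ ((ψ ^ j) (d * y * d⁻¹ * y⁻¹)) = 1 := by
    intro j
    simp only [map_mul, map_inv, hyK j]
    simp
  refine reidemeisterInfinite_of_homOn φ0 g K F hFhom (fun x hx => by rw [← hψx]; exact hK1 x hx)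
    (fun x hx => by rw [← hψx]; exact hF1 x hx) (d * y * d⁻¹ * y⁻¹)
    ((hKmem _).2 fun j _ => hcK j) ?_
  have hF2 : F (d * y * d⁻¹ * y⁻¹) = D.r a b (d * y * d⁻¹ * y⁻¹) := by
    simp only [hFdef]
    rw [Finset.sum_eq_single_of_mem 0 (Finset.mem_range.2 hp0)]
    · simp
    · intro j hj hj0
      rw [Finset.mem_range] at hj
      have hd1 : (ψ ^ j) d ∈ D.ρ.ker := (hρψ j hj.le d).2 (hdD j (by omega) hj)
      have hy1 : (ψ ^ j) y ∈ D.ρ.ker := hyK j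
      have hr := D.r_homOn a b
      simp only [map_mul, map_inv]
      rw [hr _ (mul_mem (mul_mem hd1 hy1) (inv_mem hd1)) _ (inv_mem hy1),
        hr _ (mul_mem hd1 hy1) _ (inv_mem hd1), hr _ hd1 _ hy1, hr.inv hd1, hr.inv hy1]
      ring
  have hr := D.r_homOn a b
  have hc := D.r_conj b a d hyker
  rw [hda, hdb, D.r_swap a b] at hc
  rw [hF2, hr _ (D.conj_mem hyker d) _ (inv_mem hyker), hr.inv hyker, hc, hy,
    hr.pow (D.A_mem s), rs1]
  intro h0
  apply hm0
  linarith

end PureData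

namespace DStage

section Coxeter
variable {Q α : Type*} [Group Q] (t : ℕ → Q)

/-- The subgroup generated by the first `k` generators. -/
def W (k : ℕ) : Subgroup Q := Subgroup.closure (Set.image t {i | i < k})

/-- The product `t_k t_{k-1} ⋯` of length `l`. -/
def cc (k : ℕ) : ℕ → Q
  | 0 => 1
  | l + 1 => cc k l * t (k - l)

variable {t}

theorem t_mem_W {i k : ℕ} (h : i < k) : t i ∈ W t k := Subgroup.subset_closure ⟨i, h, rfl⟩

theorem W_mono {k l : ℕ} (h : k ≤ l) : W t k ≤ W t l :=
  Subgroup.closure_mono (Set.image_mono fun i (hi : i < k) => lt_of_lt_of_le hi h)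

variable {m : ℕ}

theorem cc_comm_low (hcomm : ∀ i j, i + 1 < j → j < m → t i * t j = t j * t i)
    {k i : ℕ} (hk : k < m) : ∀ l, i + l < k → cc t k l * t i = t i * cc t k l
  | 0, _ => by simp [cc]
  | l + 1, h => by
    have ih := cc_comm_low hcomm hk l (i := i) (by omega)
    simp only [cc]
    rw [mul_assoc, ← hcomm i (k - l) (by omega) (by omega), ← mul_assoc, ih, mul_assoc]

theorem cc_shift (hcomm : ∀ i j, i + 1 < j → j < m → t i * t j = t j * t i)
    (hbr : ∀ i, i + 1 < m → t i * t (i + 1) * t i = t (i + 1) * t i * t (i + 1))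
    {k i : ℕ} (hk : k < m) (hi : i + 1 ≤ k) : ∀ l, l ≤ k + 1 → k < i + l →
      cc t k l * t (i + 1) = t i * cc t k l
  | 0, _, h => by omega
  | 1, _, h => by omega
  | l + 2, hl, h => by
    by_cases h1 : k < i + (l + 1)
    · have ih := cc_shift hcomm hbr hk hi (l + 1) (by omega) h1
      rw [cc, mul_assoc, hcomm (k - (l + 1)) (i + 1) (by omega) (by omega), ← mul_assoc, ih,
        mul_assoc]
    · have e1 : k - (l + 1) = i := by omega
      have e2 : k - l = i + 1 := by omega
      have h3 := cc_comm_low hcomm hk l (i := i) (by omega)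
      simp only [cc, e1, e2]
      calc cc t k l * t (i + 1) * t i * t (i + 1)
          = cc t k l * (t (i + 1) * t i * t (i + 1)) := by simp only [mul_assoc]
        _ = cc t k l * (t i * t (i + 1) * t i) := by rw [hbr i (by omega)]
        _ = (cc t k l * t i) * (t (i + 1) * t i) := by simp only [mul_assoc]
        _ = t i * (cc t k l * t (i + 1) * t i) := by rw [h3]; simp only [mul_assoc]

theorem W_succ (hcomm : ∀ i j, i + 1 < j → j < m → t i * t j = t j * t i)
    (hbr : ∀ i, i + 1 < m → t i * t (i + 1) * t i = t (i + 1) * t i * t (i + 1))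
    (hsq : ∀ i, i < m → t i * t i = 1)
    {k : ℕ} (hk : k < m) {x : Q} (hx : x ∈ W t (k + 1)) :
    ∃ y ∈ W t k, ∃ l, l ≤ k + 1 ∧ x = y * cc t k l := by
  have step : ∀ i, i ≤ k → ∀ x : Q, (∃ y ∈ W t k, ∃ l, l ≤ k + 1 ∧ x = y * cc t k l) →
      ∃ y ∈ W t k, ∃ l, l ≤ k + 1 ∧ x * t i = y * cc t k l := by
    rintro i hi x ⟨y, hy, l, hl, rfl⟩
    rcases lt_trichotomy (i + l) k with h | h | h
    · exact ⟨y * t i, mul_mem hy (t_mem_W (by omega)), l, hl, by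
        rw [mul_assoc, cc_comm_low hcomm hk l h, mul_assoc]⟩
    · refine ⟨y, hy, l + 1, by omega, ?_⟩
      have : k - l = i := by omega
      rw [cc, this, mul_assoc]
    · by_cases h2 : i + l = k + 1
      · obtain ⟨l, rfl⟩ : ∃ l', l = l' + 1 := ⟨l - 1, by omega⟩
        refine ⟨y, hy, l, by omega, ?_⟩
        have : k - l = i := by omega
        rw [cc, this, mul_assoc, mul_assoc, hsq i (by omega), mul_one]
      · obtain ⟨i, rfl⟩ : ∃ i', i = i' + 1 := ⟨i - 1, by omega⟩
        exact ⟨y * t i, mul_mem hy (t_mem_W (by omega)), l, hl, by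
          rw [mul_assoc, cc_shift hcomm hbr hk hi l hl (by omega), mul_assoc]⟩
  induction hx using Subgroup.closure_induction_right with
  | one => exact ⟨1, one_mem _, 0, by omega, by simp [cc]⟩
  | mul_right x y hx hy ih =>
    obtain ⟨i, hi, rfl⟩ := hy
    exact step i (Nat.lt_succ_iff.1 hi) _ ih
  | mul_inv_cancel x y hx hy ih =>
    obtain ⟨i, hi, rfl⟩ := hy
    have hi' : i < k + 1 := hi
    have : (t i)⁻¹ = t i := inv_eq_of_mul_eq_one_right (hsq i (by omega))
    rw [this]
    exact step i (Nat.lt_succ_iff.1 hi) _ ih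

variable (ρ : Q →* Equiv.Perm α) (p : ℕ → α)

theorem rho_W_fix (hfix : ∀ i j, i < m → j ≤ m → j ≠ i → j ≠ i + 1 → ρ (t i) (p j) = p j)
    {k : ℕ} (hk : k < m) {x : Q} (hx : x ∈ W t k) : ρ x (p (k + 1)) = p (k + 1) := by
  induction hx using Subgroup.closure_induction with
  | mem x h =>
    obtain ⟨i, hi, rfl⟩ := h
    have hi' : i < k := hi
    exact hfix i (k + 1) (by omega) (by omega) (by omega) (by omega)
  | one => simp
  | mul x y _ _ hx hy => rw [map_mul, Equiv.Perm.mul_apply, hy, hx]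
  | inv x _ hx => rw [map_inv, Equiv.Perm.inv_eq_iff_eq, hx]

theorem rho_cc (hmv : ∀ i, i < m → ρ (t i) (p i) = p (i + 1)) {k : ℕ} (hk : k < m) :
    ∀ l, l ≤ k + 1 → ρ (cc t k l) (p (k + 1 - l)) = p (k + 1)
  | 0, _ => by simp [cc]
  | l + 1, h => by
    have ih := rho_cc hmv hk l (by omega)
    have e : k + 1 - (l + 1) = k - l := by omega
    have e2 : k - l + 1 = k + 1 - l := by omega
    rw [cc, map_mul, Equiv.Perm.mul_apply, e, hmv _ (by omega), e2, ih]

/-- Elements of the Coxeter group fixing the last points lie in the parabolic subgroup. -/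
theorem mem_W_of_fix (hcomm : ∀ i j, i + 1 < j → j < m → t i * t j = t j * t i)
    (hbr : ∀ i, i + 1 < m → t i * t (i + 1) * t i = t (i + 1) * t i * t (i + 1))
    (hsq : ∀ i, i < m → t i * t i = 1)
    (hmv : ∀ i, i < m → ρ (t i) (p i) = p (i + 1))
    (hfix : ∀ i j, i < m → j ≤ m → j ≠ i → j ≠ i + 1 → ρ (t i) (p j) = p j)
    (hinj : ∀ i j, i ≤ m → j ≤ m → p i = p j → i = j)
    {x : Q} (hx : x ∈ W t m) : ∀ d k, k + d = m → (∀ j, k < j → j ≤ m → ρ x (p j) = p j) →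
      x ∈ W t k
  | 0, k, h, _ => by
    have : k = m := by omega
    rwa [this]
  | d + 1, k, h, hf => by
    have h1 := mem_W_of_fix hcomm hbr hsq hmv hfix hinj hx d (k + 1) (by omega)
      (fun j hj hj2 => hf j (by omega) hj2)
    obtain ⟨y, hy, l, hl, e⟩ := W_succ hcomm hbr hsq (by omega) h1
    have h2 : ρ x (p (k + 1 - l)) = p (k + 1) := by
      rw [e, map_mul, Equiv.Perm.mul_apply, rho_cc ρ p hmv (by omega) l hl,
        rho_W_fix ρ p hfix (by omega) hy]
    have h3 := hf (k + 1) (by omega) (by omega)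
    have h4 := hinj _ _ (by omega) (by omega) ((ρ x).injective (h2.trans h3.symm))
    have h5 : l = 0 := by omega
    subst h5
    rw [e, cc, mul_one]
    exact hy

end Coxeter

section Wind
variable {α : Type*} [DecidableEq α]

/-- The lift of a permutation to pairs with winding number. -/
def E (σ : Equiv.Perm α) (p : Sym2 α) : Equiv.Perm (Sym2 α × ℤ) where
  toFun x := (x.1.map σ, x.2 + if x.1 = p then 1 else 0)
  invFun x := (x.1.map σ.symm, x.2 - if x.1.map σ.symm = p then 1 else 0)
  left_inv x := by
    have : (x.1.map σ).map σ.symm = x.1 := by rw [Sym2.map_map]; simp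
    simp [this]
  right_inv x := by
    have : (x.1.map σ.symm).map σ = x.1 := by rw [Sym2.map_map]; simp
    simp [this]

theorem E_apply (σ : Equiv.Perm α) (p s : Sym2 α) (k : ℤ) :
    E σ p (s, k) = (s.map σ, k + if s = p then 1 else 0) := rfl

theorem map_perm_eq_iff (σ : Equiv.Perm α) (s q : Sym2 α) : s.map σ = q ↔ s = q.map σ.symm := by
  constructor
  · rintro rfl; rw [Sym2.map_map]; simp
  · rintro rfl; rw [Sym2.map_map]; simp

theorem swap_braid {x y z : α} (hxy : x ≠ y) (hyz : y ≠ z) (hxz : x ≠ z) :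
    Equiv.swap x y * Equiv.swap y z * Equiv.swap x y =
      Equiv.swap y z * Equiv.swap x y * Equiv.swap y z := by
  rw [Equiv.swap_mul_swap_mul_swap hxy hxz]
  rw [Equiv.swap_comm x y, Equiv.swap_comm y z, Equiv.swap_mul_swap_mul_swap hyz.symm hxz.symm,
    Equiv.swap_comm]

theorem swap_commute {x y z w : α} (h1 : x ≠ z) (h2 : x ≠ w) (h3 : y ≠ z) (h4 : y ≠ w) :
    Equiv.swap x y * Equiv.swap z w = Equiv.swap z w * Equiv.swap x y := by
  ext a
  simp only [Equiv.Perm.mul_apply, Equiv.swap_apply_def]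
  split_ifs <;> simp_all

theorem E_braid {x y z : α} (hxy : x ≠ y) (hyz : y ≠ z) (hxz : x ≠ z) :
    E (Equiv.swap x y) s(x, y) * E (Equiv.swap y z) s(y, z) * E (Equiv.swap x y) s(x, y) =
      E (Equiv.swap y z) s(y, z) * E (Equiv.swap x y) s(x, y) * E (Equiv.swap y z) s(y, z) := by
  ext1 ⟨s, k⟩
  simp only [Equiv.Perm.mul_apply, E_apply]
  have h := swap_braid hxy hyz hxz
  refine Prod.ext ?_ ?_
  · simp only [Sym2.map_map]
    congr 1
    funext a
    exact DFunLike.congr_fun h a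
  · simp only [map_perm_eq_iff, Equiv.symm_swap, Sym2.map_mk]
    simp only [Equiv.swap_apply_left, Equiv.swap_apply_right,
      Equiv.swap_apply_of_ne_of_ne hxz.symm hyz.symm, Equiv.swap_apply_of_ne_of_ne hxy hxz]
    ring

theorem E_commute {x y z w : α} (h1 : x ≠ z) (h2 : x ≠ w) (h3 : y ≠ z) (h4 : y ≠ w) :
    E (Equiv.swap x y) s(x, y) * E (Equiv.swap z w) s(z, w) =
      E (Equiv.swap z w) s(z, w) * E (Equiv.swap x y) s(x, y) := by
  ext1 ⟨s, k⟩
  simp only [Equiv.Perm.mul_apply, E_apply]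
  have h := swap_commute h1 h2 h3 h4
  refine Prod.ext ?_ ?_
  · simp only [Sym2.map_map]
    congr 1
    funext a
    exact DFunLike.congr_fun h a
  · simp only [map_perm_eq_iff, Equiv.symm_swap, Sym2.map_mk]
    simp only [Equiv.swap_apply_of_ne_of_ne h1 h2, Equiv.swap_apply_of_ne_of_ne h3 h4,
      Equiv.swap_apply_of_ne_of_ne h1.symm h3.symm, Equiv.swap_apply_of_ne_of_ne h2.symm h4.symm]
    ring

end Wind

end DStage

namespace DStage

section Concrete
variable {m : ℕ}

/-- The generators of `A[D_{m+1}]`. -/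
def gen (m : ℕ) (i : ℕ) : ArtinD (m + 1) :=
  if h : i < m + 1 then PresentedGroup.of ⟨i, h⟩ else 1

theorem rel_braid (i j : Fin (m + 1)) (hij : i ≠ j) (h : dnBraid (m + 1) i j) :
    (PresentedGroup.of i : ArtinD (m + 1)) * PresentedGroup.of j * PresentedGroup.of i =
      PresentedGroup.of j * PresentedGroup.of i * PresentedGroup.of j := by
  have := PresentedGroup.one_of_mem (rels := dnRels (m + 1)) ⟨i, j, hij, Or.inl ⟨h, rfl⟩⟩
  rw [map_mul, map_inv, mul_inv_eq_one] at this
  simp only [map_mul] at this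
  exact this

theorem rel_comm (i j : Fin (m + 1)) (hij : i ≠ j) (h : ¬ dnBraid (m + 1) i j) :
    (PresentedGroup.of i : ArtinD (m + 1)) * PresentedGroup.of j =
      PresentedGroup.of j * PresentedGroup.of i := by
  have := PresentedGroup.one_of_mem (rels := dnRels (m + 1)) ⟨i, j, hij, Or.inr ⟨h, rfl⟩⟩
  rw [map_mul, map_inv, mul_inv_eq_one] at this
  simp only [map_mul] at this
  exact this

theorem gen_braid (i : ℕ) (hi : i + 1 < m) :
    gen m i * gen m (i + 1) * gen m i = gen m (i + 1) * gen m i * gen m (i + 1) := by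
  have h1 : i < m + 1 := by omega
  have h2 : i + 1 < m + 1 := by omega
  simp only [gen, h1, h2, dif_pos]
  apply rel_braid
  · simp
  · left; constructor <;> simp; omega

theorem gen_comm (i j : ℕ) (hij : i + 1 < j) (hj : j < m) :
    gen m i * gen m j = gen m j * gen m i := by
  have h1 : i < m + 1 := by omega
  have h2 : j < m + 1 := by omega
  simp only [gen, h1, h2, dif_pos]
  apply rel_comm
  · simp; omega
  · simp only [dnBraid]; omega

theorem gen_last_braid (hm : 2 ≤ m) :
    gen m (m - 2) * gen m m * gen m (m - 2) = gen m m * gen m (m - 2) * gen m m := by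
  have h1 : m - 2 < m + 1 := by omega
  have h2 : m < m + 1 := by omega
  simp only [gen, h1, h2, dif_pos]
  apply rel_braid
  · simp; omega
  · simp only [dnBraid]; omega

theorem gen_last_comm (hm : 2 ≤ m) :
    gen m (m - 1) * gen m m = gen m m * gen m (m - 1) := by
  have h1 : m - 1 < m + 1 := by omega
  have h2 : m < m + 1 := by omega
  simp only [gen, h1, h2, dif_pos]
  apply rel_comm
  · simp; omega
  · simp only [dnBraid]; omega

theorem closure_gen : Subgroup.closure (Set.image (gen m) {i | i < m + 1}) = ⊤ := by
  rw [← PresentedGroup.closure_range_of]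
  congr 1
  ext x
  constructor
  · rintro ⟨i, hi, rfl⟩
    have hi' : i < m + 1 := hi
    exact ⟨⟨i, hi'⟩, by simp [gen, hi']⟩
  · rintro ⟨i, rfl⟩
    exact ⟨i, i.2, by simp [gen, i.2]⟩

/-- Universal property. -/
theorem exists_hom {H : Type*} [Group H] (f : ℕ → H) (hm : 2 ≤ m)
    (hb : ∀ i, i + 1 < m → f i * f (i + 1) * f i = f (i + 1) * f i * f (i + 1))
    (hc : ∀ i j, i + 1 < j → j < m → f i * f j = f j * f i) (hl : f m = f (m - 1)) :
    ∃ F : ArtinD (m + 1) →* H, ∀ i, i < m + 1 → F (gen m i) = f i := by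
  have key : ∀ r ∈ dnRels (m + 1), FreeGroup.lift (fun i : Fin (m + 1) => f i) r = 1 := by
    rintro r ⟨⟨i, hi⟩, ⟨j, hj⟩, hij, ⟨h, rfl⟩ | ⟨h, rfl⟩⟩
    · rw [map_mul, map_inv, mul_inv_eq_one]
      simp only [map_mul, FreeGroup.lift_apply_of]
      simp only [dnBraid] at h
      have hbm := hb (m - 2)
      have e : m - 2 + 1 = m - 1 := by omega
      rw [e, ← hl] at hbm
      rcases h with ⟨h1, h2⟩ | ⟨h1, h2⟩ | ⟨h1, h2⟩ | ⟨h1, h2⟩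
      · subst h1; exact hb i (by omega)
      · subst h1; exact (hb j (by omega)).symm
      · have h1' : i = m - 2 := by omega
        have h2' : j = m := by omega
        subst h1' h2'; exact hbm (by omega)
      · have h1' : i = m := by omega
        have h2' : j = m - 2 := by omega
        subst h1' h2'; exact (hbm (by omega)).symm
    · rw [map_mul, map_inv, mul_inv_eq_one]
      simp only [map_mul, FreeGroup.lift_apply_of]
      simp only [dnBraid] at h
      have hij' : i ≠ j := by simpa using hij
      have main : ∀ i j, i < j → j < m + 1 → ¬ (j = i + 1 ∧ j < m) → ¬ (i = m - 2 ∧ j = m) →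
          f i * f j = f j * f i := by
        intro i j h1 h2 h3 h4
        by_cases hjm : j = m
        · by_cases him : i = m - 1
          · rw [hjm, him, hl]
          · rw [hjm, hl]; exact hc i (m - 1) (by omega) (by omega)
        · exact hc i j (by omega) (by omega)
      rcases lt_or_gt_of_ne hij' with hlt | hlt
      · exact main i j hlt hj (by omega) (by omega)
      · exact (main j i hlt hi (by omega) (by omega)).symm
  refine ⟨PresentedGroup.toGroup key, fun i hi => ?_⟩
  simp [gen, hi]

/-- The points. -/
def pt (m i : ℕ) : Fin (m + 1) := Fin.ofNat (m + 1) i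

theorem pt_inj (i j : ℕ) (hi : i ≤ m) (hj : j ≤ m) (h : pt m i = pt m j) : i = j := by
  have := congrArg Fin.val h
  simp only [pt, Fin.val_ofNat] at this
  rwa [Nat.mod_eq_of_lt (by omega), Nat.mod_eq_of_lt (by omega)] at this

theorem pt_ne {i j : ℕ} (hi : i ≤ m) (hj : j ≤ m) (h : i ≠ j) : pt m i ≠ pt m j :=
  fun e => h (pt_inj i j hi hj e)

/-- The index of the transposition. -/
def ix (m i : ℕ) : ℕ := if i = m then m - 1 else i

theorem exists_rho (hm : 2 ≤ m) : ∃ F : ArtinD (m + 1) →* Equiv.Perm (Fin (m + 1)),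
    ∀ i, i < m + 1 → F (gen m i) = Equiv.swap (pt m (ix m i)) (pt m (ix m i + 1)) := by
  refine exists_hom (fun i => Equiv.swap (pt m (ix m i)) (pt m (ix m i + 1))) hm ?_ ?_ ?_
  · intro i hi
    have e1 : ix m i = i := if_neg (by omega)
    have e2 : ix m (i + 1) = i + 1 := if_neg (by omega)
    simp only [e1, e2]
    apply swap_braid <;> apply pt_ne <;> omega
  · intro i j hi hj
    have e1 : ix m i = i := if_neg (by omega)
    have e2 : ix m j = j := if_neg (by omega)
    simp only [e1, e2]
    apply swap_commute <;> apply pt_ne <;> omega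
  · have e1 : ix m m = m - 1 := if_pos rfl
    have e2 : ix m (m - 1) = m - 1 := if_neg (by omega)
    simp only [e1, e2]

theorem exists_theta (hm : 2 ≤ m) :
    ∃ F : ArtinD (m + 1) →* Equiv.Perm (Sym2 (Fin (m + 1)) × ℤ),
      ∀ i, i < m + 1 → F (gen m i) = E (Equiv.swap (pt m (ix m i)) (pt m (ix m i + 1)))
        s(pt m (ix m i), pt m (ix m i + 1)) := by
  refine exists_hom (fun i => E (Equiv.swap (pt m (ix m i)) (pt m (ix m i + 1)))
        s(pt m (ix m i), pt m (ix m i + 1))) hm ?_ ?_ ?_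
  · intro i hi
    have e1 : ix m i = i := if_neg (by omega)
    have e2 : ix m (i + 1) = i + 1 := if_neg (by omega)
    simp only [e1, e2]
    apply E_braid <;> apply pt_ne <;> omega
  · intro i j hi hj
    have e1 : ix m i = i := if_neg (by omega)
    have e2 : ix m j = j := if_neg (by omega)
    simp only [e1, e2]
    apply E_commute <;> apply pt_ne <;> omega
  · have e1 : ix m m = m - 1 := if_pos rfl
    have e2 : ix m (m - 1) = m - 1 := if_neg (by omega)
    simp only [e1, e2]

theorem theta_form (ρ : ArtinD (m + 1) →* Equiv.Perm (Fin (m + 1)))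
    (θ : ArtinD (m + 1) →* Equiv.Perm (Sym2 (Fin (m + 1)) × ℤ))
    (h : ∀ i, i < m + 1 → ∃ p, θ (gen m i) = E (ρ (gen m i)) p) (g : ArtinD (m + 1)) :
    ∀ s k, θ g (s, k) = (s.map (ρ g), k + (θ g (s, 0)).2) := by
  have hg : g ∈ Subgroup.closure (Set.image (gen m) {i | i < m + 1}) := by rw [closure_gen]; trivial
  induction hg using Subgroup.closure_induction with
  | mem x hx =>
    obtain ⟨i, hi, rfl⟩ := hx
    obtain ⟨p, hp⟩ := h i hi
    intro s k
    rw [hp]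
    simp [E_apply]
  | one => intro s k; simp
  | mul x y _ _ hx hy =>
    intro s k
    simp only [map_mul, Equiv.Perm.mul_apply]
    rw [hy s k, hy s 0, hx _ (k + _), hx _ (0 + _)]
    refine Prod.ext ?_ ?_
    · simp [Sym2.map_map, Equiv.Perm.coe_mul]
    · simp; ring
  | inv x _ hx =>
    intro s k
    rw [map_inv, map_inv]
    obtain ⟨⟨s', k'⟩, e⟩ : ∃ y, y = (θ x)⁻¹ (s, 0) := ⟨_, rfl⟩
    rw [← e, Equiv.Perm.inv_eq_iff_eq]
    rw [eq_comm, Equiv.Perm.inv_eq_iff_eq, hx s' k'] at e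
    rw [hx]
    have e1 := congrArg Prod.fst e
    have e2 := congrArg Prod.snd e
    simp only at e1 e2
    refine Prod.ext ?_ ?_
    · simp only [Sym2.map_map]
      rw [← Equiv.Perm.coe_mul]; simp
    · have e3 : s.map ⇑((ρ x)⁻¹) = s' := by
        rw [map_perm_eq_iff]; exact e1
      simp only [e3]
      linarith

end Concrete

end DStage

namespace DStage

section Final
variable {m : ℕ}

/-- Normal generators of the pure subgroup. -/
def S (m : ℕ) : Set (ArtinD (m + 1)) :=
  {x | (∃ i, i < m ∧ x = gen m i * gen m i) ∨ x = gen m (m - 1) * (gen m m)⁻¹}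

/-- The normal closure of `S`. -/
def N (m : ℕ) : Subgroup (ArtinD (m + 1)) := Subgroup.normalClosure (S m)

instance : (N m).Normal := Subgroup.normalClosure_normal

variable (ρ : ArtinD (m + 1) →* Equiv.Perm (Fin (m + 1)))

theorem N_le (hm : 2 ≤ m) (hρ : ∀ i, i < m + 1 → ρ (gen m i) =
    Equiv.swap (pt m (ix m i)) (pt m (ix m i + 1))) : N m ≤ ρ.ker := by
  apply Subgroup.normalClosure_le_normal
  rintro x (⟨i, hi, rfl⟩ | rfl)
  · show ρ _ = 1
    rw [map_mul, hρ i (by omega), Equiv.swap_mul_self]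
  · show ρ _ = 1
    have e1 : ix m m = m - 1 := if_pos rfl
    have e2 : ix m (m - 1) = m - 1 := if_neg (by omega)
    rw [map_mul, map_inv, hρ m (by omega), hρ (m - 1) (by omega), e1, e2, mul_inv_cancel]

theorem exists_W (hm : 2 ≤ m) (hρ : ∀ i, i < m + 1 → ρ (gen m i) =
    Equiv.swap (pt m (ix m i)) (pt m (ix m i + 1))) (k : ℕ) (hk : k ≤ m) (g : ArtinD (m + 1))
    (hg : ∀ j, k < j → j ≤ m → ρ g (pt m j) = pt m j) :
    ∃ w ∈ W (gen m) k, ∃ v ∈ N m, g = w * v := by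
  let π := QuotientGroup.mk' (N m)
  let ρ' : (ArtinD (m + 1) ⧸ N m) →* Equiv.Perm (Fin (m + 1)) :=
    QuotientGroup.lift (N m) ρ (N_le ρ hm hρ)
  have hρπ : ∀ x, ρ' (π x) = ρ x := fun x => rfl
  have hW : ∀ k, W (fun i => π (gen m i)) k = (W (gen m) k).map π := by
    intro k
    rw [W, W, MonoidHom.map_closure, Set.image_image]
  have hix : ∀ i, i < m → ix m i = i := fun i hi => if_neg (by omega)
  have htop : (W (fun i => π (gen m i)) m) = ⊤ := by
    have h1 : (⊤ : Subgroup (ArtinD (m + 1) ⧸ N m)) = (W (gen m) (m + 1)).map π := by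
      rw [W, closure_gen, ← MonoidHom.range_eq_map, MonoidHom.range_eq_top.2]
      exact QuotientGroup.mk'_surjective _
    rw [eq_top_iff, h1, W, MonoidHom.map_closure, Subgroup.closure_le]
    rintro _ ⟨_, ⟨i, hi, rfl⟩, rfl⟩
    by_cases him : i < m
    · exact t_mem_W (t := fun i => π (gen m i)) him
    · have hi' : i < m + 1 := hi
      have : i = m := by omega
      subst this
      have e : π (gen i i) = π (gen i (i - 1)) := by
        have h2 : gen i (i - 1) * (gen i i)⁻¹ ∈ N i :=
          Subgroup.subset_normalClosure (Or.inr rfl)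
        have h3 : π (gen i (i - 1) * (gen i i)⁻¹) = 1 := (QuotientGroup.eq_one_iff _).2 h2
        rw [map_mul, map_inv, mul_inv_eq_one] at h3
        exact h3.symm
      rw [e]
      exact t_mem_W (t := fun j => π (gen i j)) (by omega)
  have h := mem_W_of_fix (t := fun i => π (gen m i)) (m := m) ρ' (pt m)
    (fun i j h1 h2 => by rw [← map_mul, gen_comm i j h1 h2, map_mul])
    (fun i h1 => by rw [← map_mul, ← map_mul, gen_braid i h1, map_mul, map_mul])
    (fun i hi => by
      rw [← map_mul]
      exact (QuotientGroup.eq_one_iff _).2 (Subgroup.subset_normalClosure (Or.inl ⟨i, hi, rfl⟩)))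
    (fun i hi => by rw [hρπ, hρ i (by omega), hix i hi, Equiv.swap_apply_left])
    (fun i j hi hj h1 h2 => by
      rw [hρπ, hρ i (by omega), hix i hi]
      exact Equiv.swap_apply_of_ne_of_ne (pt_ne hj (by omega) h1) (pt_ne hj (by omega) h2))
    pt_inj (x := π g) (by rw [htop]; trivial) (m - k) k (by omega) hg
  rw [hW] at h
  obtain ⟨w, hw, e⟩ := h
  exact ⟨w, hw, w⁻¹ * g, QuotientGroup.eq.1 e, by group⟩

theorem conj_of_braid {G : Type*} [Group G] {a c : G} (h : a * c * a = c * a * c) :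
    c = (a * c) * a * (a * c)⁻¹ := by
  rw [eq_mul_inv_iff_mul_eq, h, mul_assoc]

theorem gen_conj (hm : 2 ≤ m) : ∀ d i, i + d + 1 = m →
    ∃ g, gen m i = g * gen m (m - 1) * g⁻¹
  | 0, i, h => ⟨1, by
      have : i = m - 1 := by omega
      subst this; simp⟩
  | d + 1, i, h => by
    obtain ⟨g, hg⟩ := gen_conj hm d (i + 1) (by omega)
    have := conj_of_braid (gen_braid (m := m) i (by omega)).symm
    refine ⟨gen m (i + 1) * gen m i * g, ?_⟩
    calc gen m i = _ := this
      _ = gen m (i + 1) * gen m i * (g * gen m (m - 1) * g⁻¹) * (gen m (i + 1) * gen m i)⁻¹ := by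
        rw [← hg]
      _ = _ := by group

theorem gen_conj_all (hm : 2 ≤ m) (i : ℕ) (hi : i < m + 1) :
    ∃ g, gen m i = g * gen m (m - 1) * g⁻¹ := by
  by_cases him : i < m
  · exact gen_conj hm (m - 1 - i) i (by omega)
  · have : i = m := by omega
    subst this
    obtain ⟨g, hg⟩ := gen_conj hm 1 (i - 2) (by omega)
    have := conj_of_braid (gen_last_braid hm)
    refine ⟨gen i (i - 2) * gen i i * g, ?_⟩
    calc gen i i = _ := this
      _ = gen i (i - 2) * gen i i * (g * gen i (i - 1) * g⁻¹) * (gen i (i - 2) * gen i i)⁻¹ := by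
        rw [← hg]
      _ = _ := by group

theorem conj_inv_of_homOn {G : Type*} [Group G] {K : Subgroup G} {f : G → ℚ} (h : HomOn K f)
    {x v : G} (hx : x ∈ K) (hv : v ∈ K) : f (v * x * v⁻¹) = f x := by
  rw [h _ (mul_mem hv hx) _ (inv_mem hv), h _ hv _ hx, h.inv hv]; ring

theorem ext_aux (hm : 2 ≤ m) (hρ : ∀ i, i < m + 1 → ρ (gen m i) =
    Equiv.swap (pt m (ix m i)) (pt m (ix m i + 1))) (f : ArtinD (m + 1) → ℚ)
    (hf : HomOn ρ.ker f)
    (h0 : ∀ g, f (g * (gen m (m - 1) * gen m (m - 1)) * g⁻¹) = 0) :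
    ∀ x ∈ ρ.ker, f x = 0 := by
  have hNle := N_le ρ hm hρ
  have hN : ∀ x ∈ ρ.ker, x ∈ N m := by
    intro x hx
    have hx' : ρ x = 1 := hx
    obtain ⟨w, hw, v, hv, rfl⟩ := exists_W ρ hm hρ 0 (by omega) x (fun j _ _ => by simp [hx'])
    have : w = 1 := by simpa [W] using hw
    rw [this, one_mul]; exact hv
  have hsq : ∀ i, i < m + 1 → ∀ g, f (g * (gen m i * gen m i) * g⁻¹) = 0 := by
    intro i hi g
    obtain ⟨a, ha⟩ := gen_conj_all hm i hi
    rw [← h0 (g * a), ha]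
    congr 1
    group
  have hsqm : ∀ i, i < m + 1 → ∀ g, g * (gen m i * gen m i) * g⁻¹ ∈ ρ.ker := by
    intro i hi g
    show ρ _ = 1
    simp [hρ i hi, Equiv.swap_mul_self]
  have he : ∀ g, f (g * (gen m (m - 1) * (gen m m)⁻¹) * g⁻¹) = 0 := by
    intro g
    have hmem : g * (gen m (m - 1) * (gen m m)⁻¹) * g⁻¹ ∈ ρ.ker :=
      hNle ((inferInstance : (N m).Normal).conj_mem _
        (Subgroup.subset_normalClosure (Or.inr rfl)) g)
    have hc := gen_last_comm hm
    have e : (g * (gen m (m - 1) * (gen m m)⁻¹) * g⁻¹) * (g * (gen m (m - 1) * (gen m m)⁻¹) * g⁻¹)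
        = (g * (gen m (m - 1) * gen m (m - 1)) * g⁻¹) * (g * (gen m m * gen m m) * g⁻¹)⁻¹ := by
      have hc' : (gen m m)⁻¹ * gen m (m - 1) = gen m (m - 1) * (gen m m)⁻¹ :=
        (show Commute (gen m (m - 1)) (gen m m) from hc).symm.inv_left
      calc _ = g * gen m (m - 1) * ((gen m m)⁻¹ * gen m (m - 1)) * (gen m m)⁻¹ * g⁻¹ := by group
        _ = _ := by rw [hc']; group
    have h2 := hf _ hmem _ hmem
    rw [e, hf _ (hsqm _ (by omega) g) _ (inv_mem (hsqm _ (by omega) g)),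
      hf.inv (hsqm _ (by omega) g), hsq _ (by omega), hsq _ (by omega)] at h2
    linarith
  intro x hx
  have hxN := hN x hx
  unfold N Subgroup.normalClosure at hxN
  have : x ∈ ρ.ker ∧ f x = 0 := by
    clear hx
    induction hxN using Subgroup.closure_induction with
    | mem y hy =>
      refine ⟨hNle (Subgroup.subset_closure hy), ?_⟩
      obtain ⟨s, hs, hc⟩ := Group.mem_conjugatesOfSet_iff.1 hy
      obtain ⟨c, rfl⟩ := isConj_iff.1 hc
      rcases hs with ⟨i, hi, rfl⟩ | rfl
      · exact hsq i (by omega) c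
      · exact he c
    | one => exact ⟨one_mem _, hf.one⟩
    | mul y z _ _ hy hz => exact ⟨mul_mem hy.1 hz.1, by rw [hf _ hy.1 _ hz.1, hy.2, hz.2]; simp⟩
    | inv y _ hy => exact ⟨inv_mem hy.1, by rw [hf.inv hy.1, hy.2]; simp⟩
  exact this.2

theorem dep_aux (hm : 2 ≤ m) (hρ : ∀ i, i < m + 1 → ρ (gen m i) =
    Equiv.swap (pt m (ix m i)) (pt m (ix m i + 1))) (f : ArtinD (m + 1) → ℚ)
    (hf : HomOn ρ.ker f) (g h : ArtinD (m + 1))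
    (e : Sym2.map (ρ g) s(pt m (m - 1), pt m m) = Sym2.map (ρ h) s(pt m (m - 1), pt m m)) :
    f (g * (gen m (m - 1) * gen m (m - 1)) * g⁻¹) =
      f (h * (gen m (m - 1) * gen m (m - 1)) * h⁻¹) := by
  have e2 : ix m (m - 1) = m - 1 := if_neg (by omega)
  have e3 : m - 1 + 1 = m := by omega
  have hτ := hρ (m - 1) (by omega)
  rw [e2, e3] at hτ
  have hτm : gen m (m - 1) * gen m (m - 1) ∈ ρ.ker := by
    show ρ _ = 1
    rw [map_mul, hτ, Equiv.swap_mul_self]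
  have main : ∀ k, ρ k (pt m (m - 1)) = pt m (m - 1) → ρ k (pt m m) = pt m m →
      f (h * (k * (gen m (m - 1) * gen m (m - 1)) * k⁻¹) * h⁻¹) =
        f (h * (gen m (m - 1) * gen m (m - 1)) * h⁻¹) := by
    intro k h1 h2
    obtain ⟨w, hw, v, hv, rfl⟩ := exists_W ρ hm hρ (m - 2) (by omega) k (fun j hj hj2 => by
      have : j = m - 1 ∨ j = m := by omega
      rcases this with rfl | rfl
      · exact h1
      · exact h2)
    have hwc : w * gen m (m - 1) = gen m (m - 1) * w := by
      have : w ∈ Subgroup.centralizer {gen m (m - 1)} := by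
        refine (Subgroup.closure_le _).2 ?_ hw
        rintro _ ⟨i, hi, rfl⟩
        have hi' : i < m - 2 := hi
        simp only [SetLike.mem_coe, Subgroup.mem_centralizer_singleton_iff]
        exact gen_comm i (m - 1) (by omega) (by omega)
      rw [Subgroup.mem_centralizer_singleton_iff] at this
      exact this
    have hnor : ρ.ker.Normal := inferInstance
    have hv' : (h * w) * v * (h * w)⁻¹ ∈ ρ.ker := hnor.conj_mem _ (N_le ρ hm hρ hv) _
    have hx' : (h * w) * (gen m (m - 1) * gen m (m - 1)) * (h * w)⁻¹ ∈ ρ.ker :=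
      hnor.conj_mem _ hτm _
    have := conj_inv_of_homOn hf hx' hv'
    have c1 : w * (gen m (m - 1) * gen m (m - 1)) * w⁻¹ = gen m (m - 1) * gen m (m - 1) := by
      rw [← mul_assoc, hwc, mul_assoc (gen m (m - 1)), hwc]; group
    calc _ = _ := by congr 1; group
      _ = _ := this
      _ = f (h * (w * (gen m (m - 1) * gen m (m - 1)) * w⁻¹) * h⁻¹) := by congr 1; group
      _ = _ := by rw [c1]
  have hgh : ∀ y, ρ (h⁻¹ * g) y = (ρ h)⁻¹ (ρ g y) := fun y => by
    rw [map_mul, map_inv, Equiv.Perm.mul_apply]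
  rw [Sym2.map_mk, Sym2.map_mk, Sym2.eq_iff] at e
  rcases e with ⟨h1, h2⟩ | ⟨h1, h2⟩
  · rw [← main (h⁻¹ * g) (by rw [hgh, h1]; simp) (by rw [hgh, h2]; simp)]
    congr 1; group
  · rw [← main (h⁻¹ * g * gen m (m - 1))
      (by rw [map_mul, Equiv.Perm.mul_apply, hτ, Equiv.swap_apply_left, hgh, h2]; simp)
      (by rw [map_mul, Equiv.Perm.mul_apply, hτ, Equiv.swap_apply_right, hgh, h1]; simp)]
    congr 1; group

theorem surj_aux (hρ : ∀ i, i < m + 1 → ρ (gen m i) =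
    Equiv.swap (pt m (ix m i)) (pt m (ix m i + 1))) : Function.Surjective ρ := by
  rw [← MonoidHom.range_eq_top, eq_top_iff,
    ← Subgroup.closure_eq_top_of_mclosure_eq_top (Equiv.Perm.mclosure_swap_castSucc_succ m),
    Subgroup.closure_le]
  rintro _ ⟨i, rfl⟩
  refine ⟨gen m i, ?_⟩
  have hi := i.2
  rw [hρ i (by omega)]
  have e : ix m i = i := if_neg (by omega)
  rw [e]
  congr 1
  · ext; simp [pt]
  · ext; simp [pt]

/-- The data needed for the second stage. -/
theorem exists_pureData (hm : 2 ≤ m) : Nonempty (PureData (m + 1) (ArtinD (m + 1))) := by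
  obtain ⟨ρ, hρ⟩ := exists_rho hm
  obtain ⟨θ, hθ⟩ := exists_theta hm
  have hform := theta_form ρ θ (fun i hi => ⟨_, by rw [hρ i hi, hθ i hi]⟩)
  have e2 : ix m (m - 1) = m - 1 := if_neg (by omega)
  have e3 : m - 1 + 1 = m := by omega
  have hτ := hρ (m - 1) (by omega)
  have hτθ := hθ (m - 1) (by omega)
  rw [e2, e3] at hτ hτθ
  have hτm : gen m (m - 1) * gen m (m - 1) ∈ ρ.ker := by
    show ρ _ = 1
    rw [map_mul, hτ, Equiv.swap_mul_self]
  have hτ2 : ∀ s k, θ (gen m (m - 1) * gen m (m - 1)) (s, k) =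
      (s, k + if s = s(pt m (m - 1), pt m m) then 2 else 0) := by
    intro s k
    rw [map_mul, Equiv.Perm.mul_apply, hτθ, E_apply, E_apply]
    refine Prod.ext ?_ ?_
    · simp only [Sym2.map_map]
      rw [← Equiv.Perm.coe_mul, Equiv.swap_mul_self]; simp
    · simp only [map_perm_eq_iff, Equiv.symm_swap, Sym2.map_mk, Equiv.swap_apply_left,
        Equiv.swap_apply_right]
      rw [Sym2.eq_swap (a := pt m m)]
      split_ifs <;> ring
  exact ⟨{
    ρ := ρ
    surj := surj_aux ρ hρ
    τ := gen m (m - 1)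
    s0 := s(pt m (m - 1), pt m m)
    hs0 := by
      rw [Sym2.mk_isDiag_iff]
      exact pt_ne (by omega) le_rfl (by omega)
    w := fun s x => ((θ x (s, 0)).2 : ℚ) / 2
    hom := by
      intro s x hx y hy
      have hy' : ρ y = 1 := hy
      have : (θ (x * y) (s, 0)).2 = (θ x (s, 0)).2 + (θ y (s, 0)).2 := by
        rw [map_mul, Equiv.Perm.mul_apply, hform y, hform x, hy']
        simp; ring
      simp only [this]
      push_cast; ring
    int := fun s x => ⟨(θ x (s, 0)).2, by ring⟩
    τsq := hτm
    val := by
      intro s g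
      have h1 : (θ (g * (gen m (m - 1) * gen m (m - 1)) * g⁻¹) (s, 0)).2 =
          if Sym2.map (ρ g) s(pt m (m - 1), pt m m) = s then 2 else 0 := by
        obtain ⟨⟨s', k'⟩, e⟩ : ∃ y, y = θ g⁻¹ (s, 0) := ⟨_, rfl⟩
        rw [map_mul, map_mul, Equiv.Perm.mul_apply, Equiv.Perm.mul_apply, ← e, hτ2, hform g]
        rw [map_inv, eq_comm, Equiv.Perm.inv_eq_iff_eq, hform g s' k'] at e
        have e1 := congrArg Prod.fst e
        have e2 := congrArg Prod.snd e
        simp only at e1 e2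
        have e4 : (s' = s(pt m (m - 1), pt m m)) ↔
            (Sym2.map (ρ g) s(pt m (m - 1), pt m m) = s) := by
          rw [e1, (Sym2.map.injective (ρ g).injective).eq_iff, eq_comm]
        simp only [e4]
        linarith
      simp only [h1]
      split_ifs <;> simp
    ext := ext_aux ρ hm hρ
    dep := dep_aux ρ hm hρ }⟩

instance (n : ℕ) : Finite (ArtinD n →* Equiv.Perm (Fin n)) := by
  refine Finite.of_injective
    (fun f : ArtinD n →* Equiv.Perm (Fin n) => fun i : Fin n => f (PresentedGroup.of i)) ?_
  intro f g h
  exact PresentedGroup.ext fun i => congrFun h i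

end Final

end DStage

/-- For every `n ≥ 6`, the Artin group `A[D_n]` has property `R_∞`. -/
theorem artinD_propertyRInfinity (n : ℕ) (hn : 6 ≤ n) :
    PropertyRInfinity (ArtinD n) := by
  obtain ⟨m, rfl⟩ : ∃ m, n = m + 1 := ⟨n - 1, by omega⟩
  obtain ⟨D⟩ := DStage.exists_pureData (m := m) (by omega)
  exact D.rInfinity (by omega)
end

section
/- For every natural number n ≥ 6, the central quotient A[D_n] / Z(A[D_n]) of the Artin group A[D_n] by its center has property R_∞; that is, for every automorphism φ of A[D_n] / Z(A[D_n]), the set of φ-twisted conjugacy classes is infinite. -/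
open Equiv Equiv.Perm

/-! ### Twisted conjugacy: a criterion -/

theorem DnR.twisted_infinite {G : Type*} [Group G] (φ : G ≃* G) (d : G) (N : Subgroup G)
    [N.Normal] [Finite (G ⧸ N)] (hN : ∀ x ∈ N, φ x ∈ N) (L : G → ℚ)
    (hadd : ∀ x ∈ N, ∀ y ∈ N, L (x * y) = L x + L y)
    (hinv : ∀ x ∈ N, L (d * φ x * d⁻¹) = L x) (k : G) (hk : k ∈ N) (hk0 : L k ≠ 0) :
    ReidemeisterInfinite φ := by
  by_contra hfin
  have hfin : Finite (Quot (TwistedConj φ)) := not_infinite_iff_finite.mp hfin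
  have heq : Equivalence (TwistedConj φ) := by
    refine ⟨fun g => ⟨1, by simp⟩, ?_, ?_⟩
    · rintro g h ⟨x, rfl⟩
      exact ⟨x⁻¹, by simp [mul_assoc]⟩
    · rintro g h l ⟨x, rfl⟩ ⟨y, rfl⟩
      exact ⟨y * x, by simp [mul_assoc]⟩
  have hex : ∀ j : ℕ, ∃ x : G,
      k ^ j * d = x * (Quot.mk (TwistedConj φ) (k ^ j * d)).out * (φ x)⁻¹ := by
    intro j
    have h := Quot.out_eq (Quot.mk (TwistedConj φ) (k ^ j * d))
    exact heq.eqvGen_iff.mp (Quot.eqvGen_exact h)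
  choose x hx using hex
  obtain ⟨i, j, hij, he⟩ := Finite.exists_ne_map_eq_of_infinite
    (fun j : ℕ => ((Quot.mk (TwistedConj φ) (k ^ j * d) : Quot (TwistedConj φ)),
      (QuotientGroup.mk (x j) : G ⧸ N)))
  simp only [Prod.mk.injEq] at he
  obtain ⟨h1, h2⟩ := he
  have h3 : (x i)⁻¹ * x j ∈ N := QuotientGroup.eq.mp h2
  have hy : x j * (x i)⁻¹ ∈ N := by
    have := ‹N.Normal›.conj_mem _ h3 (x i)
    simpa [mul_assoc] using this
  set y := x j * (x i)⁻¹ with hydef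
  have hxi := hx i
  have hxj := hx j
  rw [← h1] at hxj
  set r := (Quot.mk (TwistedConj φ) (k ^ i * d)).out
  have hxj' : x j = y * x i := by simp [hydef]
  have key : k ^ j = y * k ^ i * (d * φ y * d⁻¹)⁻¹ := by
    have : k ^ j * d = y * (k ^ i * d) * (φ y)⁻¹ := by
      rw [hxj, hxi, hxj']; simp [mul_assoc]
    have h4 : k ^ j = y * (k ^ i * d) * (φ y)⁻¹ * d⁻¹ := by rw [← this]; simp
    rw [h4]; simp [mul_assoc]
  have hdy : d * φ y * d⁻¹ ∈ N := ‹N.Normal›.conj_mem _ (hN y hy) d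
  have hpow : ∀ m : ℕ, L (k ^ m) = m * L k := by
    have h0 : L 1 = 0 := by
      have := hadd 1 N.one_mem 1 N.one_mem
      simp at this; exact this
    intro m
    induction m with
    | zero => simp [h0]
    | succ m ih => rw [pow_succ, hadd _ (N.pow_mem hk m) _ hk, ih]; push_cast; ring
  have key2 : k ^ j * (d * φ y * d⁻¹) = y * k ^ i := by rw [key]; simp [mul_assoc]
  have h5 := congrArg L key2
  rw [hadd _ (N.pow_mem hk j) _ hdy, hadd _ hy _ (N.pow_mem hk i), hinv y hy, hpow, hpow] at h5
  have h6 : ((j : ℚ) - i) * L k = 0 := by linarith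
  rcases mul_eq_zero.mp h6 with h | h
  · exact hij (by exact_mod_cast (sub_eq_zero.mp h).symm)
  · exact hk0 h

/-! ### Coxeter groups of type A embed in symmetric groups -/

section Cox
variable {Γ : Type*} [Group Γ]

/-- The descending product `s_m s_{m-1} ⋯` with `k` factors. -/
def DnR.dsc (s : ℕ → Γ) (m : ℕ) : ℕ → Γ
  | 0 => 1
  | k + 1 => DnR.dsc s m k * s (m - k)

theorem DnR.dsc_comm (s : ℕ → Γ) (n m : ℕ) (hm : m + 1 < n)
    (hc : ∀ i j, i + 2 ≤ j → j + 1 < n → s i * s j = s j * s i) (k : ℕ) :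
    ∀ i, i + k < m → s i * DnR.dsc s m k = DnR.dsc s m k * s i := by
  induction k with
  | zero => intro i _; simp [DnR.dsc]
  | succ k ih =>
    intro i hi
    simp only [DnR.dsc]
    rw [← mul_assoc, ih i (by omega), mul_assoc, hc i (m - k) (by omega) (by omega), mul_assoc]

theorem DnR.dsc_shift (s : ℕ → Γ) (n m : ℕ) (hm : m + 1 < n)
    (hb : ∀ i, i + 2 < n → s i * s (i + 1) * s i = s (i + 1) * s i * s (i + 1))
    (hc : ∀ i j, i + 2 ≤ j → j + 1 < n → s i * s j = s j * s i) (k : ℕ) :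
    ∀ i, k ≤ m + 1 → i ≤ m → m + 1 < i + k →
      DnR.dsc s m k * s i = s (i - 1) * DnR.dsc s m k := by
  induction k with
  | zero => intro i _ _ _; omega
  | succ k ih =>
    intro i hk hi hik
    rcases Nat.eq_or_lt_of_le (show m + 1 ≤ i + k by omega) with h | h
    · obtain ⟨k, rfl⟩ : ∃ k', k = k' + 1 := ⟨k - 1, by omega⟩
      obtain ⟨i, rfl⟩ : ∃ i', i = i' + 1 := ⟨i - 1, by omega⟩
      simp only [DnR.dsc]
      have e1 : m - k = i + 1 := by omega
      have e2 : m - (k + 1) = i := by omega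
      have h1 := DnR.dsc_comm s n m hm hc k i (by omega)
      have h2 := hb i (by omega)
      rw [e1, e2, Nat.add_sub_cancel]
      calc DnR.dsc s m k * s (i + 1) * s i * s (i + 1)
          = DnR.dsc s m k * (s (i + 1) * s i * s (i + 1)) := by simp [mul_assoc]
        _ = (DnR.dsc s m k * s i) * s (i + 1) * s i := by rw [← h2]; simp [mul_assoc]
        _ = _ := by rw [← h1]; simp [mul_assoc]
    · simp only [DnR.dsc]
      rw [mul_assoc, hc (m - k) i (by omega) (by omega), ← mul_assoc,
        ih i (by omega) hi h, mul_assoc]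

theorem DnR.cox_decomp (s : ℕ → Γ) (n m : ℕ) (hm : m + 1 < n)
    (h2 : ∀ i, i + 1 < n → s i * s i = 1)
    (hb : ∀ i, i + 2 < n → s i * s (i + 1) * s i = s (i + 1) * s i * s (i + 1))
    (hc : ∀ i j, i + 2 ≤ j → j + 1 < n → s i * s j = s j * s i)
    (g : Γ) (hg : g ∈ Subgroup.closure {x | ∃ i < m + 1, x = s i}) :
    ∃ h ∈ Subgroup.closure {x | ∃ i < m, x = s i}, ∃ k ≤ m + 1, g = h * DnR.dsc s m k := by
  have step : ∀ x : Γ, (∃ h ∈ Subgroup.closure {x | ∃ i < m, x = s i}, ∃ k ≤ m + 1,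
      x = h * DnR.dsc s m k) → ∀ i < m + 1,
      ∃ h ∈ Subgroup.closure {x | ∃ i < m, x = s i}, ∃ k ≤ m + 1,
        x * s i = h * DnR.dsc s m k := by
    rintro x ⟨h, hh, k, hk, rfl⟩ i hi
    have mem : ∀ j < m, s j ∈ Subgroup.closure {x | ∃ i < m, x = s i} :=
      fun j hj => Subgroup.subset_closure ⟨j, hj, rfl⟩
    rcases lt_trichotomy (i + k) m with hlt | heq | hgt
    · refine ⟨h * s i, mul_mem hh (mem i (by omega)), k, hk, ?_⟩
      rw [mul_assoc, ← DnR.dsc_comm s n m hm hc k i hlt, mul_assoc]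
    · refine ⟨h, hh, k + 1, by omega, ?_⟩
      simp only [DnR.dsc]
      rw [show m - k = i by omega, mul_assoc]
    · rcases Nat.eq_or_lt_of_le (show m + 1 ≤ i + k by omega) with h' | h'
      · obtain ⟨k, rfl⟩ : ∃ k', k = k' + 1 := ⟨k - 1, by omega⟩
        refine ⟨h, hh, k, by omega, ?_⟩
        simp only [DnR.dsc]
        rw [show m - k = i by omega, mul_assoc, mul_assoc, h2 i (by omega), mul_one]
      · refine ⟨h * s (i - 1), mul_mem hh (mem _ (by omega)), k, hk, ?_⟩
        rw [mul_assoc, DnR.dsc_shift s n m hm hb hc k i hk (by omega) h', mul_assoc]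
  refine Subgroup.closure_induction_right (p := fun g _ => ∃ h ∈ Subgroup.closure
    {x | ∃ i < m, x = s i}, ∃ k ≤ m + 1, g = h * DnR.dsc s m k) ?_ ?_ ?_ hg
  · exact ⟨1, one_mem _, 0, by omega, by simp [DnR.dsc]⟩
  · rintro x _ y ⟨i, hi, rfl⟩ hx
    exact step x hx i hi
  · rintro x _ y ⟨i, hi, rfl⟩ hx
    have : (s i)⁻¹ = s i := inv_eq_of_mul_eq_one_left (h2 i (by omega))
    rw [this]
    exact step x hx i hi

theorem DnR.cox_inj (s : ℕ → Γ) (n : ℕ) (p : Γ →* Perm (Fin n))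
    (hp : ∀ i (hi : i + 1 < n), p (s i) = swap ⟨i, by omega⟩ ⟨i + 1, hi⟩)
    (h2 : ∀ i, i + 1 < n → s i * s i = 1)
    (hb : ∀ i, i + 2 < n → s i * s (i + 1) * s i = s (i + 1) * s i * s (i + 1))
    (hc : ∀ i j, i + 2 ≤ j → j + 1 < n → s i * s j = s j * s i) (m : ℕ) :
    m < n → ∀ g ∈ Subgroup.closure {x | ∃ i < m, x = s i}, p g = 1 → g = 1 := by
  induction m with
  | zero =>
    intro _ g hg _
    have : {x : Γ | ∃ i < 0, x = s i} = ∅ := by ext; simp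
    rw [this, Subgroup.closure_empty] at hg
    exact hg
  | succ m ih =>
    intro hm g hg hpg
    obtain ⟨h, hh, k, hk, rfl⟩ := DnR.cox_decomp s n m hm h2 hb hc g hg
    have hfix : p h ⟨m + 1, hm⟩ = ⟨m + 1, hm⟩ := by
      have : h ∈ (MulAction.stabilizer (Perm (Fin n)) (⟨m + 1, hm⟩ : Fin n)).comap p := by
        refine (Subgroup.closure_le _).mpr ?_ hh
        rintro x ⟨i, hi, rfl⟩
        simp only [Subgroup.coe_comap, Set.mem_preimage, SetLike.mem_coe,
          MulAction.mem_stabilizer_iff, Perm.smul_def]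
        rw [hp i (by omega)]
        apply swap_apply_of_ne_of_ne <;> simp [Fin.ext_iff] <;> omega
      simpa [Subgroup.mem_comap, MulAction.mem_stabilizer_iff] using this
    have hd : ∀ k, ∀ hk : k ≤ m + 1,
        p (DnR.dsc s m k) ⟨m + 1 - k, by omega⟩ = ⟨m + 1, hm⟩ := by
      intro k
      induction k with
      | zero => intro _; simp [DnR.dsc]
      | succ k ihk =>
        intro hk
        simp only [DnR.dsc, map_mul, Perm.mul_apply]
        rw [hp (m - k) (by omega)]
        have e : (⟨m + 1 - (k + 1), by omega⟩ : Fin n) = ⟨m - k, by omega⟩ := by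
          simp [Fin.ext_iff]
        have e' : (⟨m - k + 1, by omega⟩ : Fin n) = ⟨m + 1 - k, by omega⟩ := by
          simp [Fin.ext_iff]; omega
        rw [e, swap_apply_left, e']
        exact ihk (by omega)
    have h0 : k = 0 := by
      have h1 := congrArg (fun σ : Perm (Fin n) => σ ⟨m + 1 - k, by omega⟩) hpg
      simp only [map_mul, Perm.mul_apply, hd k hk, hfix, Perm.one_apply, Fin.mk.injEq] at h1
      omega
    subst h0
    simp only [DnR.dsc, mul_one] at hpg ⊢
    exact ih (by omega) h hh hpg

end Cox

/-! ### The abstract setting: a group with a map to the symmetric group and a cocycle -/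

/-- The transpositions of `Fin n`. -/
abbrev DnR.Swp (n : ℕ) : Type := {p : Perm (Fin n) // p.IsSwap}

noncomputable instance DnR.fintypeSwp {n : ℕ} : Fintype (DnR.Swp n) := Fintype.ofFinite _

theorem DnR.isSwap_conj {n : ℕ} (σ p : Perm (Fin n)) (h : p.IsSwap) : (σ * p * σ⁻¹).IsSwap := by
  obtain ⟨x, y, hxy, rfl⟩ := h
  refine ⟨σ x, σ y, fun h => hxy (σ.injective h), ?_⟩
  rw [Equiv.swap_apply_apply]

/-- Conjugation action on transpositions. -/
def DnR.cj {n : ℕ} : Perm (Fin n) →* Perm (DnR.Swp n) where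
  toFun σ :=
    { toFun := fun p => ⟨σ * p.1 * σ⁻¹, DnR.isSwap_conj σ p.1 p.2⟩
      invFun := fun p => ⟨σ⁻¹ * p.1 * σ⁻¹⁻¹, DnR.isSwap_conj σ⁻¹ p.1 p.2⟩
      left_inv := fun p => by ext1; simp [mul_assoc]
      right_inv := fun p => by ext1; simp [mul_assoc] }
  map_one' := by ext1 p; ext1; simp
  map_mul' σ τ := by ext1 p; ext1; simp [mul_assoc]

@[simp] theorem DnR.cj_coe {n : ℕ} (σ : Perm (Fin n)) (p : DnR.Swp n) :
    (DnR.cj σ p).1 = σ * p.1 * σ⁻¹ := rfl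

/-- The transposition attached to the `i`-th generator. -/
def DnR.sw {n : ℕ} (hn : 6 ≤ n) (i : ℕ) : Perm (Fin n) :=
  swap ⟨min i (n - 2), by omega⟩ ⟨min i (n - 2) + 1, by omega⟩

theorem DnR.sw_isSwap {n : ℕ} (hn : 6 ≤ n) (i : ℕ) : (DnR.sw hn i).IsSwap :=
  ⟨_, _, by simp [Fin.ext_iff], rfl⟩

theorem DnR.sw_lt {n : ℕ} (hn : 6 ≤ n) (i : ℕ) (hi : i + 1 < n) :
    DnR.sw hn i = swap ⟨i, by omega⟩ ⟨i + 1, hi⟩ := by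
  unfold DnR.sw
  have : min i (n - 2) = i := by omega
  simp [this]

/-- A group with generators satisfying the relations of type `D_n`, with the map to the
symmetric group and the (normalized) inversion cocycle. -/
structure DnR.Data (n : ℕ) (G : Type*) [Group G] where
  hn : 6 ≤ n
  t : Fin n → G
  gen : Subgroup.closure (Set.range t) = ⊤
  braid : ∀ i j, i ≠ j → dnBraid n i j → t i * t j * t i = t j * t i * t j
  comm : ∀ i j, i ≠ j → ¬ dnBraid n i j → t i * t j = t j * t i
  π : G →* Perm (Fin n)
  π_t : ∀ i, π (t i) = DnR.sw hn i
  v : G → DnR.Swp n → ℚ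
  v_mul : ∀ g h p, v (g * h) p = v g p + v h ((DnR.cj (π g))⁻¹ p)
  v_sum : ∀ g, ∑ p, v g p = 0
  v_t : ∀ i p, v (t i) p = (if p.1 = DnR.sw hn i then 1 else 0) - 1 / Fintype.card (DnR.Swp n)

namespace DnR.Data

variable {n : ℕ} {G : Type*} [Group G] (D : DnR.Data n G)

/-- Additivity on the kernel of `π`. -/
def Add (μ : G → ℚ) : Prop := ∀ x y, D.π x = 1 → D.π y = 1 → μ (x * y) = μ x + μ y

variable {D}

theorem Add.one {μ : G → ℚ} (h : D.Add μ) : μ 1 = 0 := by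
  have := h 1 1 (map_one _) (map_one _)
  simp at this; exact this

theorem Add.inv {μ : G → ℚ} (h : D.Add μ) {x : G} (hx : D.π x = 1) : μ x⁻¹ = - μ x := by
  have := h x x⁻¹ hx (by simp [hx])
  simp [h.one] at this; linarith

theorem Add.pow {μ : G → ℚ} (h : D.Add μ) {x : G} (hx : D.π x = 1) (m : ℕ) :
    μ (x ^ m) = m * μ x := by
  induction m with
  | zero => simp [h.one]
  | succ m ih => rw [pow_succ, h _ _ (by simp [hx]) hx, ih]; push_cast; ring

theorem Add.conj {μ : G → ℚ} (h : D.Add μ) {k x : G} (hk : D.π k = 1) (hx : D.π x = 1) :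
    μ (k * x * k⁻¹) = μ x := by
  rw [h _ _ (by simp [hk, hx]) (by simp [hk]), h _ _ hk hx, h.inv hk]; ring

variable (D)

theorem π_sq (i : Fin n) : D.π (D.t i * D.t i) = 1 := by
  rw [map_mul, D.π_t]; simp [DnR.sw]

theorem π_surj : Function.Surjective D.π := by
  rw [← MonoidHom.range_eq_top, eq_top_iff]
  have hn := D.hn
  obtain ⟨m, rfl⟩ : ∃ m, n = m + 1 := ⟨n - 1, by omega⟩
  rw [← Subgroup.closure_eq_top_of_mclosure_eq_top (mclosure_swap_castSucc_succ m),
    Subgroup.closure_le]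
  rintro _ ⟨i, rfl⟩
  refine ⟨D.t i.castSucc, ?_⟩
  rw [D.π_t, DnR.sw_lt _ _ (by simp)]
  rfl

/-- An additive function on the kernel vanishing on conjugates of squares vanishes. -/
theorem eq_zero_of_sq {μ : G → ℚ} (hμ : D.Add μ)
    (h : ∀ g i, μ (g * (D.t i * D.t i) * g⁻¹) = 0) : ∀ x, D.π x = 1 → μ x = 0 := by
  have hn := D.hn
  let N : Subgroup G :=
    { carrier := {x | D.π x = 1 ∧ ∀ g, μ (g * x * g⁻¹) = 0}
      one_mem' := by simp [hμ.one]
      mul_mem' := by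
        rintro a b ⟨ha, ha'⟩ ⟨hb, hb'⟩
        refine ⟨by simp [ha, hb], fun g => ?_⟩
        have : g * (a * b) * g⁻¹ = (g * a * g⁻¹) * (g * b * g⁻¹) := by simp [mul_assoc]
        rw [this, hμ _ _ (by simp [ha]) (by simp [hb]), ha', hb', add_zero]
      inv_mem' := by
        rintro a ⟨ha, ha'⟩
        refine ⟨by simp [ha], fun g => ?_⟩
        have : g * a⁻¹ * g⁻¹ = (g * a * g⁻¹)⁻¹ := by simp [mul_assoc]
        rw [this, hμ.inv (by simp [ha]), ha', neg_zero] }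
  have hN : ∀ x, x ∈ N ↔ (D.π x = 1 ∧ ∀ g, μ (g * x * g⁻¹) = 0) := fun x => Iff.rfl
  haveI : N.Normal := by
    refine ⟨?_⟩
    rintro a ⟨ha, ha'⟩ k
    refine ⟨by simp [ha], fun g => ?_⟩
    have := ha' (g * k)
    simpa [mul_assoc] using this
  have hsq : ∀ i, D.t i * D.t i ∈ N := fun i => ⟨D.π_sq i, fun g => h g i⟩
  let a : Fin n := ⟨n - 2, by omega⟩
  let b : Fin n := ⟨n - 1, by omega⟩
  have hab : D.t a * D.t b = D.t b * D.t a := by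
    apply D.comm
    · simp [a, b, Fin.ext_iff]; omega
    · simp only [dnBraid, a, b]; omega
  have hu : D.t a * (D.t b)⁻¹ ∈ N := by
    have hπ : D.π (D.t a * (D.t b)⁻¹) = 1 := by
      rw [map_mul, map_inv, D.π_t, D.π_t]
      have : DnR.sw D.hn (a : ℕ) = DnR.sw D.hn (b : ℕ) := by
        unfold DnR.sw
        have e : min (a : ℕ) (n - 2) = min (b : ℕ) (n - 2) := by simp only [a, b]; omega
        simp [e]
      rw [this, mul_inv_cancel]
    refine ⟨hπ, fun g => ?_⟩
    have hc : Commute (D.t a) (D.t b) := hab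
    have e1 : D.t a * D.t a = (D.t a * (D.t b)⁻¹) * (D.t a * (D.t b)⁻¹) * (D.t b * D.t b) := by
      have h3 : (D.t b)⁻¹ * D.t a = D.t a * (D.t b)⁻¹ := hc.symm.inv_left.eq
      calc D.t a * D.t a = D.t a * (D.t a * (D.t b)⁻¹) * D.t b := by simp [mul_assoc]
        _ = D.t a * ((D.t b)⁻¹ * D.t a) * D.t b := by rw [h3]
        _ = D.t a * (D.t b)⁻¹ * (D.t a * D.t b) := by simp [mul_assoc]
        _ = _ := by simp [mul_assoc]
    set u := D.t a * (D.t b)⁻¹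
    have e2 : g * (D.t a * D.t a) * g⁻¹ =
        (g * u * g⁻¹) * (g * u * g⁻¹) * (g * (D.t b * D.t b) * g⁻¹) := by
      rw [e1]; simp [mul_assoc]
    have e3 := h g a
    rw [e2, hμ _ _ (by simp [hπ]) (by simp only [map_mul (D.π) _ g⁻¹, map_mul D.π g]; rw [D.π_sq]; simp),
      hμ _ _ (by simp [hπ]) (by simp [hπ]), h g b] at e3
    linarith
  let s : ℕ → G ⧸ N := fun i => if hi : i < n then (D.t ⟨i, hi⟩ : G ⧸ N) else 1
  have hs : ∀ i (hi : i < n), s i = (D.t ⟨i, hi⟩ : G ⧸ N) := fun i hi => by simp [s, hi]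
  have hNk : N ≤ D.π.ker := fun x hx => MonoidHom.mem_ker.mpr hx.1
  let p : G ⧸ N →* Perm (Fin n) := QuotientGroup.lift N D.π hNk
  have hp : ∀ x : G, p (x : G ⧸ N) = D.π x := fun x => rfl
  have hgen : Subgroup.closure {x | ∃ i < n - 1, x = s i} = ⊤ := by
    rw [eq_top_iff]
    have h1 : Subgroup.map (QuotientGroup.mk' N) (Subgroup.closure (Set.range D.t)) = ⊤ := by
      rw [D.gen, ← MonoidHom.range_eq_map, MonoidHom.range_eq_top]
      exact QuotientGroup.mk'_surjective N
    rw [← h1, MonoidHom.map_closure, Subgroup.closure_le]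
    rintro _ ⟨_, ⟨i, rfl⟩, rfl⟩
    by_cases hi : i.1 < n - 1
    · exact Subgroup.subset_closure ⟨i.1, hi, by rw [hs i.1 i.2]; rfl⟩
    · refine Subgroup.subset_closure ⟨n - 2, by omega, ?_⟩
      rw [hs (n - 2) (by omega)]
      have hib : i = b := by simp [b, Fin.ext_iff]; omega
      rw [hib]
      symm
      apply QuotientGroup.eq.mpr
      have h4 := N.inv_mem hu
      have h5 := ‹N.Normal›.conj_mem _ h4 (D.t b)⁻¹
      have h6 := N.inv_mem h5
      have h7 : (D.t a)⁻¹ * D.t b = (D.t b)⁻¹ * (D.t a * (D.t b)⁻¹)⁻¹ * (D.t b)⁻¹⁻¹ := by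
        have hc : Commute (D.t a) (D.t b) := hab
        have h3 : (D.t a)⁻¹ * D.t b = D.t b * (D.t a)⁻¹ := hc.inv_left.eq
        simp only [mul_inv_rev, inv_inv, mul_assoc]
        simp [h3]
      rw [show (⟨n - 2, by omega⟩ : Fin n) = a from rfl, h7]
      exact h5
  intro x hx
  have key := DnR.cox_inj s n p ?_ ?_ ?_ ?_ (n - 1) (by omega) (x : G ⧸ N)
    (by rw [hgen]; trivial) (by rw [hp]; exact hx)
  · have hxN : x ∈ N := (QuotientGroup.eq_one_iff x).mp key
    have := hxN.2 1
    simpa using this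
  · intro i hi
    rw [hs i (by omega)]
    rw [hp, D.π_t, DnR.sw_lt _ _ hi]
  · intro i hi
    rw [hs i (by omega), ← QuotientGroup.mk_mul]
    exact (QuotientGroup.eq_one_iff _).mpr (hsq _)
  · intro i hi
    rw [hs i (by omega), hs (i + 1) (by omega)]
    simp only [← QuotientGroup.mk_mul]
    rw [D.braid]
    · simp [Fin.ext_iff]
    · left; constructor
      · rfl
      · show i + 1 ≤ n - 2
        omega
  · intro i j hij hj
    rw [hs i (by omega), hs j (by omega)]
    simp only [← QuotientGroup.mk_mul]
    rw [D.comm]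
    · simp [Fin.ext_iff]; omega
    · simp only [dnBraid]; omega

/-- The base generator. -/
def t0 : G := D.t ⟨0, by have := D.hn; omega⟩

/-- Conjugates of the base generator. -/
def IsT (y : G) : Prop := ∃ g, y = g * D.t0 * g⁻¹

variable {D}

theorem IsT.conj {y : G} (h : D.IsT y) (g : G) : D.IsT (g * y * g⁻¹) := by
  obtain ⟨k, rfl⟩ := h
  exact ⟨g * k, by simp [mul_assoc]⟩

variable (D)

theorem isT_of_braid {i j : Fin n} (hij : i ≠ j) (h : dnBraid n i j) (hi : D.IsT (D.t i)) :
    D.IsT (D.t j) := by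
  have hb := D.braid i j hij h
  have : D.t j = (D.t i * D.t j) * D.t i * (D.t i * D.t j)⁻¹ := by
    rw [hb]; simp [mul_assoc]
  rw [this]
  exact hi.conj _

theorem isT_t (i : Fin n) : D.IsT (D.t i) := by
  have hn := D.hn
  have h1 : ∀ m, ∀ hm : m ≤ n - 2, D.IsT (D.t ⟨m, by omega⟩) := by
    intro m
    induction m with
    | zero => intro _; exact ⟨1, by simp [t0]⟩
    | succ m ih =>
      intro hm
      refine D.isT_of_braid (i := ⟨m, by omega⟩) ?_ ?_ (ih (by omega))
      · simp [Fin.ext_iff]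
      · exact Or.inl ⟨rfl, hm⟩
  by_cases hi : i.1 ≤ n - 2
  · exact h1 i.1 hi
  · refine D.isT_of_braid (i := ⟨n - 3, by omega⟩) ?_ ?_ (h1 _ (by omega))
    · simp [Fin.ext_iff]; omega
    · exact Or.inr (Or.inr (Or.inl ⟨rfl, by omega⟩))

theorem isT_π {y : G} (h : D.IsT y) : (D.π y).IsSwap := by
  obtain ⟨g, rfl⟩ := h
  simp only [map_mul, map_inv]
  apply DnR.isSwap_conj
  rw [t0, D.π_t]
  exact DnR.sw_isSwap _ _

theorem exists_isT (p : DnR.Swp n) : ∃ y, D.IsT y ∧ D.π y = p.1 := by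
  obtain ⟨x, y, hxy, hp⟩ := p.2
  obtain ⟨a, b, hab, h0⟩ := DnR.sw_isSwap D.hn 0
  obtain ⟨σ, hσ⟩ := isConj_iff.mp (isConj_swap hab hxy)
  obtain ⟨g, rfl⟩ := D.π_surj σ
  refine ⟨g * D.t0 * g⁻¹, ⟨g, rfl⟩, ?_⟩
  rw [map_mul, map_mul, map_inv, hp, ← hσ, ← h0, t0, D.π_t]

/-- A chosen conjugate of the base generator above each transposition. -/
noncomputable def ρ (p : DnR.Swp n) : G := (D.exists_isT p).choose

theorem ρ_isT (p : DnR.Swp n) : D.IsT (D.ρ p) := (D.exists_isT p).choose_spec.1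
theorem ρ_π (p : DnR.Swp n) : D.π (D.ρ p) = p.1 := (D.exists_isT p).choose_spec.2

theorem exists_centralizing (σ : Perm (Fin n)) (hσ : σ * D.π D.t0 = D.π D.t0 * σ) :
    ∃ h, h * D.t0 = D.t0 * h ∧ D.π h = σ := by
  have hn := D.hn
  let C : Subgroup (Perm (Fin n)) := (Subgroup.centralizer {D.t0}).map D.π
  have hC : ∀ τ, τ ∈ C ↔ ∃ h, h * D.t0 = D.t0 * h ∧ D.π h = τ := by
    intro τ
    simp only [C, Subgroup.mem_map, Subgroup.mem_centralizer_singleton_iff]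
  rw [← hC]
  let z : Fin n := ⟨0, by omega⟩
  let o : Fin n := ⟨1, by omega⟩
  have hzo : z ≠ o := by simp [z, o, Fin.ext_iff]
  have h0 : D.π D.t0 = swap z o := by
    rw [t0, D.π_t, DnR.sw_lt _ _ (by simp; omega)]
  have h0C : swap z o ∈ C := by rw [hC]; exact ⟨D.t0, rfl, h0⟩
  have hadj : ∀ i (hi : i + 1 < n), 2 ≤ i → swap (⟨i, by omega⟩ : Fin n) ⟨i + 1, hi⟩ ∈ C := by
    intro i hi h2
    rw [hC]
    refine ⟨D.t ⟨i, by omega⟩, ?_, by rw [D.π_t, DnR.sw_lt]⟩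
    rw [t0]
    apply D.comm
    · simp [Fin.ext_iff]; omega
    · simp only [dnBraid]; omega
  -- permutations fixing 0 and 1
  have hfix : ∀ τ : Perm (Fin n), τ z = z → τ o = o → τ ∈ C := by
    intro τ hz ho
    let S : Set (Perm (Fin n)) :=
      {q | ∃ i, ∃ hi : i + 1 < n, 2 ≤ i ∧ q = swap (⟨i, by omega⟩ : Fin n) ⟨i + 1, hi⟩}
    have hS : ∀ f ∈ S, f.IsSwap := by
      rintro f ⟨i, hi, _, rfl⟩
      exact ⟨_, _, by simp [Fin.ext_iff], rfl⟩
    have hSC : Subgroup.closure S ≤ C := by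
      rw [Subgroup.closure_le]
      rintro f ⟨i, hi, h2, rfl⟩
      exact hadj i hi h2
    apply hSC
    rw [mem_closure_isSwap hS]
    refine ⟨Set.toFinite _, ?_⟩
    have horb : ∀ m, ∀ hm : m + 2 < n, (⟨m + 2, hm⟩ : Fin n) ∈
        MulAction.orbit (Subgroup.closure S) (⟨2, by omega⟩ : Fin n) := by
      intro m
      induction m with
      | zero => intro _; exact MulAction.mem_orbit_self _
      | succ m ih =>
        intro hm
        obtain ⟨c, hc⟩ := ih (by omega)
        refine ⟨⟨swap (⟨m + 2, by omega⟩ : Fin n) ⟨m + 2 + 1, by omega⟩,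
          Subgroup.subset_closure ⟨m + 2, by omega, by omega, rfl⟩⟩ * c, ?_⟩
        simp only [mul_smul]
        simp only at hc
        rw [hc]
        simp only [Subgroup.mk_smul, Perm.smul_def, swap_apply_left]
    have horb2 : ∀ x : Fin n, 2 ≤ x.1 →
        x ∈ MulAction.orbit (Subgroup.closure S) (⟨2, by omega⟩ : Fin n) := by
      intro x hx
      have := horb (x.1 - 2) (by omega)
      convert this using 1
      simp [Fin.ext_iff]; omega
    intro x
    by_cases hx : 2 ≤ x.1
    · have hx' : 2 ≤ (τ x).1 := by
        by_contra hlt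
        have : τ x = z ∨ τ x = o := by simp only [z, o, Fin.ext_iff]; omega
        rcases this with h | h
        · have : x = z := τ.injective (by rw [h, hz])
          rw [this] at hx; simp [z] at hx
        · have : x = o := τ.injective (by rw [h, ho])
          rw [this] at hx; simp [o] at hx
      rw [← MulAction.orbit_eq_iff.mpr (horb2 x hx)] at horb2
      exact horb2 _ hx'
    · have : x = z ∨ x = o := by simp only [z, o, Fin.ext_iff]; omega
      rcases this with rfl | rfl
      · rw [hz]; exact MulAction.mem_orbit_self _
      · rw [ho]; exact MulAction.mem_orbit_self _
  rw [h0] at hσ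
  have hz := congrArg (fun q : Perm (Fin n) => q z) hσ
  have ho := congrArg (fun q : Perm (Fin n) => q o) hσ
  simp only [Perm.mul_apply, swap_apply_left, swap_apply_right] at hz ho
  by_cases h1 : σ z = z
  · apply hfix σ h1
    rw [hz, h1, swap_apply_left]
  · have h2 : σ z = o := by
      by_contra h2
      rw [swap_apply_of_ne_of_ne h1 h2] at hz
      exact hzo (σ.injective hz).symm
    have h3 : swap z o * σ ∈ C := by
      apply hfix
      · simp [h2]
      · rw [Perm.mul_apply, ← ho, h2]
    have := C.mul_mem (C.inv_mem h0C) h3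
    simpa using this

theorem isT_sq {μ : G → ℚ} (hμ : D.Add μ) {y y' : G} (h : D.IsT y) (h' : D.IsT y')
    (he : D.π y = D.π y') : μ (y * y) = μ (y' * y') := by
  obtain ⟨g, rfl⟩ := h
  obtain ⟨g', rfl⟩ := h'
  obtain ⟨c, hc, hcπ⟩ := D.exists_centralizing (D.π (g'⁻¹ * g)) (by
    simp only [map_mul, map_inv] at he ⊢
    have : (D.π g')⁻¹ * (D.π g * D.π D.t0 * (D.π g)⁻¹) * D.π g =
      (D.π g')⁻¹ * (D.π g' * D.π D.t0 * (D.π g')⁻¹) * D.π g := by rw [he]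
    simpa [mul_assoc] using this)
  have hsq : D.π (D.t0 * D.t0) = 1 := D.π_sq _
  let k := g * c⁻¹ * g'⁻¹
  have hk : D.π k = 1 := by
    simp only [k, map_mul, map_inv, hcπ]; simp [mul_assoc]
  have e : g * D.t0 * g⁻¹ * (g * D.t0 * g⁻¹) =
      k * (g' * D.t0 * g'⁻¹ * (g' * D.t0 * g'⁻¹)) * k⁻¹ := by
    have h1 : c * (D.t0 * D.t0) = (D.t0 * D.t0) * c := by
      rw [← mul_assoc, hc, mul_assoc, hc, mul_assoc]
    have h2 : c⁻¹ * (D.t0 * D.t0) * c = D.t0 * D.t0 := by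
      rw [mul_assoc, ← h1]; simp
    calc g * D.t0 * g⁻¹ * (g * D.t0 * g⁻¹) = g * (D.t0 * D.t0) * g⁻¹ := by simp [mul_assoc]
      _ = g * (c⁻¹ * (D.t0 * D.t0) * c) * g⁻¹ := by rw [h2]
      _ = _ := by simp [k, mul_assoc]
  rw [e, hμ.conj hk]
  have : g' * D.t0 * g'⁻¹ * (g' * D.t0 * g'⁻¹) = g' * (D.t0 * D.t0) * g'⁻¹ := by simp [mul_assoc]
  rw [this, map_mul, map_mul, hsq]; simp

theorem π_isT_sq {y : G} (h : D.IsT y) : D.π (y * y) = 1 := by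
  obtain ⟨x, z, _, hy⟩ := D.isT_π h
  rw [map_mul, hy]; simp

/-- An additive function is determined by its values on the squares `ρ p ^ 2`. -/
theorem eq_zero_of_coords {μ : G → ℚ} (hμ : D.Add μ) (h : ∀ p, μ (D.ρ p * D.ρ p) = 0) :
    ∀ x, D.π x = 1 → μ x = 0 := by
  apply D.eq_zero_of_sq hμ
  intro g i
  have h1 : D.IsT (g * D.t i * g⁻¹) := (D.isT_t i).conj g
  have h2 := D.isT_sq hμ h1 (D.ρ_isT ⟨_, D.isT_π h1⟩) (by rw [D.ρ_π])
  rw [h] at h2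
  rw [← h2]; congr 1; simp [mul_assoc]

end DnR.Data

namespace DnR.Data

variable {n : ℕ} {G : Type*} [Group G] (D : DnR.Data n G)

/-- Pairing of the cocycle with a function on transpositions. -/
noncomputable def lam (f : DnR.Swp n → ℚ) (x : G) : ℚ := ∑ p, f p * D.v x p

theorem lam_mul (f : DnR.Swp n → ℚ) (x y : G) :
    D.lam f (x * y) = D.lam f x + D.lam (fun p => f (DnR.cj (D.π x) p)) y := by
  unfold lam
  simp only [D.v_mul, mul_add, Finset.sum_add_distrib]
  congr 1
  rw [← Equiv.sum_comp (DnR.cj (D.π x))]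
  simp

theorem lam_add (f : DnR.Swp n → ℚ) : D.Add (D.lam f) := by
  intro x y hx hy
  rw [lam_mul, hx]; simp

theorem lam_one (f : DnR.Swp n → ℚ) : D.lam f 1 = 0 := (D.lam_add f).one

theorem lam_conj (f : DnR.Swp n → ℚ) (g : G) {x : G} (hx : D.π x = 1) :
    D.lam f (g * x * g⁻¹) = D.lam (fun p => f (DnR.cj (D.π g) p)) x := by
  have h1 := D.lam_mul f g g⁻¹
  rw [mul_inv_cancel, lam_one] at h1
  rw [lam_mul, lam_mul, map_mul, hx, mul_one]
  linarith

theorem lam_const (c : ℚ) (x : G) : D.lam (fun _ => c) x = 0 := by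
  unfold lam; rw [← Finset.mul_sum, D.v_sum, mul_zero]

theorem lam_add_left (f g : DnR.Swp n → ℚ) (x : G) :
    D.lam (f + g) x = D.lam f x + D.lam g x := by
  simp [lam, add_mul, Finset.sum_add_distrib]

theorem lam_smul_left (c : ℚ) (f : DnR.Swp n → ℚ) (x : G) :
    D.lam (c • f) x = c * D.lam f x := by
  simp [lam, mul_assoc, Finset.mul_sum]

/-- Average of a function on transpositions. -/
noncomputable def avg (f : DnR.Swp n → ℚ) : ℚ := (∑ p, f p) / Fintype.card (DnR.Swp n)

theorem lam_t (f : DnR.Swp n → ℚ) (i : Fin n) :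
    D.lam f (D.t i) = f ⟨DnR.sw D.hn i, DnR.sw_isSwap _ _⟩ - avg f := by
  unfold lam avg
  simp only [D.v_t, mul_sub, Finset.sum_sub_distrib]
  congr 1
  · rw [Finset.sum_eq_single ⟨DnR.sw D.hn i, DnR.sw_isSwap _ _⟩]
    · simp
    · intro p _ hp
      rw [if_neg, mul_zero]
      intro h; exact hp (Subtype.ext h)
    · simp
  · rw [← Finset.sum_mul]; ring

theorem avg_comp (f : DnR.Swp n → ℚ) (e : Perm (DnR.Swp n)) : avg (fun p => f (e p)) = avg f := by
  unfold avg; rw [Equiv.sum_comp e]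

theorem lam_sq (f : DnR.Swp n → ℚ) {y : G} (hy : D.IsT y) :
    D.lam f (y * y) = 2 * (f ⟨D.π y, D.isT_π hy⟩ - avg f) := by
  have ht0 : D.IsT D.t0 := D.isT_t _
  have hsq : D.π (D.t0 * D.t0) = 1 := D.π_sq _
  have hy0 := hy
  obtain ⟨g, hg⟩ := hy0
  subst hg
  have e : g * D.t0 * g⁻¹ * (g * D.t0 * g⁻¹) = g * (D.t0 * D.t0) * g⁻¹ := by simp [mul_assoc]
  rw [e, D.lam_conj _ _ hsq, lam_mul]
  have h1 : ∀ f', D.lam f' D.t0 = f' ⟨D.π D.t0, D.isT_π ht0⟩ - avg f' := by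
    intro f'
    have h0 : D.π D.t0 = DnR.sw D.hn 0 := D.π_t _
    have h1 : D.lam f' D.t0 = _ := D.lam_t f' _
    rw [h1]; congr 2; apply Subtype.ext; exact h0.symm
  rw [h1, h1, avg_comp (fun p => f (DnR.cj (D.π g) p)) (DnR.cj (D.π D.t0)),
    avg_comp f (DnR.cj (D.π g))]
  have h2 : DnR.cj (D.π g) ⟨D.π D.t0, D.isT_π ht0⟩ =
      ⟨D.π (g * D.t0 * g⁻¹), D.isT_π hy⟩ := by
    apply Subtype.ext; simp
  have h3 : DnR.cj (D.π D.t0) ⟨D.π D.t0, D.isT_π ht0⟩ =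
      ⟨D.π D.t0, D.isT_π ht0⟩ := by
    apply Subtype.ext; simp
  rw [h3, h2]; ring

theorem lam_ρ_sq (f : DnR.Swp n → ℚ) (p : DnR.Swp n) :
    D.lam f (D.ρ p * D.ρ p) = 2 * (f p - avg f) := by
  rw [D.lam_sq f (D.ρ_isT p)]
  congr 3; apply Subtype.ext; exact D.ρ_π p

theorem lam_int (f : DnR.Swp n → ℤ) (hf : ∑ p, f p = 0) (x : G) :
    ∃ m : ℤ, D.lam (fun p => (f p : ℚ)) x = m := by
  have hx : x ∈ Subgroup.closure (Set.range D.t) := by rw [D.gen]; trivial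
  revert f
  induction hx using Subgroup.closure_induction with
  | mem x hx =>
    intro f hf
    obtain ⟨i, rfl⟩ := hx
    refine ⟨f ⟨DnR.sw D.hn i, DnR.sw_isSwap _ _⟩, ?_⟩
    rw [lam_t]
    have : avg (fun p => (f p : ℚ)) = 0 := by
      unfold avg; rw [← Int.cast_sum, hf]; simp
    rw [this, sub_zero]
  | one => intro f hf; exact ⟨0, by rw [lam_one]; simp⟩
  | mul x y _ _ hx hy =>
    intro f hf
    obtain ⟨a, ha⟩ := hx f hf
    obtain ⟨b, hb⟩ := hy (fun p => f (DnR.cj (D.π x) p)) (by rw [Equiv.sum_comp, hf])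
    exact ⟨a + b, by rw [lam_mul, ha, hb]; simp⟩
  | inv x _ hx =>
    intro f hf
    obtain ⟨b, hb⟩ := hx (fun p => f (DnR.cj (D.π x)⁻¹ p))
      (by rw [Equiv.sum_comp (DnR.cj (D.π x)⁻¹), hf])
    refine ⟨-b, ?_⟩
    have := D.lam_mul (fun p => (f p : ℚ)) x⁻¹ x
    rw [inv_mul_cancel, lam_one, map_inv, hb] at this
    push_cast; linarith

theorem eq_avg_of_lam (f : DnR.Swp n → ℚ) (h : ∀ x, D.π x = 1 → D.lam f x = 0) (p : DnR.Swp n) :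
    f p = avg f := by
  have := h _ (D.π_isT_sq (D.ρ_isT p))
  rw [lam_ρ_sq] at this; linarith

end DnR.Data

/-! ### Automorphisms preserving the kernel send transpositions to transpositions -/

theorem DnR.trace_funLeft {P : Type*} [Fintype P] [DecidableEq P] (e : Perm P) :
    LinearMap.trace ℚ (P → ℚ) (LinearMap.funLeft ℚ ℚ e) =
      ((Finset.univ.filter fun p => e p = p).card : ℚ) := by
  rw [LinearMap.trace_eq_matrix_trace ℚ (Pi.basisFun ℚ P), Matrix.trace, Finset.card_filter]
  push_cast
  apply Finset.sum_congr rfl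
  intro p _
  simp [LinearMap.toMatrix_apply, LinearMap.funLeft_apply, Pi.single_apply]

theorem DnR.two_mul_fix {n : ℕ} (γ : Perm (Fin n)) (hγ : γ * γ = 1) :
    2 * (Finset.univ.filter fun p : DnR.Swp n => DnR.cj γ p = p).card =
      (Finset.univ.filter fun x => γ x = x).offDiag.card +
        (Finset.univ.filter fun x => γ x ≠ x).card := by
  have hγ2 : ∀ x, γ (γ x) = x := fun x => by rw [← Perm.mul_apply, hγ]; rfl
  have h1 : ((Finset.univ : Finset (Fin n × Fin n)).filter
      fun q => q.1 ≠ q.2 ∧ swap (γ q.1) (γ q.2) = swap q.1 q.2).card =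
      2 * (Finset.univ.filter fun p : DnR.Swp n => DnR.cj γ p = p).card := by
    rw [mul_comm, ← smul_eq_mul, ← Finset.sum_const]
    rw [Finset.card_eq_sum_card_fiberwise (f := fun q : Fin n × Fin n => swap q.1 q.2)
      (t := (Finset.univ.filter fun p : DnR.Swp n => DnR.cj γ p = p).map ⟨_, Subtype.val_injective⟩)]
    · rw [Finset.sum_map]
      apply Finset.sum_congr rfl
      rintro ⟨p, hp⟩ hpm
      obtain ⟨a, b, hab, rfl⟩ := hp
      have hpm' : swap (γ a) (γ b) = swap a b := by
        simp only [Finset.mem_filter, Finset.mem_univ, true_and, Subtype.ext_iff, DnR.cj_coe] at hpm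
        rw [swap_apply_apply]; exact hpm
      have : (Finset.filter (fun q : Fin n × Fin n => swap q.1 q.2 = swap a b)
          (Finset.univ.filter fun q => q.1 ≠ q.2 ∧ swap (γ q.1) (γ q.2) = swap q.1 q.2)) =
          {(a, b), (b, a)} := by
        ext ⟨x, y⟩
        simp only [Finset.mem_filter, Finset.mem_univ, true_and, Finset.mem_insert,
          Finset.mem_singleton, Prod.mk.injEq]
        constructor
        · rintro ⟨⟨hxy, _⟩, h⟩
          have h2 : swap a b x = y := by rw [← h]; simp
          by_cases hxa : x = a
          · left; subst hxa; simp at h2; exact ⟨rfl, h2.symm⟩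
          · by_cases hxb : x = b
            · right; subst hxb; simp at h2; exact ⟨rfl, h2.symm⟩
            · rw [swap_apply_of_ne_of_ne hxa hxb] at h2; exact absurd h2 hxy
        · rintro (⟨rfl, rfl⟩ | ⟨rfl, rfl⟩)
          · exact ⟨⟨hab, hpm'⟩, rfl⟩
          · refine ⟨⟨hab.symm, ?_⟩, swap_comm _ _⟩
            rw [swap_comm, hpm', swap_comm]
      show (Finset.filter (fun q : Fin n × Fin n => swap q.1 q.2 = swap a b)
          (Finset.univ.filter fun q => q.1 ≠ q.2 ∧ swap (γ q.1) (γ q.2) = swap q.1 q.2)).card = 2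
      rw [this, Finset.card_pair]
      simp [hab]
    · rintro ⟨x, y⟩ h
      simp only [Finset.coe_filter, Finset.mem_univ, true_and, Set.mem_setOf_eq] at h
      simp only [Finset.coe_map, Set.mem_image, Finset.coe_filter, Finset.mem_univ, true_and,
        Set.mem_setOf_eq]
      refine ⟨⟨swap x y, x, y, h.1, rfl⟩, ?_, rfl⟩
      apply Subtype.ext
      show γ * swap x y * γ⁻¹ = swap x y
      rw [← swap_apply_apply, h.2]
  rw [← h1]
  have h2 : (Finset.univ.filter fun x => γ x ≠ x).card =
      ((Finset.univ.filter fun x => γ x ≠ x).image fun x => (x, γ x)).card := by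
    rw [Finset.card_image_of_injective]
    intro x y h; exact (Prod.mk.inj h).1
  rw [h2, ← Finset.card_union_of_disjoint]
  · congr 1
    ext ⟨x, y⟩
    simp only [Finset.mem_filter, Finset.mem_univ, true_and, Finset.mem_union, Finset.mem_offDiag,
      Finset.mem_image, Prod.mk.injEq]
    constructor
    · rintro ⟨hxy, h⟩
      have h3 : swap x y (γ x) = γ y := by rw [← h]; simp
      by_cases hx : γ x = x
      · rw [hx, swap_apply_left] at h3
        exact Or.inl ⟨hx, h3.symm, hxy⟩
      · by_cases hy : γ x = y
        · exact Or.inr ⟨x, hx, rfl, hy⟩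
        · rw [swap_apply_of_ne_of_ne hx hy] at h3
          exact absurd (γ.injective h3) hxy
    · rintro (⟨hx, hy, hxy⟩ | ⟨z, hz, rfl, rfl⟩)
      · exact ⟨hxy, by rw [hx, hy]⟩
      · exact ⟨fun h => hz h.symm, by rw [hγ2, swap_comm]⟩
  · rw [Finset.disjoint_left]
    rintro ⟨x, y⟩ h h'
    simp only [Finset.mem_filter, Finset.mem_univ, true_and, Finset.mem_offDiag,
      Finset.mem_image, Prod.mk.injEq] at h h'
    obtain ⟨z, hz, rfl, _⟩ := h'
    exact hz h.1

theorem DnR.isSwap_of_fix {n : ℕ} (hn : 6 ≤ n) (s γ : Perm (Fin n)) (hs : s.IsSwap)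
    (hγ : γ * γ = 1)
    (h : (Finset.univ.filter fun p : DnR.Swp n => DnR.cj γ p = p).card =
      (Finset.univ.filter fun p : DnR.Swp n => DnR.cj s p = p).card) : γ.IsSwap := by
  have hs2 : s * s = 1 := by obtain ⟨x, y, _, rfl⟩ := hs; simp
  have e1 := DnR.two_mul_fix γ hγ
  have e2 := DnR.two_mul_fix s hs2
  rw [h, e2] at e1
  have a1 : ∀ σ : Perm (Fin n), (Finset.univ.filter fun x => σ x ≠ x).card = σ.support.card := by
    intro σ; congr 1
  have a2 : ∀ σ : Perm (Fin n), (Finset.univ.filter fun x => σ x = x).card + σ.support.card = n := by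
    intro σ
    rw [← a1, Finset.card_filter_add_card_filter_not]; simp
  rw [a1, a1, Finset.offDiag_card, Finset.offDiag_card, card_support_eq_two.mpr hs] at e1
  have b1 := a2 s
  have b2 := a2 γ
  rw [card_support_eq_two.mpr hs] at b1
  rw [← card_support_eq_two]
  generalize (Finset.univ.filter fun x => s x = x).card = A at *
  generalize (Finset.univ.filter fun x => γ x = x).card = B at *
  generalize γ.support.card = C at *
  have c1 : A ≤ A * A := Nat.le_mul_self A
  have c2 : B ≤ B * B := Nat.le_mul_self B
  zify [c1, c2] at e1 b1 b2 hn ⊢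
  have hA : (A : ℤ) = n - 2 := by linarith
  have hB : (B : ℤ) = n - C := by linarith
  rw [hA, hB] at e1
  have hC : (C : ℤ) ≤ n := by have := Int.natCast_nonneg B; linarith
  have : ((C : ℤ) - 2) * (2 * n - 4 - C) = 0 := by nlinarith
  rcases mul_eq_zero.mp this with h | h
  · linarith
  · linarith

namespace DnR.Data

variable {n : ℕ} {G : Type*} [Group G] (D : DnR.Data n G)

theorem ρ_cj {μ : G → ℚ} (hμ : D.Add μ) (g : G) (p : DnR.Swp n) :
    μ (D.ρ (DnR.cj (D.π g) p) * D.ρ (DnR.cj (D.π g) p)) = μ (g * (D.ρ p * D.ρ p) * g⁻¹) := by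
  rw [D.isT_sq hμ (D.ρ_isT _) ((D.ρ_isT p).conj g)]
  · congr 1; simp [mul_assoc]
  · simp [D.ρ_π]

/-- All functions on transpositions invariant under conjugation are constant. -/
theorem const_of_inv {n : ℕ} (f : DnR.Swp n → ℚ) (h : ∀ τ p, f (DnR.cj τ p) = f p)
    (p q : DnR.Swp n) : f p = f q := by
  obtain ⟨a, b, hab, hp⟩ := p.2
  obtain ⟨c, d, hcd, hq⟩ := q.2
  obtain ⟨σ, hσ⟩ := isConj_iff.mp (isConj_swap hab hcd)
  rw [← h σ p]; congr 1; apply Subtype.ext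
  rw [DnR.cj_coe, hp, hq, hσ]

theorem lam_ψ_add {ψ : G ≃* G} (hψ : ∀ x, D.π (ψ x) = 1 ↔ D.π x = 1) (f : DnR.Swp n → ℚ) :
    D.Add (fun x => D.lam f (ψ x)) := by
  intro x y hx hy
  simp only [map_mul]
  exact D.lam_add f _ _ ((hψ x).mpr hx) ((hψ y).mpr hy)

theorem lam_eq_zero_of_ψ {ψ : G ≃* G} (hψ : ∀ x, D.π (ψ x) = 1 ↔ D.π x = 1) (f : DnR.Swp n → ℚ)
    (h : ∀ p, D.lam f (ψ (D.ρ p * D.ρ p)) = 0) : ∀ x, D.π x = 1 → D.lam f x = 0 := by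
  intro x hx
  have := D.eq_zero_of_coords (D.lam_ψ_add hψ f) h (ψ.symm x) (by rw [← hψ]; simpa using hx)
  simpa using this

/-- The operator comparing the two actions. -/
noncomputable def Tt (ψ : G ≃* G) : (DnR.Swp n → ℚ) →ₗ[ℚ] (DnR.Swp n → ℚ) where
  toFun f := fun p => D.lam f (ψ (D.ρ p * D.ρ p)) + avg f
  map_add' f g := by
    ext p
    simp only [lam_add_left, Pi.add_apply, avg, Finset.sum_add_distrib]; ring
  map_smul' c f := by
    ext p
    simp only [lam_smul_left, Pi.smul_apply, avg, smul_eq_mul, ← Finset.mul_sum, RingHom.id_apply]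
    ring

theorem Tt_apply (ψ : G ≃* G) (f : DnR.Swp n → ℚ) (p : DnR.Swp n) :
    D.Tt ψ f p = D.lam f (ψ (D.ρ p * D.ρ p)) + avg f := rfl

theorem Tt_equiv {ψ : G ≃* G} (hψ : ∀ x, D.π (ψ x) = 1 ↔ D.π x = 1) (g : G) (f : DnR.Swp n → ℚ)
    (p : DnR.Swp n) :
    D.Tt ψ f (DnR.cj (D.π g) p) = D.Tt ψ (fun q => f (DnR.cj (D.π (ψ g)) q)) p := by
  rw [Tt_apply, Tt_apply, avg_comp, D.ρ_cj (D.lam_ψ_add hψ f)]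
  congr 1
  show D.lam f (ψ (g * (D.ρ p * D.ρ p) * g⁻¹)) = _
  rw [map_mul, map_mul, map_inv, D.lam_conj _ _ ((hψ _).mpr (D.π_isT_sq (D.ρ_isT p)))]

theorem Tt_inj {ψ : G ≃* G} (hψ : ∀ x, D.π (ψ x) = 1 ↔ D.π x = 1) :
    Function.Injective (D.Tt ψ) := by
  rw [injective_iff_map_eq_zero]
  intro f hf
  have h1 : ∀ g p, f (DnR.cj (D.π (ψ g)) p) = f p := by
    intro g p
    set F : DnR.Swp n → ℚ := (fun q => f (DnR.cj (D.π (ψ g)) q)) + (-1 : ℚ) • f with hF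
    have havg : avg F = 0 := by
      have := avg_comp f (DnR.cj (D.π (ψ g)))
      simp only [avg] at this ⊢
      simp only [hF, Pi.add_apply, Pi.smul_apply, smul_eq_mul, Finset.sum_add_distrib,
        ← Finset.mul_sum]
      rw [add_div, this]; ring
    have hT : D.Tt ψ F = 0 := by
      rw [hF, map_add, map_smul, hf, smul_zero, add_zero]
      ext q
      rw [← D.Tt_equiv hψ, hf]; rfl
    have h2 := D.lam_eq_zero_of_ψ hψ F (fun q => by
      have := congrFun hT q
      rw [Tt_apply, havg] at this; simpa using this)
    have h3 := D.eq_avg_of_lam F h2 p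
    rw [havg, hF] at h3
    simp at h3; linarith
  have h2 : ∀ τ p, f (DnR.cj τ p) = f p := by
    intro τ p
    obtain ⟨x, rfl⟩ := D.π_surj τ
    have := h1 (ψ.symm x) p
    simpa using this
  ext p
  have h3 : f = fun _ => f p := by ext q; exact const_of_inv f h2 q p
  have h4 : ∀ x, D.lam f x = 0 := by intro x; rw [h3]; exact D.lam_const _ _
  have h5 := congrFun hf p
  rw [Tt_apply, h4, zero_add] at h5
  rw [D.eq_avg_of_lam f (fun x _ => h4 x) p, h5]

theorem ψ_swap {ψ : G ≃* G} (hψ : ∀ x, D.π (ψ x) = 1 ↔ D.π x = 1) (g : G)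
    (hg : (D.π g).IsSwap) : (D.π (ψ g)).IsSwap := by
  classical
  have hgg : D.π (g * g) = 1 := by obtain ⟨x, y, _, h⟩ := hg; rw [map_mul, h]; simp
  have hgg2 := (hψ _).mpr hgg
  refine DnR.isSwap_of_fix D.hn (D.π g) _ hg (by simpa using hgg2) ?_
  let E := LinearEquiv.ofInjectiveEndo (D.Tt ψ) (D.Tt_inj hψ)
  have hE : E.conj (LinearMap.funLeft ℚ ℚ (DnR.cj (D.π (ψ g)))) =
      LinearMap.funLeft ℚ ℚ (DnR.cj (D.π g)) := by
    apply LinearMap.ext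
    intro f
    obtain ⟨f, rfl⟩ := E.surjective f
    rw [LinearEquiv.conj_apply_apply, LinearEquiv.symm_apply_apply]
    ext p
    exact (D.Tt_equiv hψ g f p).symm
  have h1 := LinearMap.trace_conj' (LinearMap.funLeft ℚ ℚ (DnR.cj (D.π (ψ g)))) E
  rw [hE, DnR.trace_funLeft, DnR.trace_funLeft] at h1
  exact_mod_cast h1.symm

end DnR.Data

/-! ### The weight `f1` and its behaviour under automorphisms preserving the kernel -/

/-- The difference of the degrees of a transposition at two points. -/
def DnR.f1 {n : ℕ} (z o : Fin n) (p : DnR.Swp n) : ℤ :=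
  (if p.1 z = z then 0 else 1) - (if p.1 o = o then 0 else 1)

theorem DnR.f1_cj {n : ℕ} (z o : Fin n) (σ : Perm (Fin n)) (p : DnR.Swp n) :
    DnR.f1 z o (DnR.cj σ p) = DnR.f1 (σ⁻¹ z) (σ⁻¹ o) p := by
  have h : ∀ x, (DnR.cj σ p).1 x = x ↔ p.1 (σ⁻¹ x) = σ⁻¹ x := by
    intro x
    rw [DnR.cj_coe, Perm.mul_apply, Perm.mul_apply]
    exact Perm.eq_inv_iff_eq.symm
  simp only [DnR.f1, h]

theorem DnR.f1_symm {n : ℕ} (z o : Fin n) (p : DnR.Swp n) : DnR.f1 o z p = - DnR.f1 z o p := by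
  simp [DnR.f1]

theorem DnR.f1_sum {n : ℕ} (z o : Fin n) : ∑ p, DnR.f1 z o p = 0 := by
  have h := Equiv.sum_comp (DnR.cj (swap z o)) (DnR.f1 z o)
  simp only [DnR.f1_cj, swap_inv, swap_apply_left, swap_apply_right, DnR.f1_symm z o,
    Finset.sum_neg_distrib] at h
  omega

theorem DnR.avg_f1 {n : ℕ} (z o : Fin n) : DnR.Data.avg (fun p => (DnR.f1 z o p : ℚ)) = 0 := by
  unfold DnR.Data.avg; rw [← Int.cast_sum, DnR.f1_sum]; simp

theorem DnR.isSwap_eq {n : ℕ} {τ : Perm (Fin n)} (h : τ.IsSwap) {x : Fin n} (hx : τ x ≠ x) :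
    τ = swap x (τ x) := by
  obtain ⟨a, b, hab, rfl⟩ := h
  by_cases hxa : x = a
  · subst hxa; simp
  · by_cases hxb : x = b
    · subst hxb; simp [swap_comm]
    · exact absurd (swap_apply_of_ne_of_ne hxa hxb) hx

theorem DnR.eq_f1 {n : ℕ} {z o w : Fin n} (hzo : z ≠ o) (hzw : z ≠ w) (how : o ≠ w)
    (h : DnR.Swp n → ℚ) (h1 : ∀ p, h (DnR.cj (swap z o) p) = - h p)
    (h2 : ∀ x y, x ≠ y → x ≠ z → x ≠ o → y ≠ z → y ≠ o → ∀ p, h (DnR.cj (swap x y) p) = h p)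
    (p : DnR.Swp n) : h p = h ⟨swap z w, z, w, hzw, rfl⟩ * DnR.f1 z o p := by
  have hz : ∀ p : DnR.Swp n, p.1 z ≠ z → p.1 o = o →
      h p = h ⟨swap z w, z, w, hzw, rfl⟩ := by
    intro p hpz hpo
    have hp := DnR.isSwap_eq p.2 hpz
    by_cases hw : p.1 z = w
    · congr 1; apply Subtype.ext; rw [hp, hw]
    · have hjo : p.1 z ≠ o := by
        intro hh; apply hzo; apply p.1.injective; rw [hh, hpo]
      rw [← h2 w (p.1 z) (Ne.symm hw) hzw.symm how.symm hpz hjo ⟨swap z w, z, w, hzw, rfl⟩]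
      congr 1; apply Subtype.ext
      rw [DnR.cj_coe]
      show p.1 = swap w (p.1 z) * swap z w * (swap w (p.1 z))⁻¹
      rw [← swap_apply_apply, swap_apply_left, swap_apply_of_ne_of_ne hzw hpz.symm]
      exact hp
  by_cases hpz : p.1 z = z
  · by_cases hpo : p.1 o = o
    · have : DnR.cj (swap z o) p = p := by
        apply Subtype.ext
        rw [DnR.cj_coe, mul_inv_eq_iff_eq_mul]
        have := swap_apply_apply p.1 z o
        rw [hpz, hpo] at this
        rw [eq_mul_inv_iff_mul_eq] at this
        exact this
      have h3 := h1 p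
      rw [this] at h3
      have : h p = 0 := by linarith
      rw [this]; simp [DnR.f1, hpz, hpo]
    · have h3 := h1 p
      have h4 := hz (DnR.cj (swap z o) p)
        (by rw [DnR.cj_coe, swap_inv, Perm.mul_apply, Perm.mul_apply, swap_apply_left]
            intro hh
            apply hpo
            apply (swap z o).injective
            rw [hh]; simp)
        (by rw [DnR.cj_coe, swap_inv, Perm.mul_apply, Perm.mul_apply, swap_apply_right, hpz,
              swap_apply_left])
      rw [← h4, h3]; simp [DnR.f1, hpz, hpo]
  · by_cases hpo : p.1 o = o
    · rw [hz p hpz hpo]; simp [DnR.f1, hpz, hpo]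
    · have hzz : p.1 z = o := by
        by_contra hh
        have hp := DnR.isSwap_eq p.2 hpz
        apply hpo
        rw [hp, swap_apply_of_ne_of_ne hzo.symm (Ne.symm hh)]
      have hp := DnR.isSwap_eq p.2 hpz
      rw [hzz] at hp
      have : DnR.cj (swap z o) p = p := by
        apply Subtype.ext
        rw [DnR.cj_coe, hp]; simp
      have h3 := h1 p
      rw [this] at h3
      have : h p = 0 := by linarith
      rw [this]; simp [DnR.f1, hpz, hpo]

namespace DnR.Data

variable {n : ℕ} {G : Type*} [Group G] (D : DnR.Data n G)

/-- The additive function attached to `f1`. -/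
noncomputable def L1 (z o : Fin n) (x : G) : ℚ := D.lam (fun p => (DnR.f1 z o p : ℚ)) x

theorem L1_add (z o : Fin n) : D.Add (D.L1 z o) := D.lam_add _

theorem L1_conj (z o : Fin n) (g : G) {x : G} (hx : D.π x = 1) :
    D.L1 z o (g * x * g⁻¹) = D.L1 ((D.π g)⁻¹ z) ((D.π g)⁻¹ o) x := by
  unfold L1
  rw [D.lam_conj _ _ hx]; simp only [DnR.f1_cj]

theorem L1_symm (z o : Fin n) (x : G) : D.L1 o z x = - D.L1 z o x := by
  unfold L1
  have : (fun p => (DnR.f1 o z p : ℚ)) = (-1 : ℚ) • fun p => (DnR.f1 z o p : ℚ) := by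
    ext p; rw [DnR.f1_symm]; simp
  rw [this, lam_smul_left]; ring

theorem L1_int (z o : Fin n) (x : G) : ∃ m : ℤ, D.L1 z o x = m := D.lam_int _ (DnR.f1_sum z o) x

theorem L1_ρ (z o : Fin n) (p : DnR.Swp n) : D.L1 z o (D.ρ p * D.ρ p) = 2 * DnR.f1 z o p := by
  unfold L1; rw [lam_ρ_sq, DnR.avg_f1, sub_zero]

/-- Proportionality of `L1 ∘ ψ` and `L1` for normalized `ψ`. -/
theorem L1_prop {z o w : Fin n} (hzo : z ≠ o) (hzw : z ≠ w) (how : o ≠ w) {ψ : G ≃* G}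
    (hψ : ∀ x, D.π (ψ x) = 1 ↔ D.π x = 1) {g0 : G} (hg0 : D.π g0 = swap z o)
    (hg1 : D.π (ψ g0) = swap z o) : ∃ q : ℚ, ∀ x, D.π x = 1 → D.L1 z o (ψ x) = q * D.L1 z o x := by
  have hA : D.Add (fun x => D.L1 z o (ψ x)) := D.lam_ψ_add hψ _
  have hcj : ∀ g p, D.L1 z o (ψ (D.ρ (DnR.cj (D.π g) p) * D.ρ (DnR.cj (D.π g) p))) =
      D.L1 ((D.π (ψ g))⁻¹ z) ((D.π (ψ g))⁻¹ o) (ψ (D.ρ p * D.ρ p)) := by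
    intro g p
    have := D.ρ_cj hA g p
    rw [this, map_mul, map_mul, map_inv, D.L1_conj _ _ _ ((hψ _).mpr (D.π_isT_sq (D.ρ_isT p)))]
  have key := DnR.eq_f1 hzo hzw how (fun p => D.L1 z o (ψ (D.ρ p * D.ρ p))) ?_ ?_
  · set c := D.L1 z o (ψ (D.ρ ⟨swap z w, z, w, hzw, rfl⟩ * D.ρ ⟨swap z w, z, w, hzw, rfl⟩)) with hc
    refine ⟨c / 2, fun x hx => ?_⟩
    have h0 := D.eq_zero_of_coords (μ := fun x => D.L1 z o (ψ x) - c / 2 * D.L1 z o x) ?_ ?_ x hx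
    · linarith
    · intro x y hx hy
      have h1 := hA x y hx hy
      have h2 := D.L1_add z o x y hx hy
      beta_reduce at h1 ⊢
      rw [h1, h2]; ring
    · intro p
      have := key p
      rw [this, D.L1_ρ]; ring
  · intro p
    have := hcj g0 p
    rw [hg0, hg1] at this
    rw [this, swap_inv, swap_apply_left, swap_apply_right, L1_symm]
  · intro x y hxy hxz hxo hyz hyo p
    obtain ⟨g, hg⟩ := D.π_surj (swap x y)
    have hsw := D.ψ_swap hψ g (by rw [hg]; exact ⟨x, y, hxy, rfl⟩)
    have hcomm : D.π (ψ g) * swap z o = swap z o * D.π (ψ g) := by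
      have h1 : D.π (g * g0 * g⁻¹ * g0⁻¹) = 1 := by
        simp only [map_mul, map_inv, hg, hg0]
        rw [← swap_apply_apply, swap_apply_of_ne_of_ne hxz.symm hyz.symm,
          swap_apply_of_ne_of_ne hxo.symm hyo.symm, mul_inv_cancel]
      have h2 := (hψ _).mpr h1
      simp only [map_mul, map_inv, hg1] at h2
      rw [mul_inv_eq_one, mul_inv_eq_iff_eq_mul] at h2
      exact h2
    have hne : D.π (ψ g) ≠ swap z o := by
      intro h
      have h1 : D.π (ψ (g * g0⁻¹)) = 1 := by simp [h, hg1]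
      have h2 := (hψ _).mp h1
      rw [map_mul, map_inv, hg, hg0, mul_inv_eq_one] at h2
      have h3 := congrArg (fun q : Perm (Fin n) => q z) h2
      simp only [swap_apply_left] at h3
      rw [swap_apply_of_ne_of_ne hxz.symm hyz.symm] at h3
      exact hzo h3
    set τ := D.π (ψ g) with hτ
    have e1 : τ o = swap z o (τ z) := by
      have := congrArg (fun q : Perm (Fin n) => q z) hcomm
      simpa using this
    have hτz : τ z = z := by
      by_contra hh
      have h4 := DnR.isSwap_eq hsw hh
      by_cases h5 : τ z = o
      · rw [h5] at h4; exact hne h4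
      · rw [swap_apply_of_ne_of_ne hh h5] at e1
        exact hzo (τ.injective e1).symm
    have hτo : τ o = o := by rw [e1, hτz, swap_apply_left]
    have := hcj g p
    rw [hg, ← hτ] at this
    rw [this, Perm.inv_eq_iff_eq.mpr hτz.symm, Perm.inv_eq_iff_eq.mpr hτo.symm]

theorem q_abs {z o w : Fin n} (hzo : z ≠ o) (hzw : z ≠ w) (how : o ≠ w) {ψ : G ≃* G}
    (hψ : ∀ x, D.π (ψ x) = 1 ↔ D.π x = 1) {q : ℚ}
    (hq : ∀ x, D.π x = 1 → D.L1 z o (ψ x) = q * D.L1 z o x) : |q| = 1 := by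
  classical
  have hex : ∃ m : ℕ, 0 < m ∧ ∃ x, D.π x = 1 ∧ |D.L1 z o x| = m := by
    let p : DnR.Swp n := ⟨swap z w, z, w, hzw, rfl⟩
    refine ⟨2, by norm_num, D.ρ p * D.ρ p, D.π_isT_sq (D.ρ_isT p), ?_⟩
    rw [L1_ρ]
    have : DnR.f1 z o p = 1 := by
      simp only [DnR.f1, p, swap_apply_left, swap_apply_of_ne_of_ne hzo.symm how]
      simp [hzw.symm]
    rw [this]; norm_num
  have habs : ∀ x, ∃ m : ℕ, |D.L1 z o x| = m := by
    intro x
    obtain ⟨m, hm⟩ := D.L1_int z o x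
    exact ⟨m.natAbs, by rw [hm, Nat.cast_natAbs]; simp⟩
  obtain ⟨hm0, x0, hx0, hx0m⟩ := Nat.find_spec hex
  set m0 := Nat.find hex with hm0def
  have hmin : ∀ x, D.π x = 1 → D.L1 z o x ≠ 0 → (m0 : ℚ) ≤ |D.L1 z o x| := by
    intro x hx hx0
    obtain ⟨m, hm⟩ := habs x
    rw [hm]
    have : m0 ≤ m := Nat.find_min' hex ⟨by
      rcases Nat.eq_zero_or_pos m with h | h
      · rw [h] at hm; simp at hm; exact absurd hm hx0
      · exact h, x, hx, hm⟩
    exact_mod_cast this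
  have hm0q : (0 : ℚ) < m0 := by exact_mod_cast hm0
  have hx1 : D.π (ψ.symm x0) = 1 := by rw [← hψ]; simpa using hx0
  have e1 := hq _ hx1
  rw [MulEquiv.apply_symm_apply] at e1
  have e1a := congrArg abs e1
  rw [abs_mul, hx0m] at e1a
  have hne1 : D.L1 z o (ψ.symm x0) ≠ 0 := by
    intro h; rw [h] at e1a; simp at e1a; omega
  have hqne : q ≠ 0 := by
    intro h; rw [h] at e1a; simp at e1a; omega
  have e2 := congrArg abs (hq _ hx0)
  rw [abs_mul, hx0m] at e2
  have hx0ne : D.L1 z o x0 ≠ 0 := by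
    intro h; rw [h, abs_zero] at hx0m; linarith
  have i1 := hmin _ ((hψ _).mpr hx0) (by rw [hq _ hx0]; exact mul_ne_zero hqne hx0ne)
  have i2 := hmin _ hx1 hne1
  rw [e2] at i1
  have qpos : 0 < |q| := abs_pos.mpr hqne
  apply le_antisymm
  · by_contra h
    push Not at h
    nlinarith
  · by_contra h
    push Not at h
    nlinarith

theorem exists_even {z o w u : Fin n} (hzo : z ≠ o) (hzw : z ≠ w) (how : o ≠ w)
    (hzu : z ≠ u) (hou : o ≠ u) (hwu : w ≠ u) {ψ : G ≃* G}
    (hψ : ∀ x, D.π (ψ x) = 1 ↔ D.π x = 1) :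
    ∃ a ∈ alternatingGroup (Fin n), ∀ g, D.π g = a → ∀ x, D.π x = 1 →
      D.L1 z o (g * ψ x * g⁻¹) = D.L1 z o x := by
  obtain ⟨g0, hg0⟩ := D.π_surj (swap z o)
  obtain ⟨c, d, hcd, hs⟩ := D.ψ_swap hψ g0 (by rw [hg0]; exact ⟨z, o, hzo, rfl⟩)
  have ha1 : ∃ a1 ∈ alternatingGroup (Fin n), a1 * D.π (ψ g0) * a1⁻¹ = swap z o := by
    obtain ⟨σ, hσ⟩ := isConj_iff.mp (isConj_swap hcd hzo)
    rw [← hs] at hσ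
    rcases Int.units_eq_one_or (sign σ) with h | h
    · exact ⟨σ, mem_alternatingGroup.mpr h, hσ⟩
    · refine ⟨swap z o * σ, mem_alternatingGroup.mpr (by rw [map_mul, h, sign_swap hzo]; rfl), ?_⟩
      have : swap z o * σ * D.π (ψ g0) * (swap z o * σ)⁻¹ =
          swap z o * (σ * D.π (ψ g0) * σ⁻¹) * (swap z o)⁻¹ := by
        simp only [mul_inv_rev, mul_assoc]
      rw [this, hσ]; simp
  obtain ⟨a1, ha1, ha1c⟩ := ha1
  obtain ⟨g1, hg1⟩ := D.π_surj a1
  let ψ' : G ≃* G := ψ.trans (MulAut.conj g1)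
  have hψconj : ∀ x, ψ' x = g1 * ψ x * g1⁻¹ := fun x => rfl
  have hψ' : ∀ x, D.π (ψ' x) = 1 ↔ D.π x = 1 := by
    intro x
    rw [hψconj, ← hψ x]
    simp only [map_mul, map_inv]
    rw [conj_eq_one_iff]
  obtain ⟨q, hq⟩ := D.L1_prop hzo hzw how hψ' hg0 (by
    rw [hψconj]; simp only [map_mul, map_inv]; rw [hg1]; exact ha1c)
  have hq1 := D.q_abs hzo hzw how hψ' hq
  have hval : ∀ x, D.π x = 1 → D.L1 (a1⁻¹ z) (a1⁻¹ o) (ψ x) = q * D.L1 z o x := by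
    intro x hx
    rw [← hq x hx, hψconj, D.L1_conj _ _ _ ((hψ x).mpr hx), hg1]
  rcases (abs_eq (by norm_num : (0 : ℚ) ≤ 1)).mp hq1 with h | h
  · refine ⟨a1, ha1, fun g hg x hx => ?_⟩
    rw [D.L1_conj _ _ _ ((hψ x).mpr hx), hg, hval x hx, h, one_mul]
  · refine ⟨swap z o * swap w u * a1, mul_mem ?_ ha1, fun g hg x hx => ?_⟩
    · rw [mem_alternatingGroup, map_mul, sign_swap hzo, sign_swap hwu]; rfl
    · rw [D.L1_conj _ _ _ ((hψ x).mpr hx), hg]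
      simp only [mul_inv_rev, swap_inv, Perm.mul_apply, swap_apply_left, swap_apply_right]
      rw [swap_apply_of_ne_of_ne hzw hzu, swap_apply_of_ne_of_ne how hou, L1_symm, hval x hx, h]
      ring

end DnR.Data

/-! ### The orbit argument -/

namespace DnR.Data

variable {n : ℕ} {G : Type*} [Group G] (D : DnR.Data n G)

theorem exists_period (φ : MulAut G) : ∃ M, 0 < M ∧ ∀ x, D.π ((φ ^ M) x) = D.π x := by
  obtain ⟨i, j, hij, h⟩ := Finite.exists_ne_map_eq_of_infinite
    (fun i : ℕ => fun s : Fin n => D.π ((φ ^ i) (D.t s)))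
  wlog hlt : i < j generalizing i j
  · exact this j i hij.symm h.symm (by omega)
  refine ⟨j - i, by omega, fun x => ?_⟩
  have h1 : D.π.comp (φ ^ i).toMonoidHom = D.π.comp (φ ^ j).toMonoidHom := by
    apply MonoidHom.eq_of_eqOn_dense D.gen
    rintro _ ⟨s, rfl⟩
    exact congrFun h s
  have h2 := DFunLike.congr_fun h1 ((φ ^ i)⁻¹ x)
  have h3 : (φ ^ i) ((φ ^ i)⁻¹ x) = x := by rw [← MulAut.mul_apply]; simp
  have h4 : (φ ^ j) ((φ ^ i)⁻¹ x) = (φ ^ (j - i)) x := by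
    have : j = (j - i) + i := by omega
    conv_lhs => rw [this, pow_add, MulAut.mul_apply, h3]
  have h5 : D.π ((φ ^ i) ((φ ^ i)⁻¹ x)) = D.π ((φ ^ j) ((φ ^ i)⁻¹ x)) := h2
  rw [h3, h4] at h5
  exact h5.symm

/-- The kernel of `π ∘ φ ^ i`. -/
def Kk (φ : MulAut G) (i : ℕ) : Subgroup G := (D.π.comp (φ ^ i).toMonoidHom).ker

theorem mem_Kk {φ : MulAut G} {i : ℕ} {x : G} : x ∈ D.Kk φ i ↔ D.π ((φ ^ i) x) = 1 := Iff.rfl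

instance (φ : MulAut G) (i : ℕ) : (D.Kk φ i).Normal :=
  inferInstanceAs ((D.π.comp (φ ^ i).toMonoidHom).ker).Normal

theorem exists_not_mem (φ : MulAut G) (i : ℕ) (h : ¬ ∀ x, D.π ((φ ^ i) x) = 1 ↔ D.π x = 1) :
    ∃ x, D.π ((φ ^ i) x) = 1 ∧ D.π x ≠ 1 := by
  by_contra hcon
  push Not at hcon
  apply h
  intro x
  refine ⟨hcon x, fun hx => ?_⟩
  obtain ⟨M, hM, hper⟩ := D.exists_period φ
  have h1 : ∀ m y, D.π (((φ ^ i) ^ m) y) = 1 → D.π y = 1 := by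
    intro m
    induction m with
    | zero => intro y hy; simpa using hy
    | succ m ih =>
      intro y hy
      rw [pow_succ, MulAut.mul_apply] at hy
      exact hcon _ (ih _ hy)
  have h2 : ∀ m y, D.π (((φ ^ M) ^ m) y) = D.π y := by
    intro m
    induction m with
    | zero => intro y; simp
    | succ m ih =>
      intro y
      rw [pow_succ, MulAut.mul_apply, ih, hper]
  apply h1 (M - 1)
  rw [← MulAut.mul_apply, ← pow_succ, Nat.sub_add_cancel hM, ← pow_mul, mul_comm, pow_mul, h2, hx]

theorem alt_le_Kk (φ : MulAut G) (i : ℕ) (h : ¬ ∀ x, D.π ((φ ^ i) x) = 1 ↔ D.π x = 1) :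
    alternatingGroup (Fin n) ≤ (D.Kk φ i).map D.π := by
  obtain ⟨x, hx, hx1⟩ := D.exists_not_mem φ i h
  haveI : ((D.Kk φ i).map D.π).Normal := Subgroup.Normal.map inferInstance _ D.π_surj
  apply alternatingGroup_le_of_normal (by simp; have := D.hn; omega)
  rw [Subgroup.nontrivial_iff_exists_ne_one]
  exact ⟨D.π x, ⟨x, hx, rfl⟩, hx1⟩

theorem alt_le_inf (φ : MulAut G) (k : ℕ)
    (h : ∀ i, 0 < i → i < k → ¬ ∀ x, D.π ((φ ^ i) x) = 1 ↔ D.π x = 1) :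
    ∃ E : Subgroup G, E.Normal ∧ alternatingGroup (Fin n) ≤ E.map D.π ∧
      ∀ x ∈ E, ∀ i, 0 < i → i < k → D.π ((φ ^ i) x) = 1 := by
  induction k with
  | zero =>
    refine ⟨⊤, inferInstance, ?_, fun x _ i _ h => by omega⟩
    rw [← MonoidHom.range_eq_map, MonoidHom.range_eq_top.mpr D.π_surj]
    exact le_top
  | succ k ih =>
    obtain ⟨E, hE, hA, hEk⟩ := ih (fun i h0 hi => h i h0 (by omega))
    rcases Nat.eq_zero_or_pos k with rfl | hk
    · exact ⟨E, hE, hA, fun x _ i h0 h1 => by omega⟩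
    · refine ⟨E ⊓ D.Kk φ k, inferInstance, ?_, ?_⟩
      · have h1 := D.alt_le_Kk φ k (h k hk (by omega))
        calc alternatingGroup (Fin n) = ⁅alternatingGroup (Fin n), alternatingGroup (Fin n)⁆ :=
              (commutator_alternatingGroup_eq_self (by simp; have := D.hn; omega)).symm
          _ ≤ ⁅E.map D.π, (D.Kk φ k).map D.π⁆ := Subgroup.commutator_mono hA h1
          _ = (⁅E, D.Kk φ k⁆).map D.π := (Subgroup.map_commutator _ _ _).symm
          _ ≤ _ := Subgroup.map_mono (Subgroup.commutator_le_inf _ _)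
      · intro x hx i h0 hi
        by_cases hik : i = k
        · subst hik; exact hx.2
        · exact hEk x hx.1 i h0 (by omega)

/-- Property `R_∞` for any group with the data. -/
theorem reidemeister {n : ℕ} {G : Type*} [Group G] (D : DnR.Data n G) (φ : G ≃* G) : ReidemeisterInfinite φ := by
  classical
  have hn := D.hn
  let φm : MulAut G := φ
  have hex : ∃ k, 0 < k ∧ ∀ x, D.π ((φm ^ k) x) = 1 ↔ D.π x = 1 := by
    obtain ⟨M, hM, h⟩ := D.exists_period φm
    exact ⟨M, hM, fun x => by rw [h]⟩
  obtain ⟨hk0, hk⟩ := Nat.find_spec hex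
  have hkmin : ∀ i, 0 < i → i < Nat.find hex → ¬ ∀ x, D.π ((φm ^ i) x) = 1 ↔ D.π x = 1 :=
    fun i h0 hi hh => Nat.find_min hex hi ⟨h0, hh⟩
  generalize Nat.find hex = k at *
  obtain ⟨E, hE, hA, hEk⟩ := D.alt_le_inf φm k hkmin
  let z : Fin n := ⟨0, by omega⟩
  let o : Fin n := ⟨1, by omega⟩
  let w : Fin n := ⟨2, by omega⟩
  let u : Fin n := ⟨3, by omega⟩
  have hzo : z ≠ o := by simp [z, o]
  have hzw : z ≠ w := by simp [z, w]
  have hzu : z ≠ u := by simp [z, u]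
  have how : o ≠ w := by simp [o, w]
  have hou : o ≠ u := by simp [o, u]
  have hwu : w ≠ u := by simp [w, u]
  clear_value z o w u
  obtain ⟨a, ha, haL⟩ := D.exists_even hzo hzw how hzu hou hwu (ψ := φm ^ k) hk
  obtain ⟨d, hdE, hda⟩ := hA ha
  have hvE : swap z o * swap w u ∈ alternatingGroup (Fin n) := by
    rw [mem_alternatingGroup, map_mul, sign_swap hzo, sign_swap hwu]; rfl
  obtain ⟨e, heE, hev⟩ := hA hvE
  let φ' : MulAut G := MulAut.conj d * φm
  have hφ' : ∀ x, φ' x = d * φ x * d⁻¹ := fun x => rfl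
  have hpow : ∀ j, ∃ c, (∀ x, (φ' ^ j) x = c * (φm ^ j) x * c⁻¹) ∧ (j = 0 → c = 1) ∧
      (0 < j → j ≤ k → D.π c = a) := by
    intro j
    induction j with
    | zero => exact ⟨1, by simp, by simp, by omega⟩
    | succ j ih =>
      obtain ⟨c, hc, hc1, hca⟩ := ih
      refine ⟨c * (φm ^ j) d, fun x => ?_, by simp, fun _ hj => ?_⟩
      · rw [pow_succ, MulAut.mul_apply, hφ', hc, pow_succ, MulAut.mul_apply]
        simp only [map_mul, map_inv, mul_inv_rev, mul_assoc]
        rfl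
      · rcases Nat.eq_zero_or_pos j with h0 | h0
        · rw [hc1 h0, h0]; simpa using hda
        · rw [map_mul, hEk d hdE j h0 (by omega), mul_one]
          exact hca h0 (by omega)
  have hker : ∀ j x, D.π ((φ' ^ j) x) = 1 ↔ D.π ((φm ^ j) x) = 1 := by
    intro j x
    obtain ⟨c, hc, _, _⟩ := hpow j
    rw [hc]; simp only [map_mul, map_inv]; rw [conj_eq_one_iff]
  have hLk : ∀ x, D.π x = 1 → D.L1 z o ((φ' ^ k) x) = D.L1 z o x := by
    intro x hx
    obtain ⟨c, hc, _, hca⟩ := hpow k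
    rw [hc]; exact haL c (hca hk0 le_rfl) x hx
  let Φ : G →* (Fin k → Perm (Fin n)) := Pi.monoidHom (fun i => D.π.comp (φm ^ i.1).toMonoidHom)
  have hN : ∀ x, x ∈ Φ.ker ↔ ∀ i < k, D.π ((φm ^ i) x) = 1 := by
    intro x
    rw [MonoidHom.mem_ker, funext_iff]
    exact ⟨fun h i hi => h ⟨i, hi⟩, fun h i => h i.1 i.2⟩
  have hfin : Finite (G ⧸ Φ.ker) := Finite.of_injective _ (QuotientGroup.kerLift_injective Φ)
  have hinvN : ∀ x ∈ Φ.ker, φ x ∈ Φ.ker := by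
    intro x hx
    rw [hN] at hx ⊢
    intro i hi
    have h1 : (φm ^ i) (φ x) = (φm ^ (i + 1)) x := by rw [pow_succ, MulAut.mul_apply]
    rw [h1]
    by_cases hik : i + 1 = k
    · rw [hik, hk]; simpa using hx 0 hk0
    · exact hx _ (by omega)
  have hK : ∀ x ∈ Φ.ker, ∀ i < k, D.π ((φ' ^ i) x) = 1 := by
    intro x hx i hi
    rw [hker]; exact (hN x).mp hx i hi
  have hK0 : ∀ x ∈ Φ.ker, D.π x = 1 := fun x hx => by simpa using hK x hx 0 hk0
  let Λ : G → ℚ := fun x => ∑ i ∈ Finset.range k, D.L1 z o ((φ' ^ i) x)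
  have hadd : ∀ x ∈ Φ.ker, ∀ y ∈ Φ.ker, Λ (x * y) = Λ x + Λ y := by
    intro x hx y hy
    simp only [Λ]
    rw [← Finset.sum_add_distrib]
    apply Finset.sum_congr rfl
    intro i hi
    rw [Finset.mem_range] at hi
    rw [map_mul, D.L1_add z o _ _ (hK x hx i hi) (hK y hy i hi)]
  have hinv : ∀ x ∈ Φ.ker, Λ (d * φ x * d⁻¹) = Λ x := by
    intro x hx
    rw [← hφ']
    simp only [Λ]
    have h1 : ∀ i, D.L1 z o ((φ' ^ i) (φ' x)) = D.L1 z o ((φ' ^ (i + 1)) x) := by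
      intro i; rw [pow_succ φ' i]; rfl
    simp only [h1]
    have h2 := Finset.sum_range_succ (fun i => D.L1 z o ((φ' ^ i) x)) k
    have h3 := Finset.sum_range_succ' (fun i => D.L1 z o ((φ' ^ i) x)) k
    rw [hLk x (hK0 x hx)] at h2
    simp only [pow_zero, MulAut.one_apply] at h3
    linarith
  obtain ⟨x, hxN, hx0⟩ : ∃ x ∈ Φ.ker, D.L1 z o x ≠ 0 := by
    let p : DnR.Swp n := ⟨swap z w, z, w, hzw, rfl⟩
    have hp1 : D.π (D.ρ p * D.ρ p) = 1 := D.π_isT_sq (D.ρ_isT p)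
    obtain ⟨m, hm, _, hmem⟩ := Subgroup.exists_pow_mem_of_index_ne_zero
      (Subgroup.index_ne_zero_of_finite (H := Φ.ker)) (D.ρ p * D.ρ p)
    refine ⟨_, hmem, ?_⟩
    rw [(D.L1_add z o).pow hp1, L1_ρ]
    have : DnR.f1 z o p = 1 := by
      simp only [DnR.f1, p, swap_apply_left, swap_apply_of_ne_of_ne hzo.symm how]
      simp [hzw.symm]
    rw [this]
    have : (m : ℚ) ≠ 0 := by exact_mod_cast hm.ne'
    simpa using this
  by_cases hΛ : Λ x = 0
  · have hexN : e * x * e⁻¹ ∈ Φ.ker := MonoidHom.normal_ker Φ |>.conj_mem x hxN e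
    refine DnR.twisted_infinite φ d Φ.ker hinvN Λ hadd hinv _ hexN ?_
    obtain ⟨k', rfl⟩ : ∃ k', k = k' + 1 := ⟨k - 1, by omega⟩
    have h1 : Λ (e * x * e⁻¹) = Λ x - 2 * D.L1 z o x := by
      simp only [Λ]
      rw [Finset.sum_range_succ', Finset.sum_range_succ']
      have h2 : ∀ i ∈ Finset.range k', D.L1 z o ((φ' ^ (i + 1)) (e * x * e⁻¹)) =
          D.L1 z o ((φ' ^ (i + 1)) x) := by
        intro i hi
        rw [Finset.mem_range] at hi
        have h3 : D.π ((φ' ^ (i + 1)) e) = 1 := by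
          rw [hker]; exact hEk e heE (i + 1) (by omega) (by omega)
        rw [map_mul, map_mul, map_inv, D.L1_conj _ _ _ (hK x hxN (i + 1) (by omega)), h3]
        simp
      rw [Finset.sum_congr rfl h2]
      simp only [pow_zero, MulAut.one_apply]
      rw [D.L1_conj _ _ _ (hK0 x hxN), hev]
      simp only [mul_inv_rev, swap_inv, Perm.mul_apply, swap_apply_left, swap_apply_right]
      rw [swap_apply_of_ne_of_ne hzw hzu, swap_apply_of_ne_of_ne how hou, L1_symm]
      ring
    rw [h1, hΛ]
    simpa using hx0
  · exact DnR.twisted_infinite φ d Φ.ker hinvN Λ hadd hinv x hxN hΛ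

end DnR.Data

/-! ### The data for the central quotient of the Artin group -/

/-- The semidirect product of functions on transpositions by the symmetric group. -/
@[ext] structure DnR.Wr (n : ℕ) where
  v : DnR.Swp n → ℚ
  σ : Perm (Fin n)

namespace DnR.Wr

variable {n : ℕ}

instance : Mul (DnR.Wr n) := ⟨fun a b => ⟨fun p => a.v p + b.v ((DnR.cj a.σ)⁻¹ p), a.σ * b.σ⟩⟩
instance : One (DnR.Wr n) := ⟨⟨fun _ => 0, 1⟩⟩
instance : Inv (DnR.Wr n) := ⟨fun a => ⟨fun p => - a.v (DnR.cj a.σ p), a.σ⁻¹⟩⟩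

theorem mul_v (a b : DnR.Wr n) (p : DnR.Swp n) :
    (a * b).v p = a.v p + b.v ((DnR.cj a.σ)⁻¹ p) := rfl
theorem mul_σ (a b : DnR.Wr n) : (a * b).σ = a.σ * b.σ := rfl
theorem one_v (p : DnR.Swp n) : (1 : DnR.Wr n).v p = 0 := rfl
theorem one_σ : (1 : DnR.Wr n).σ = 1 := rfl
theorem inv_v (a : DnR.Wr n) (p : DnR.Swp n) : (a⁻¹).v p = - a.v (DnR.cj a.σ p) := rfl
theorem inv_σ (a : DnR.Wr n) : (a⁻¹).σ = a.σ⁻¹ := rfl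

instance : Group (DnR.Wr n) := Group.ofLeftAxioms
  (by
    intro a b c
    ext1
    · ext p
      simp only [mul_v, mul_σ, map_mul, mul_inv_rev, Perm.mul_apply, add_assoc]
    · simp only [mul_σ, mul_assoc])
  (by
    intro a
    ext1
    · ext p
      simp [mul_v, one_v, one_σ]
    · simp [mul_σ, one_σ])
  (by
    intro a
    ext1
    · ext p
      simp [mul_v, inv_v, inv_σ, one_v]
    · simp [mul_σ, inv_σ, one_σ])

/-- The image of a generator. -/
noncomputable def g (s : Perm (Fin n)) : DnR.Wr n :=
  ⟨fun p => (if p.1 = s then 1 else 0) - 1 / Fintype.card (DnR.Swp n), s⟩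

theorem cj_inv_coe (σ : Perm (Fin n)) (p : DnR.Swp n) :
    ((DnR.cj σ)⁻¹ p).1 = σ⁻¹ * p.1 * σ := by
  rw [← map_inv, DnR.cj_coe, inv_inv]

theorem conj_iff (σ p s : Perm (Fin n)) : σ⁻¹ * p * σ = s ↔ p = σ * s * σ⁻¹ := by
  constructor
  · rintro rfl; simp [mul_assoc]
  · rintro rfl; simp [mul_assoc]

theorem g_comm {s r : Perm (Fin n)} (h : s * r = r * s) : g s * g r = g r * g s := by
  have h1 : s * r * s⁻¹ = r := by rw [h]; simp
  have h2 : r * s * r⁻¹ = s := by rw [← h]; simp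
  ext1
  · ext p
    simp only [mul_v, g, cj_inv_coe, conj_iff, h1, h2]; ring
  · exact h

theorem g_braid {s r : Perm (Fin n)} (hs : s * s = 1) (hr : r * r = 1)
    (h : s * r * s = r * s * r) :
    g s * g r * g s = g r * g s * g r := by
  have h1 : s * r * s * (s * r)⁻¹ = r := by rw [h]; simp [mul_assoc]
  have h2 : r * s * r * (r * s)⁻¹ = s := by rw [← h]; simp [mul_assoc]
  ext1
  · ext p
    simp only [mul_v, mul_σ, g, cj_inv_coe, conj_iff, h1, h2]
    have h3 : s * r * s⁻¹ = r * s * r⁻¹ := by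
      rw [inv_eq_of_mul_eq_one_left hs, inv_eq_of_mul_eq_one_left hr, h]
    rw [h3]; ring
  · exact h

end DnR.Wr

theorem DnR.swap_braid {n : ℕ} {a b c : Fin n} (hab : a ≠ b) (hac : a ≠ c) (hbc : b ≠ c) :
    swap a b * swap b c * swap a b = swap b c * swap a b * swap b c := by
  have h1 := swap_apply_apply (swap a b) b c
  have h2 := swap_apply_apply (swap b c) a b
  rw [swap_inv, swap_apply_right, swap_apply_of_ne_of_ne hac.symm hbc.symm] at h1
  rw [swap_inv, swap_apply_left, swap_apply_of_ne_of_ne hab hac] at h2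
  rw [← h1, ← h2]

theorem DnR.swap_comm_of {n : ℕ} {a b c d : Fin n} (hac : a ≠ c) (had : a ≠ d) (hbc : b ≠ c)
    (hbd : b ≠ d) : swap a b * swap c d = swap c d * swap a b := by
  have h1 := swap_apply_apply (swap a b) c d
  rw [swap_apply_of_ne_of_ne hac.symm hbc.symm, swap_apply_of_ne_of_ne had.symm hbd.symm,
    eq_mul_inv_iff_mul_eq] at h1
  exact h1.symm

theorem DnR.sw_succ {n : ℕ} (hn : 6 ≤ n) (i j : ℕ) (h : min j (n - 2) = min i (n - 2) + 1) :
    DnR.sw hn i * DnR.sw hn j * DnR.sw hn i = DnR.sw hn j * DnR.sw hn i * DnR.sw hn j := by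
  unfold DnR.sw
  simp only [h]
  apply DnR.swap_braid <;> simp only [ne_eq, Fin.mk.injEq] <;> omega

theorem DnR.sw_braid {n : ℕ} (hn : 6 ≤ n) (i j : Fin n) (h : dnBraid n i j) :
    DnR.sw hn i * DnR.sw hn j * DnR.sw hn i = DnR.sw hn j * DnR.sw hn i * DnR.sw hn j := by
  have hi := i.2
  have hj := j.2
  have : min (j : ℕ) (n - 2) = min (i : ℕ) (n - 2) + 1 ∨
      min (i : ℕ) (n - 2) = min (j : ℕ) (n - 2) + 1 := by
    unfold dnBraid at h; omega
  rcases this with h | h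
  · exact DnR.sw_succ hn i j h
  · exact (DnR.sw_succ hn j i h).symm

theorem DnR.sw_comm {n : ℕ} (hn : 6 ≤ n) (i j : Fin n) (h : ¬ dnBraid n i j) :
    DnR.sw hn i * DnR.sw hn j = DnR.sw hn j * DnR.sw hn i := by
  have hi := i.2
  have hj := j.2
  have : min (i : ℕ) (n - 2) = min (j : ℕ) (n - 2) ∨
      min (i : ℕ) (n - 2) + 2 ≤ min (j : ℕ) (n - 2) ∨
      min (j : ℕ) (n - 2) + 2 ≤ min (i : ℕ) (n - 2) := by
    unfold dnBraid at h; omega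
  rcases this with h | h
  · unfold DnR.sw; simp only [h]
  · unfold DnR.sw
    apply DnR.swap_comm_of <;> simp only [ne_eq, Fin.mk.injEq] <;> omega

/-- The map of the Artin group to the semidirect product. -/
noncomputable def DnR.θ {n : ℕ} (hn : 6 ≤ n) : ArtinD n →* DnR.Wr n :=
  PresentedGroup.toGroup (rels := dnRels n) (f := fun i : Fin n => DnR.Wr.g (DnR.sw hn i)) (by
    rintro r ⟨i, j, hij, ⟨h, rfl⟩ | ⟨h, rfl⟩⟩
    · simp only [map_mul, map_inv, FreeGroup.lift_apply_of]
      rw [mul_inv_eq_one]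
      exact DnR.Wr.g_braid (by simp [DnR.sw]) (by simp [DnR.sw]) (DnR.sw_braid hn i j h)
    · simp only [map_mul, map_inv, FreeGroup.lift_apply_of]
      rw [mul_inv_eq_one]
      exact DnR.Wr.g_comm (DnR.sw_comm hn i j h))

theorem DnR.θ_of {n : ℕ} (hn : 6 ≤ n) (i : Fin n) :
    DnR.θ hn (PresentedGroup.of i) = DnR.Wr.g (DnR.sw hn i) := PresentedGroup.toGroup.of _

theorem DnR.θ_sum {n : ℕ} (hn : 6 ≤ n) (x : ArtinD n) : ∑ p, (DnR.θ hn x).v p = 0 := by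
  have hx : x ∈ Subgroup.closure (Set.range (PresentedGroup.of (rels := dnRels n))) := by
    rw [PresentedGroup.closure_range_of]; trivial
  induction hx using Subgroup.closure_induction with
  | mem x hx =>
    obtain ⟨i, rfl⟩ := hx
    rw [DnR.θ_of]
    have hne : Nonempty (DnR.Swp n) := ⟨⟨_, DnR.sw_isSwap hn i⟩⟩
    have hc : (Fintype.card (DnR.Swp n) : ℚ) ≠ 0 := by exact_mod_cast Fintype.card_ne_zero
    simp only [DnR.Wr.g, Finset.sum_sub_distrib]
    rw [Finset.sum_eq_single ⟨DnR.sw hn i, DnR.sw_isSwap hn i⟩]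
    · simp [hc]
    · intro p _ hp
      rw [if_neg]
      intro h; exact hp (Subtype.ext h)
    · simp
  | one => simp [DnR.Wr.one_v]
  | mul x y _ _ hx hy =>
    simp only [map_mul, DnR.Wr.mul_v, Finset.sum_add_distrib]
    rw [Equiv.sum_comp (DnR.cj (DnR.θ hn x).σ)⁻¹, hx, hy, add_zero]
  | inv x _ hx =>
    simp only [map_inv, DnR.Wr.inv_v, Finset.sum_neg_distrib]
    rw [Equiv.sum_comp (DnR.cj (DnR.θ hn x).σ), hx, neg_zero]

/-- The second coordinate. -/
def DnR.Wr.σh {n : ℕ} : DnR.Wr n →* Perm (Fin n) where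
  toFun a := a.σ
  map_one' := rfl
  map_mul' _ _ := rfl

theorem DnR.θ_surj {n : ℕ} (hn : 6 ≤ n) (τ : Perm (Fin n)) : ∃ x, (DnR.θ hn x).σ = τ := by
  suffices h : Function.Surjective (DnR.Wr.σh.comp (DnR.θ hn)) from h τ
  rw [← MonoidHom.range_eq_top, eq_top_iff]
  obtain ⟨m, rfl⟩ : ∃ m, n = m + 1 := ⟨n - 1, by omega⟩
  rw [← Subgroup.closure_eq_top_of_mclosure_eq_top (mclosure_swap_castSucc_succ m),
    Subgroup.closure_le]
  rintro _ ⟨i, rfl⟩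
  refine ⟨PresentedGroup.of i.castSucc, ?_⟩
  rw [MonoidHom.comp_apply, DnR.θ_of]
  show DnR.sw hn _ = _
  rw [DnR.sw_lt _ _ (by simp)]
  rfl

theorem DnR.θ_center {n : ℕ} (hn : 6 ≤ n) (x : ArtinD n)
    (hx : x ∈ Subgroup.center (ArtinD n)) : DnR.θ hn x = 1 := by
  have hc : ∀ y, DnR.θ hn y * DnR.θ hn x = DnR.θ hn x * DnR.θ hn y := by
    intro y
    rw [← map_mul, ← map_mul, Subgroup.mem_center_iff.mp hx y]
  have hσ : (DnR.θ hn x).σ = 1 := by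
    have h1 : ∀ τ, τ * (DnR.θ hn x).σ = (DnR.θ hn x).σ * τ := by
      intro τ
      obtain ⟨y, rfl⟩ := DnR.θ_surj hn τ
      exact congrArg DnR.Wr.σ (hc y)
    generalize (DnR.θ hn x).σ = s at h1
    ext1 a
    by_contra ha
    rw [Perm.one_apply] at ha
    obtain ⟨y, hy⟩ : ∃ y, y ∉ ({a, s a} : Finset (Fin n)) := by
      by_contra hcon
      push Not at hcon
      have h2 := Finset.card_le_card (fun y (_ : y ∈ Finset.univ) => hcon y)
      have h3 := Finset.card_le_two (a := a) (b := s a)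
      simp only [Finset.card_univ, Fintype.card_fin] at h2
      omega
    simp only [Finset.mem_insert, Finset.mem_singleton, not_or] at hy
    have h2 := congrArg (fun q : Perm (Fin n) => q a) (h1 (swap (s a) y))
    simp only [Perm.mul_apply, swap_apply_left] at h2
    rw [swap_apply_of_ne_of_ne (Ne.symm ha) (Ne.symm hy.1)] at h2
    exact hy.2 h2
  have hv : ∀ τ p, (DnR.θ hn x).v (DnR.cj τ p) = (DnR.θ hn x).v p := by
    intro τ p
    obtain ⟨y, rfl⟩ := DnR.θ_surj hn τ
    have h1 := congrArg (fun a : DnR.Wr n => a.v (DnR.cj (DnR.θ hn y).σ p)) (hc y)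
    simp only [DnR.Wr.mul_v, hσ, map_one, inv_one, Perm.one_apply] at h1
    rw [← Perm.mul_apply, inv_mul_cancel, Perm.one_apply] at h1
    linarith
  ext1
  · ext p
    have h1 : ∀ q, (DnR.θ hn x).v q = (DnR.θ hn x).v p :=
      fun q => DnR.Data.const_of_inv _ hv q p
    have h2 := DnR.θ_sum hn x
    simp only [h1, Finset.sum_const, Finset.card_univ, nsmul_eq_mul] at h2
    have hne : Nonempty (DnR.Swp n) := ⟨p⟩
    rcases mul_eq_zero.mp h2 with h | h
    · exact absurd h (by exact_mod_cast Fintype.card_ne_zero)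
    · exact h
  · exact hσ

/-- The induced map on the central quotient. -/
noncomputable def DnR.θq {n : ℕ} (hn : 6 ≤ n) :
    (ArtinD n ⧸ Subgroup.center (ArtinD n)) →* DnR.Wr n :=
  QuotientGroup.lift _ (DnR.θ hn) (fun x hx => MonoidHom.mem_ker.mpr (DnR.θ_center hn x hx))

theorem DnR.θq_mk {n : ℕ} (hn : 6 ≤ n) (x : ArtinD n) :
    DnR.θq hn (QuotientGroup.mk x) = DnR.θ hn x := rfl

theorem DnR.braid_rel {n : ℕ} (i j : Fin n) (hij : i ≠ j) (h : dnBraid n i j) :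
    (PresentedGroup.of i * PresentedGroup.of j * PresentedGroup.of i : ArtinD n) =
      PresentedGroup.of j * PresentedGroup.of i * PresentedGroup.of j := by
  rw [← mul_inv_eq_one]
  exact PresentedGroup.one_of_mem (rels := dnRels n) ⟨i, j, hij, Or.inl ⟨h, rfl⟩⟩

theorem DnR.comm_rel {n : ℕ} (i j : Fin n) (hij : i ≠ j) (h : ¬ dnBraid n i j) :
    (PresentedGroup.of i * PresentedGroup.of j : ArtinD n) =
      PresentedGroup.of j * PresentedGroup.of i := by
  rw [← mul_inv_eq_one]
  exact PresentedGroup.one_of_mem (rels := dnRels n) ⟨i, j, hij, Or.inr ⟨h, rfl⟩⟩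

/-- The data for the central quotient. -/
noncomputable def DnR.data {n : ℕ} (hn : 6 ≤ n) :
    DnR.Data n (ArtinD n ⧸ Subgroup.center (ArtinD n)) where
  hn := hn
  t i := QuotientGroup.mk (PresentedGroup.of i)
  gen := by
    have h1 : Subgroup.map (QuotientGroup.mk' (Subgroup.center (ArtinD n)))
        (Subgroup.closure (Set.range (PresentedGroup.of (rels := dnRels n)))) = ⊤ := by
      rw [PresentedGroup.closure_range_of, ← MonoidHom.range_eq_map, MonoidHom.range_eq_top]
      exact QuotientGroup.mk'_surjective _
    rw [MonoidHom.map_closure, ← Set.range_comp] at h1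
    exact h1
  braid i j hij h := by
    simp only [← QuotientGroup.mk_mul]; rw [DnR.braid_rel i j hij h]
  comm i j hij h := by
    simp only [← QuotientGroup.mk_mul]; rw [DnR.comm_rel i j hij h]
  π := DnR.Wr.σh.comp (DnR.θq hn)
  π_t i := by
    rw [MonoidHom.comp_apply, DnR.θq_mk, DnR.θ_of]; rfl
  v x := (DnR.θq hn x).v
  v_mul x y p := by rw [map_mul, DnR.Wr.mul_v]; rfl
  v_sum x := by
    obtain ⟨x, rfl⟩ := QuotientGroup.mk_surjective x
    rw [DnR.θq_mk]; exact DnR.θ_sum hn x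
  v_t i p := by rw [DnR.θq_mk, DnR.θ_of]; rfl

/-- For every `n ≥ 6`, the central quotient `A[D_n]/Z(A[D_n])` of the Artin group `A[D_n]`
has property `R_∞`. -/
theorem artinD_centralQuotient_propertyRInfinity (n : ℕ) (hn : 6 ≤ n) :
    PropertyRInfinity (ArtinD n ⧸ Subgroup.center (ArtinD n)) := by
  intro φ
  exact (DnR.data hn).reidemeister φ
end
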